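/- arXiv:1601.06636 — 2 statements merged into one kernel-verified Lean document; each statement's English description precedes it below -/
import Mathlib

section
/- Exponential stability of the target system (Lemma 1): Suppose Λʳ(x) = diag(λʳ₁(x),…,λʳₙ(x)) and Λˡ(x) = diag(λˡ₁(x),…,λˡₘ(x)) are C¹ diagonal matrix functions on [0,1] whose entries satisfy 0 < λ̲ ≤ λʳᵢ(x), λˡⱼ(x) ≤ λ̄ for all x ∈ [0,1]; Sʳ: [0,1] → ℝ^{n×n} and Sˡ: [0,1] → ℝ^{n×m} are continuous with ‖Sʳ(x)‖ ≤ M and ‖Sˡ(x)‖ ≤ M; Cʳ: 𝕋 → ℝ^{n×n} and Cˡ: 𝕋 → ℝ^{n×m} are continuous with ‖Cʳ(x,ξ)‖ ≤ M and ‖Cˡ(x,ξ)‖ ≤ M; Δ: [0,1] → ℝ^{m×m} is continuous, bounded, and strictly lower triangular (Δᵢⱼ(x) = 0 whenever j ≥ i); and Q₀ ∈ ℝ^{n×m}. Then there exist constants K ≥ 1 and c > 0, depending only on these data, such that every classical C¹ solution (ε, β): [0,∞)×[0,1] → ℝⁿ×ℝᵐ of the target system with boundary conditions ε(t,0) = Q₀β(t,0)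 and β(t,1) = 0 satisfies ‖(ε(t,·), β(t,·))‖_{L²(0,1)} ≤ K e^{−ct} ‖(ε(0,·), β(0,·))‖_{L²(0,1)} for all t ≥ 0. -/
open MeasureTheory Set Matrix Real

/-- The operator (matrix 2-) norm of a real matrix, i.e. the operator norm of the
induced linear map between Euclidean spaces. -/
noncomputable def l2OpNorm {m n : ℕ} (A : Matrix (Fin m) (Fin n) ℝ) : ℝ :=
  ‖LinearMap.toContinuousLinearMap
    (Matrix.toEuclideanLin A : EuclideanSpace ℝ (Fin n) →ₗ[ℝ] EuclideanSpace ℝ (Fin m))‖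

lemma entry_le {m n : ℕ} (A : Matrix (Fin m) (Fin n) ℝ) (i : Fin m) (j : Fin n) :
    |A i j| ≤ l2OpNorm A := by
  have h := (LinearMap.toContinuousLinearMap
    (Matrix.toEuclideanLin A : EuclideanSpace ℝ (Fin n) →ₗ[ℝ] EuclideanSpace ℝ (Fin m))).le_opNorm
      (EuclideanSpace.single j 1)
  have h2 := PiLp.norm_apply_le ((LinearMap.toContinuousLinearMap
    (Matrix.toEuclideanLin A : EuclideanSpace ℝ (Fin n) →ₗ[ℝ] EuclideanSpace ℝ (Fin m)))
      (EuclideanSpace.single j 1)) i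
  have h3 := h2.trans h
  simpa [l2OpNorm, Matrix.toEuclideanLin, Matrix.toLpLin_apply] using h3

/-- decay from a differential inequality -/
lemma decay_of_deriv_le (V V' : ℝ → ℝ) (c : ℝ) (hc : ContinuousOn V (Ici 0))
    (hd : ∀ t, 0 < t → HasDerivAt V (V' t) t) (hle : ∀ t, 0 < t → V' t ≤ -c * V t) :
    ∀ t, 0 ≤ t → V t ≤ Real.exp (-c * t) * V 0 := by
  intro t ht
  have hder : ∀ s, 0 < s → HasDerivAt (fun s => Real.exp (c * s) * V s)
      (Real.exp (c * s) * c * V s + Real.exp (c * s) * V' s) s := by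
    intro s hs
    have h1 : HasDerivAt (fun s => Real.exp (c * s)) (Real.exp (c * s) * c) s := by
      simpa using ((hasDerivAt_id s).const_mul c).exp
    exact h1.mul (hd s hs)
  have hanti : AntitoneOn (fun s => Real.exp (c * s) * V s) (Ici 0) := by
    apply antitoneOn_of_deriv_nonpos (convex_Ici 0)
    · exact ContinuousOn.mul (by fun_prop) hc
    · intro s hs
      rw [interior_Ici] at hs
      exact (hder s hs).differentiableAt.differentiableWithinAt
    · intro s hs
      rw [interior_Ici] at hs
      rw [(hder s hs).deriv]
      have := mul_le_mul_of_nonneg_left (hle s hs) (Real.exp_pos (c * s)).le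
      linarith
  have h := hanti (show (0:ℝ) ∈ Ici 0 by simp) (show t ∈ Ici 0 from ht) ht
  simp only [mul_zero, Real.exp_zero, one_mul] at h
  have h2 := mul_le_mul_of_nonneg_left h (Real.exp_pos (-c * t)).le
  rw [← mul_assoc, ← Real.exp_add] at h2
  simpa using h2

lemma param_cont (g : ℝ → ℝ → ℝ)
    (hg : ContinuousOn (fun p : ℝ × ℝ => g p.1 p.2) (Ici 0 ×ˢ Icc 0 1)) :
    ContinuousOn (fun t => ∫ x in (0:ℝ)..1, g t x) (Ici 0) := by
  have hc : Continuous (fun p : ℝ × ℝ => g (max p.1 0) (max 0 (min p.2 1))) := by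
    apply hg.comp_continuous (f := fun p : ℝ × ℝ => (max p.1 0, max 0 (min p.2 1)))
    · fun_prop
    · intro p
      refine ⟨by simp, by simp, by simp⟩
  have h2 : Continuous (fun t => ∫ x in (0:ℝ)..1, g (max t 0) (max 0 (min x 1))) :=
    intervalIntegral.continuous_parametric_intervalIntegral_of_continuous'
      (f := fun t x => g (max t 0) (max 0 (min x 1))) hc 0 1
  refine h2.continuousOn.congr ?_
  intro t ht
  apply intervalIntegral.integral_congr
  intro x hx
  rw [uIcc_of_le zero_le_one] at hx
  simp [max_eq_left (show (0:ℝ) ≤ t from ht), min_eq_left hx.2, max_eq_right hx.1]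

lemma slice_cont {E : Type*} [TopologicalSpace E] (g : ℝ → ℝ → E)
    (hg : ContinuousOn (fun p : ℝ × ℝ => g p.1 p.2) (Ici 0 ×ˢ Icc 0 1)) (t : ℝ) (ht : 0 ≤ t) :
    ContinuousOn (g t) (Icc 0 1) :=
  hg.comp (f := fun x : ℝ => (t, x)) (by fun_prop) (fun x hx => ⟨ht, hx⟩)

lemma param_deriv (g gt : ℝ → ℝ → ℝ)
    (hg : ContinuousOn (fun p : ℝ × ℝ => g p.1 p.2) (Ici 0 ×ˢ Icc 0 1))
    (hgt : ContinuousOn (fun p : ℝ × ℝ => gt p.1 p.2) (Ici 0 ×ˢ Icc 0 1))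
    (hd : ∀ t ∈ Ici (0:ℝ), ∀ x ∈ Icc (0:ℝ) 1,
      HasDerivWithinAt (fun s => g s x) (gt t x) (Ici 0) t) (t : ℝ) (ht : 0 < t) :
    HasDerivAt (fun t => ∫ x in (0:ℝ)..1, g t x) (∫ x in (0:ℝ)..1, gt t x) t := by
  have hK : IsCompact (Icc (0:ℝ) (2*t) ×ˢ Icc (0:ℝ) 1) := isCompact_Icc.prod isCompact_Icc
  obtain ⟨C, hC⟩ := hK.exists_bound_of_continuousOn
    (hgt.mono (prod_mono Icc_subset_Ici_self subset_rfl))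
  have hint : ∀ (h : ℝ → ℝ → ℝ),
      ContinuousOn (fun p : ℝ × ℝ => h p.1 p.2) (Ici 0 ×ˢ Icc 0 1) → ∀ s, 0 ≤ s →
      IntervalIntegrable (h s) volume 0 1 := by
    intro h hh s hs
    apply ContinuousOn.intervalIntegrable
    rw [uIcc_of_le zero_le_one]
    exact slice_cont h hh s hs
  have hsub : uIoc (0:ℝ) 1 ⊆ Icc 0 1 := by
    rw [uIoc_of_le zero_le_one]; exact Ioc_subset_Icc_self
  refine (intervalIntegral.hasDerivAt_integral_of_dominated_loc_of_deriv_le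
    (F := g) (F' := gt) (s := Ioo 0 (2*t)) (bound := fun _ => C) (x₀ := t)
    (Ioo_mem_nhds ht (by linarith)) ?_ (hint g hg t ht.le) ?_ ?_ (by simp) ?_).2
  · filter_upwards [Ioi_mem_nhds ht] with s hs
    exact (hint g hg s (le_of_lt hs)).def'.aestronglyMeasurable
  · exact (hint gt hgt t ht.le).def'.aestronglyMeasurable
  · refine Filter.Eventually.of_forall fun x hx s hs => ?_
    exact hC (s, x) ⟨⟨hs.1.le, hs.2.le⟩, hsub hx⟩
  · refine Filter.Eventually.of_forall fun x hx s hs => ?_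
    exact (hd s hs.1.le x (hsub hx)).hasDerivAt (Ici_mem_nhds hs.1)

lemma mulVec_bound {k : ℕ} {ι : Type*} (A : Matrix ι (Fin k) ℝ) (N : ℝ) (i : ι)
    (hA : ∀ j, |A i j| ≤ N) (p : ℝ) (q : Fin k → ℝ) :
    2 * p * (A.mulVec q) i ≤ N * (k * p ^ 2 + ∑ j, q j ^ 2) := by
  have h : ∀ j ∈ Finset.univ, 2 * p * (A i j * q j) ≤ N * (p ^ 2 + q j ^ 2) := by
    intro j _
    have h1 := abs_le.1 (hA j)
    nlinarith [mul_nonneg (sub_nonneg.2 h1.2) (sq_nonneg (p + q j)),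
      mul_nonneg (sub_nonneg.2 h1.1) (sq_nonneg (p - q j)),
      mul_nonneg (sub_nonneg.2 h1.2) (sq_nonneg (p - q j)),
      mul_nonneg (sub_nonneg.2 h1.1) (sq_nonneg (p + q j))]
  have h2 := Finset.sum_le_sum h
  rw [← Finset.mul_sum, ← Finset.mul_sum, Finset.sum_add_distrib] at h2
  simpa [Matrix.mulVec, dotProduct] using h2

lemma mulVec_cont {k l : ℕ} (C : ℝ → Matrix (Fin l) (Fin k) ℝ) (v : ℝ → Fin k → ℝ) (s : Set ℝ)
    (hC : ContinuousOn C s) (hv : ContinuousOn v s) :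
    ContinuousOn (fun ξ => (C ξ).mulVec (v ξ)) s := by
  have : Continuous (fun p : Matrix (Fin l) (Fin k) ℝ × (Fin k → ℝ) => p.1.mulVec p.2) :=
    continuous_fst.matrix_mulVec continuous_snd
  exact this.comp_continuousOn (hC.prodMk hv)

lemma int_mulVec_bound {k l : ℕ} (C : ℝ → Matrix (Fin l) (Fin k) ℝ) (v : ℝ → Fin k → ℝ)
    (N x : ℝ) (hN : 0 ≤ N) (hx0 : 0 ≤ x) (hx1 : x ≤ 1) (hC : ContinuousOn C (Icc 0 x))
    (hv : ContinuousOn v (Icc 0 x)) (hCN : ∀ ξ ∈ Icc 0 x, ∀ i j, |C ξ i j| ≤ N) (i : Fin l) (p : ℝ) :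
    2 * p * (∫ ξ in (0:ℝ)..x, (C ξ).mulVec (v ξ)) i
      ≤ N * (k * p ^ 2 + ∫ ξ in (0:ℝ)..x, ∑ j, v ξ j ^ 2) := by
  have hc := mulVec_cont C v _ hC hv
  rw [← uIcc_of_le hx0] at hc hv
  have h1 : (∫ ξ in (0:ℝ)..x, (C ξ).mulVec (v ξ)) i = ∫ ξ in (0:ℝ)..x, (C ξ).mulVec (v ξ) i :=
    ((ContinuousLinearMap.proj (R := ℝ) (φ := fun _ : Fin l => ℝ) i).intervalIntegral_comp_comm
      hc.intervalIntegrable).symm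
  have hci : ContinuousOn (fun ξ => (C ξ).mulVec (v ξ) i) (uIcc 0 x) :=
    (continuous_apply i).comp_continuousOn hc
  have hvi : ∀ j, ContinuousOn (fun ξ => v ξ j) (uIcc 0 x) :=
    fun j => (continuous_apply j).comp_continuousOn hv
  have hs : ContinuousOn (fun ξ => ∑ j, v ξ j ^ 2) (uIcc 0 x) :=
    continuousOn_finsetSum _ fun j _ => (hvi j).pow 2
  rw [h1, ← intervalIntegral.integral_const_mul]
  have h2 : ∫ ξ in (0:ℝ)..x, 2 * p * (C ξ).mulVec (v ξ) i
      ≤ ∫ ξ in (0:ℝ)..x, N * (k * p ^ 2 + ∑ j, v ξ j ^ 2) := by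
    apply intervalIntegral.integral_mono_on hx0
    · exact (continuousOn_const.mul hci).intervalIntegrable
    · exact (continuousOn_const.mul (continuousOn_const.add hs)).intervalIntegrable
    · intro ξ hξ
      exact mulVec_bound _ _ _ (hCN ξ hξ i) _ _
  refine h2.trans ?_
  rw [intervalIntegral.integral_const_mul, intervalIntegral.integral_add (by simp)
    hs.intervalIntegrable, intervalIntegral.integral_const]
  apply mul_le_mul_of_nonneg_left _ hN
  have : (0:ℝ) ≤ k * p ^ 2 := by positivity
  simp only [sub_zero, smul_eq_mul]
  nlinarith

lemma exists_weights (m : ℕ) (q L : ℝ) (hq : 0 ≤ q) (hL : 0 ≤ L) :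
    ∃ (d : Fin m → ℝ) (D : ℝ), (∀ j, 1 ≤ d j) ∧ (∀ j, d j ≤ D) ∧ 1 ≤ D ∧
      ∀ k, q + L * ∑ j, (if k < j then d j else 0) ≤ d k := by
  set R : ℝ := 1 + q + L * m with hR
  have hLm : 0 ≤ L * m := by positivity
  have hR1 : 1 ≤ R := by linarith
  refine ⟨fun k => R ^ (m - k.1), R ^ m, fun j => one_le_pow₀ hR1,
    fun j => pow_le_pow_right₀ hR1 (by omega), one_le_pow₀ hR1, fun k => ?_⟩
  have h1 : ∑ j : Fin m, (if k < j then R ^ (m - j.1) else 0) ≤ ∑ j : Fin m, R ^ (m - k.1 - 1) := by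
    apply Finset.sum_le_sum
    intro j _
    split_ifs with h
    · exact pow_le_pow_right₀ hR1 (by have : k.1 < j.1 := h; omega)
    · positivity
  simp only [Finset.sum_const, Finset.card_univ, Fintype.card_fin, nsmul_eq_mul] at h1
  have h2 : R ^ (m - k.1) = R ^ (m - k.1 - 1) * R := by
    rw [← pow_succ]; congr 1; omega
  have h3 : 1 ≤ R ^ (m - k.1 - 1) := one_le_pow₀ hR1
  have h4 := mul_le_mul_of_nonneg_left h1 hL
  show q + L * ∑ j : Fin m, (if k < j then R ^ (m - j.1) else 0) ≤ R ^ (m - k.1)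
  rw [h2]
  nlinarith

lemma quot_bound {X Y lam lo e : ℝ} (hlo : 0 < lo) (hl : lo ≤ lam) (he : 0 ≤ e) (h : X ≤ Y)
    (hY : 0 ≤ Y) : e / lam * X ≤ e * Y / lo := by
  have hlam : 0 < lam := lt_of_lt_of_le hlo hl
  rw [div_mul_eq_mul_div]
  calc e * X / lam ≤ e * Y / lam := by gcongr
    _ ≤ e * Y / lo := by gcongr

lemma beta_bound {m : ℕ} (A : Matrix (Fin m) (Fin m) ℝ) (N : ℝ)
    (hA : ∀ i j, |A i j| ≤ N) (htri : ∀ i j : Fin m, i ≤ j → A i j = 0) (b : Fin m → ℝ)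
    (i : Fin m) (p : ℝ) :
    2 * p * (A.mulVec b) i ≤ N * (m * p ^ 2 + ∑ k, if k < i then b k ^ 2 else 0) := by
  have h := mulVec_bound A N i (hA i) p (fun k => if k < i then b k else 0)
  have h1 : (A.mulVec fun k => if k < i then b k else 0) i = (A.mulVec b) i := by
    simp only [Matrix.mulVec, dotProduct]
    refine Finset.sum_congr rfl fun k _ => ?_
    split_ifs with hk
    · rfl
    · rw [htri i k (not_lt.1 hk)]; simp
  rw [h1] at h
  refine h.trans (le_of_eq ?_)
  congr 2
  refine Finset.sum_congr rfl fun k _ => ?_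
  split_ifs <;> simp

lemma Q_bound {n m : ℕ} (Q : Matrix (Fin n) (Fin m) ℝ) (b : Fin m → ℝ) :
    ∑ i, (Q.mulVec b) i ^ 2 ≤ (∑ i, ∑ k, Q i k ^ 2) * ∑ k, b k ^ 2 := by
  rw [Finset.sum_mul]
  refine Finset.sum_le_sum fun i _ => ?_
  exact Finset.sum_mul_sq_le_sq_mul_sq Finset.univ (fun k => Q i k) b

lemma boundary_bound {n m : ℕ} (Q : Matrix (Fin n) (Fin m) ℝ) (b d : Fin m → ℝ) (L : ℝ)
    (hd : ∀ k, (∑ i, ∑ k, Q i k ^ 2) + L * ∑ j, (if k < j then d j else 0) ≤ d k) :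
    ∑ i, (Q.mulVec b) i ^ 2 + L * ∑ j, d j * (∑ k, if k < j then b k ^ 2 else 0)
      ≤ ∑ k, d k * b k ^ 2 := by
  have h1 := Q_bound Q b
  have h2 : ∑ j, d j * (∑ k, if k < j then b k ^ 2 else 0)
      = ∑ k, (∑ j, (if k < j then d j else 0)) * b k ^ 2 := by
    simp only [Finset.mul_sum, Finset.sum_mul]
    rw [Finset.sum_comm]
    refine Finset.sum_congr rfl fun k _ => Finset.sum_congr rfl fun j _ => ?_
    split_ifs <;> simp
  rw [h2]
  have h3 : ∑ k, ((∑ i, ∑ k, Q i k ^ 2) + L * ∑ j, (if k < j then d j else 0)) * b k ^ 2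
      ≤ ∑ k, d k * b k ^ 2 :=
    Finset.sum_le_sum fun k _ => mul_le_mul_of_nonneg_right (hd k) (sq_nonneg _)
  have h4 : ∑ k, ((∑ i, ∑ k, Q i k ^ 2) + L * ∑ j, (if k < j then d j else 0)) * b k ^ 2
      = (∑ i, ∑ k, Q i k ^ 2) * ∑ k, b k ^ 2
        + L * ∑ k, (∑ j, (if k < j then d j else 0)) * b k ^ 2 := by
    rw [Finset.mul_sum, Finset.mul_sum, ← Finset.sum_add_distrib]
    exact Finset.sum_congr rfl fun k _ => by ring
  linarith

lemma spatial {n m : ℕ}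
    (lr : Fin n → ℝ → ℝ) (ll : Fin m → ℝ → ℝ) (lamlo N ν : ℝ) (hlamlo : 0 < lamlo) (hN : 0 ≤ N)
    (hlrc : ∀ i, ContinuousOn (lr i) (Icc 0 1)) (hllc : ∀ j, ContinuousOn (ll j) (Icc 0 1))
    (hlrb : ∀ i, ∀ x ∈ Icc (0:ℝ) 1, lamlo ≤ lr i x)
    (hllb : ∀ j, ∀ x ∈ Icc (0:ℝ) 1, lamlo ≤ ll j x)
    (Sr : ℝ → Matrix (Fin n) (Fin n) ℝ) (Sl : ℝ → Matrix (Fin n) (Fin m) ℝ)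
    (hSrM : ∀ x ∈ Icc (0:ℝ) 1, ∀ i j, |Sr x i j| ≤ N)
    (hSlM : ∀ x ∈ Icc (0:ℝ) 1, ∀ i j, |Sl x i j| ≤ N)
    (Cr : ℝ → ℝ → Matrix (Fin n) (Fin n) ℝ) (Cl : ℝ → ℝ → Matrix (Fin n) (Fin m) ℝ)
    (hCrc : ∀ x ∈ Icc (0:ℝ) 1, ContinuousOn (Cr x) (Icc 0 x))
    (hClc : ∀ x ∈ Icc (0:ℝ) 1, ContinuousOn (Cl x) (Icc 0 x))
    (hCrM : ∀ x ∈ Icc (0:ℝ) 1, ∀ ξ ∈ Icc 0 x, ∀ i j, |Cr x ξ i j| ≤ N)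
    (hClM : ∀ x ∈ Icc (0:ℝ) 1, ∀ ξ ∈ Icc 0 x, ∀ i j, |Cl x ξ i j| ≤ N)
    (Δ : ℝ → Matrix (Fin m) (Fin m) ℝ)
    (hΔb : ∀ x ∈ Icc (0:ℝ) 1, ∀ i j, |Δ x i j| ≤ N)
    (hΔtri : ∀ x ∈ Icc (0:ℝ) 1, ∀ i j : Fin m, i ≤ j → Δ x i j = 0)
    (Q0 : Matrix (Fin n) (Fin m) ℝ)
    (hν : N / lamlo * (4 * n + 3 * m) + 1 = ν)
    (d : Fin m → ℝ) (hd1 : ∀ j, 1 ≤ d j)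
    (hd : ∀ k, (∑ i, ∑ k, Q0 i k ^ 2)
      + (N / lamlo * Real.exp ν) * ∑ j, (if k < j then d j else 0) ≤ d k)
    (u ut ux : ℝ → Fin n → ℝ) (v vt vx : ℝ → Fin m → ℝ)
    (hu : ContinuousOn u (Icc 0 1)) (hv : ContinuousOn v (Icc 0 1))
    (hut : ContinuousOn ut (Icc 0 1)) (hux : ContinuousOn ux (Icc 0 1))
    (hvt : ContinuousOn vt (Icc 0 1)) (hvx : ContinuousOn vx (Icc 0 1))
    (hdu : ∀ x ∈ Icc (0:ℝ) 1, HasDerivWithinAt u (ux x) (Icc 0 1) x)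
    (hdv : ∀ x ∈ Icc (0:ℝ) 1, HasDerivWithinAt v (vx x) (Icc 0 1) x)
    (hpu : ∀ x ∈ Icc (0:ℝ) 1, ut x + (Matrix.diagonal fun i => lr i x).mulVec (ux x)
            = (Sr x).mulVec (u x) + (Sl x).mulVec (v x)
              + (∫ ξ in (0:ℝ)..x, (Cr x ξ).mulVec (u ξ))
              + ∫ ξ in (0:ℝ)..x, (Cl x ξ).mulVec (v ξ))
    (hpv : ∀ x ∈ Icc (0:ℝ) 1, vt x - (Matrix.diagonal fun j => ll j x).mulVec (vx x)
            = (Δ x).mulVec (v 0))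
    (hb0 : u 0 = Q0.mulVec (v 0)) (hb1 : v 1 = 0) :
    ∫ x in (0:ℝ)..1, (∑ i, Real.exp (-ν * x) / lr i x * (2 * u x i * ut x i)
        + ∑ j, d j * (Real.exp (ν * x) / ll j x * (2 * v x j * vt x j)))
      ≤ - ∫ x in (0:ℝ)..1, (∑ i, Real.exp (-ν * x) * u x i ^ 2
        + ∑ j, d j * (Real.exp (ν * x) * v x j ^ 2)) := by
  have hν0 : 0 ≤ ν := by rw [← hν]; positivity
  have hd0 : ∀ j, 0 ≤ d j := fun j => zero_le_one.trans (hd1 j)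
  have hui : ∀ i, ContinuousOn (fun x => u x i) (Icc 0 1) :=
    fun i => (continuous_apply i).comp_continuousOn hu
  have hvi : ∀ i, ContinuousOn (fun x => v x i) (Icc 0 1) :=
    fun i => (continuous_apply i).comp_continuousOn hv
  have huti : ∀ i, ContinuousOn (fun x => ut x i) (Icc 0 1) :=
    fun i => (continuous_apply i).comp_continuousOn hut
  have hvti : ∀ i, ContinuousOn (fun x => vt x i) (Icc 0 1) :=
    fun i => (continuous_apply i).comp_continuousOn hvt
  have huxi : ∀ i, ContinuousOn (fun x => ux x i) (Icc 0 1) :=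
    fun i => (continuous_apply i).comp_continuousOn hux
  have hvxi : ∀ i, ContinuousOn (fun x => vx x i) (Icc 0 1) :=
    fun i => (continuous_apply i).comp_continuousOn hvx
  have hlr0 : ∀ i, ∀ x ∈ Icc (0:ℝ) 1, lr i x ≠ 0 :=
    fun i x hx => (lt_of_lt_of_le hlamlo (hlrb i x hx)).ne'
  have hll0 : ∀ i, ∀ x ∈ Icc (0:ℝ) 1, ll i x ≠ 0 :=
    fun i x hx => (lt_of_lt_of_le hlamlo (hllb i x hx)).ne'
  have hII : ∀ h : ℝ → ℝ, ContinuousOn h (Icc 0 1) → ∀ a ∈ Icc (0:ℝ) 1, ∀ b ∈ Icc (0:ℝ) 1,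
      IntervalIntegrable h volume a b := by
    intro h hh a ha b hb
    exact (hh.mono (uIcc_subset_Icc ha hb)).intervalIntegrable
  have h0 : (0:ℝ) ∈ Icc (0:ℝ) 1 := by simp
  have h1 : (1:ℝ) ∈ Icc (0:ℝ) 1 := by simp
  set w : ℝ → ℝ := fun x => ∑ i, Real.exp (-ν * x) * u x i ^ 2
        + ∑ j, d j * (Real.exp (ν * x) * v x j ^ 2) with hw
  set P : ℝ → ℝ := fun x => ∑ i, Real.exp (-ν * x) * u x i ^ 2
        - ∑ j, d j * (Real.exp (ν * x) * v x j ^ 2) with hP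
  set P' : ℝ → ℝ := fun x =>
      ∑ i, (Real.exp (-ν * x) * -ν * u x i ^ 2 + Real.exp (-ν * x) * (2 * u x i * ux x i))
        - ∑ j, d j * (Real.exp (ν * x) * ν * v x j ^ 2 + Real.exp (ν * x) * (2 * v x j * vx x j))
      with hP'
  set g : ℝ → ℝ := fun x => ∑ i, Real.exp (-ν * x) / lr i x * (2 * u x i * ut x i)
        + ∑ j, d j * (Real.exp (ν * x) / ll j x * (2 * v x j * vt x j)) with hg
  have hexpc : ∀ a : ℝ, ContinuousOn (fun x => Real.exp (a * x)) (Icc 0 1) := by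
    intro a; fun_prop
  have hwc : ContinuousOn w (Icc 0 1) :=
    (continuousOn_finsetSum _ fun i _ => (hexpc _).mul ((hui i).pow 2)).add
      (continuousOn_finsetSum _ fun j _ => continuousOn_const.mul ((hexpc _).mul ((hvi j).pow 2)))
  have hP'c : ContinuousOn P' (Icc 0 1) :=
    (continuousOn_finsetSum _ fun i _ => (((hexpc _).mul continuousOn_const).mul
      ((hui i).pow 2)).add ((hexpc _).mul ((continuousOn_const.mul (hui i)).mul (huxi i)))).sub
      (continuousOn_finsetSum _ fun j _ => continuousOn_const.mul
        ((((hexpc _).mul continuousOn_const).mul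
      ((hvi j).pow 2)).add ((hexpc _).mul ((continuousOn_const.mul (hvi j)).mul (hvxi j)))))
  have hgc : ContinuousOn g (Icc 0 1) :=
    (continuousOn_finsetSum _ fun i _ => ((hexpc _).div (hlrc i) (hlr0 i)).mul
      ((continuousOn_const.mul (hui i)).mul (huti i))).add
      (continuousOn_finsetSum _ fun j _ => continuousOn_const.mul
        (((hexpc _).div (hllc j) (hll0 j)).mul ((continuousOn_const.mul (hvi j)).mul (hvti j))))
  have hPd : ∀ x ∈ Icc (0:ℝ) 1, HasDerivWithinAt P (P' x) (Icc 0 1) x := by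
    intro x hx
    have he : ∀ a : ℝ, HasDerivWithinAt (fun x => Real.exp (a * x)) (Real.exp (a * x) * a)
        (Icc 0 1) x := by
      intro a
      have : HasDerivAt (fun x => Real.exp (a * x)) (Real.exp (a * x) * a) x := by
        simpa using ((hasDerivAt_id x).const_mul a).exp
      exact this.hasDerivWithinAt
    have hdui := hasDerivWithinAt_pi.1 (hdu x hx)
    have hdvi := hasDerivWithinAt_pi.1 (hdv x hx)
    refine HasDerivWithinAt.sub (HasDerivWithinAt.fun_sum fun i _ => ?_)
      (HasDerivWithinAt.fun_sum fun j _ => HasDerivWithinAt.const_mul _ ?_)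
    · refine (he _).mul ?_
      simpa using (hdui i).fun_pow 2
    · refine (he _).mul ?_
      simpa using (hdvi j).fun_pow 2
  have hFTC : ∫ x in (0:ℝ)..1, P' x = P 1 - P 0 := by
    apply intervalIntegral.integral_eq_sub_of_hasDerivAt_of_le zero_le_one
    · exact fun x hx => (hPd x hx).continuousWithinAt
    · exact fun x hx => (hPd x (Ioo_subset_Icc_self hx)).hasDerivAt (Icc_mem_nhds hx.1 hx.2)
    · exact hII _ hP'c _ h0 _ h1
  set W : ℝ := ∫ x in (0:ℝ)..1, w x with hW
  have hw0 : ∀ x, 0 ≤ w x := by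
    intro x
    refine add_nonneg (Finset.sum_nonneg fun i _ => by positivity)
      (Finset.sum_nonneg fun j _ => mul_nonneg (hd0 j) (by positivity))
  -- the density comparison
  set as : ℝ → ℝ := fun x => (∑ i, u x i ^ 2) + ∑ j, v x j ^ 2 with has
  have hasc : ContinuousOn as (Icc 0 1) :=
    (continuousOn_finsetSum _ fun i _ => (hui i).pow 2).add
      (continuousOn_finsetSum _ fun i _ => (hvi i).pow 2)
  have has0 : ∀ x, 0 ≤ as x := fun x => by positivity
  have hasw : ∀ x, 0 ≤ x → Real.exp (-ν * x) * as x ≤ w x := by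
    intro x hx
    simp only [has, hw, mul_add, Finset.mul_sum]
    refine add_le_add le_rfl (Finset.sum_le_sum fun j _ => ?_)
    have hE : Real.exp (-ν * x) ≤ Real.exp (ν * x) := Real.exp_le_exp.2 (by nlinarith)
    calc Real.exp (-ν * x) * v x j ^ 2 ≤ Real.exp (ν * x) * v x j ^ 2 := by gcongr
      _ = 1 * (Real.exp (ν * x) * v x j ^ 2) := by ring
      _ ≤ _ := mul_le_mul_of_nonneg_right (hd1 j) (by positivity)
  have hasW : ∀ x ∈ Icc (0:ℝ) 1, Real.exp (-ν * x) * ∫ ξ in (0:ℝ)..x, as ξ ≤ W := by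
    intro x hx
    rw [← intervalIntegral.integral_const_mul]
    calc ∫ ξ in (0:ℝ)..x, Real.exp (-ν * x) * as ξ ≤ ∫ ξ in (0:ℝ)..x, w ξ := by
          apply intervalIntegral.integral_mono_on hx.1
          · exact hII _ (continuousOn_const.mul hasc) _ h0 _ hx
          · exact hII _ hwc _ h0 _ hx
          · intro ξ hξ
            refine le_trans (mul_le_mul_of_nonneg_right ?_ (has0 ξ)) (hasw ξ hξ.1)
            exact Real.exp_le_exp.2 (by nlinarith [hξ.2])
      _ ≤ W := by
          have := intervalIntegral.integral_add_adjacent_intervals (hII _ hwc _ h0 _ hx)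
            (hII _ hwc _ hx _ h1)
          have h2 : 0 ≤ ∫ ξ in x..1, w ξ := intervalIntegral.integral_nonneg hx.2 fun ξ _ => hw0 ξ
          linarith
  set T : ℝ := ∑ j, d j * (∑ k, if k < j then v 0 k ^ 2 else 0) with hT
  have hT0 : ∀ j, 0 ≤ ∑ k, (if k < j then v 0 k ^ 2 else 0) := fun j =>
    Finset.sum_nonneg fun k _ => by split_ifs <;> positivity
  -- pointwise bound
  have hpt : ∀ x ∈ Icc (0:ℝ) 1, g x ≤ -P' x + ((-1 - N / lamlo * n) * w x
      + (N / lamlo * n * W + N / lamlo * Real.exp ν * T)) := by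
    intro x hx
    set F : Fin n → ℝ := (Sr x).mulVec (u x) + (Sl x).mulVec (v x)
              + (∫ ξ in (0:ℝ)..x, (Cr x ξ).mulVec (u ξ))
              + ∫ ξ in (0:ℝ)..x, (Cl x ξ).mulVec (v ξ) with hF
    set G : Fin m → ℝ := (Δ x).mulVec (v 0) with hG
    have hut' : ∀ i, ut x i = F i - lr i x * ux x i := by
      intro i
      have := congrFun (hpu x hx) i
      rw [Pi.add_apply, Matrix.mulVec_diagonal] at this
      linarith
    have hvt' : ∀ j, vt x j = G j + ll j x * vx x j := by
      intro j
      have := congrFun (hpv x hx) j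
      rw [Pi.sub_apply, Matrix.mulVec_diagonal] at this
      linarith
    have hid : g x = -P' x - ν * w x
        + (∑ i, Real.exp (-ν * x) / lr i x * (2 * u x i * F i)
        + ∑ j, d j * (Real.exp (ν * x) / ll j x * (2 * v x j * G j))) := by
      have e1 : ∑ i, Real.exp (-ν * x) / lr i x * (2 * u x i * ut x i)
        = - ∑ i, (Real.exp (-ν * x) * -ν * u x i ^ 2 + Real.exp (-ν * x) * (2 * u x i * ux x i))
          - ν * ∑ i, Real.exp (-ν * x) * u x i ^ 2
          + ∑ i, Real.exp (-ν * x) / lr i x * (2 * u x i * F i) := by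
        rw [← Finset.sum_neg_distrib, Finset.mul_sum, ← Finset.sum_sub_distrib,
          ← Finset.sum_add_distrib]
        refine Finset.sum_congr rfl fun i _ => ?_
        have := hlr0 i x hx
        rw [hut' i]
        field_simp
        ring
      have e2 : ∑ j, d j * (Real.exp (ν * x) / ll j x * (2 * v x j * vt x j))
        = ∑ j, d j * (Real.exp (ν * x) * ν * v x j ^ 2 + Real.exp (ν * x) * (2 * v x j * vx x j))
          - ν * ∑ j, d j * (Real.exp (ν * x) * v x j ^ 2)
          + ∑ j, d j * (Real.exp (ν * x) / ll j x * (2 * v x j * G j)) := by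
        rw [Finset.mul_sum, ← Finset.sum_sub_distrib, ← Finset.sum_add_distrib]
        refine Finset.sum_congr rfl fun i _ => ?_
        have := hll0 i x hx
        rw [hvt' i]
        field_simp
        ring
      simp only [hg, hP', hw]
      rw [e1, e2]
      ring
    have hsplit : ∫ ξ in (0:ℝ)..x, as ξ
        = (∫ ξ in (0:ℝ)..x, ∑ i, u ξ i ^ 2) + ∫ ξ in (0:ℝ)..x, ∑ i, v ξ i ^ 2 :=
      intervalIntegral.integral_add
        (hII _ (continuousOn_finsetSum _ fun i _ => (hui i).pow 2) _ h0 _ hx)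
        (hII _ (continuousOn_finsetSum _ fun i _ => (hvi i).pow 2) _ h0 _ hx)
    have hI0 : 0 ≤ ∫ ξ in (0:ℝ)..x, as ξ := intervalIntegral.integral_nonneg hx.1 fun ξ _ => has0 ξ
    have hsubx : Icc 0 x ⊆ Icc (0:ℝ) 1 := Icc_subset_Icc_right hx.2
    have hA : ∀ i, Real.exp (-ν * x) / lr i x * (2 * u x i * F i)
        ≤ N / lamlo * (2 * (n + m)) * (Real.exp (-ν * x) * u x i ^ 2)
          + N / lamlo * (w x + W) := by
      intro i
      have b1 := mulVec_bound (Sr x) N i (hSrM x hx i) (u x i) (u x)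
      have b2 := mulVec_bound (Sl x) N i (hSlM x hx i) (u x i) (v x)
      have b3 := int_mulVec_bound (Cr x) u N x hN hx.1 hx.2 (hCrc x hx) (hu.mono hsubx)
        (hCrM x hx) i (u x i)
      have b4 := int_mulVec_bound (Cl x) v N x hN hx.1 hx.2 (hClc x hx) (hv.mono hsubx)
        (hClM x hx) i (u x i)
      have hb : 2 * u x i * F i ≤ N * (2 * (n + m) * u x i ^ 2 + as x + ∫ ξ in (0:ℝ)..x, as ξ) := by
        rw [hsplit]
        simp only [hF, Pi.add_apply, has]
        linarith
      have hq := quot_bound hlamlo (hlrb i x hx) (Real.exp_pos (-ν * x)).le hb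
        (by have := has0 x; positivity)
      refine hq.trans ?_
      have e : Real.exp (-ν * x) * (N * (2 * (n + m) * u x i ^ 2 + as x + ∫ ξ in (0:ℝ)..x, as ξ))
          / lamlo = N / lamlo * (2 * (n + m)) * (Real.exp (-ν * x) * u x i ^ 2)
          + N / lamlo * (Real.exp (-ν * x) * as x + Real.exp (-ν * x) * ∫ ξ in (0:ℝ)..x, as ξ) := by
        field_simp
        ring
      rw [e]
      have := hasw x hx.1
      have := hasW x hx
      gcongr
    have hB : ∀ j, d j * (Real.exp (ν * x) / ll j x * (2 * v x j * G j))
        ≤ N / lamlo * m * (d j * (Real.exp (ν * x) * v x j ^ 2))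
          + N / lamlo * Real.exp ν * (d j * ∑ k, if k < j then v 0 k ^ 2 else 0) := by
      intro j
      have b := beta_bound (Δ x) N (hΔb x hx) (hΔtri x hx) (v 0) j (v x j)
      have ht := hT0 j
      have hq := quot_bound hlamlo (hllb j x hx) (Real.exp_pos (ν * x)).le b (by positivity)
      have hq2 := mul_le_mul_of_nonneg_left hq (hd0 j)
      refine hq2.trans ?_
      have e : d j * (Real.exp (ν * x) * (N * (m * v x j ^ 2
            + ∑ k, if k < j then v 0 k ^ 2 else 0)) / lamlo)
          = N / lamlo * m * (d j * (Real.exp (ν * x) * v x j ^ 2))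
          + N / lamlo * Real.exp (ν * x) * (d j * ∑ k, if k < j then v 0 k ^ 2 else 0) := by
        field_simp
      rw [e]
      have hE : Real.exp (ν * x) ≤ Real.exp ν := Real.exp_le_exp.2 (by nlinarith [hx.2])
      have := mul_nonneg (hd0 j) ht
      gcongr
    have hAs := Finset.sum_le_sum fun i (_ : i ∈ Finset.univ) => hA i
    have hBs := Finset.sum_le_sum fun j (_ : j ∈ Finset.univ) => hB j
    rw [Finset.sum_add_distrib, ← Finset.mul_sum, Finset.sum_const, Finset.card_univ,
      Fintype.card_fin, nsmul_eq_mul] at hAs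
    rw [Finset.sum_add_distrib, ← Finset.mul_sum, ← Finset.mul_sum] at hBs
    set X1 := ∑ i, Real.exp (-ν * x) * u x i ^ 2 with hX1
    set X2 := ∑ j, d j * (Real.exp (ν * x) * v x j ^ 2) with hX2
    have hwx : w x = X1 + X2 := rfl
    have hX1' : 0 ≤ X1 := Finset.sum_nonneg fun i _ => by positivity
    have hX2' : 0 ≤ X2 := Finset.sum_nonneg fun j _ => mul_nonneg (hd0 j) (by positivity)
    rw [hid]
    have hr : 0 ≤ N / lamlo := by positivity
    have k1 : N / lamlo * (2 * (n + m)) * X1 ≤ N / lamlo * (2 * (n + m)) * w x := by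
      apply mul_le_mul_of_nonneg_left _ (by positivity); linarith
    have k2 : N / lamlo * m * X2 ≤ N / lamlo * m * w x := by
      apply mul_le_mul_of_nonneg_left _ (by positivity); linarith
    rw [← hν] at hAs hBs ⊢
    have hfin : N / lamlo * (2 * (n + m)) * w x + n * (N / lamlo * (w x + W))
        + N / lamlo * m * w x + N / lamlo * Real.exp (N / lamlo * (4 * n + 3 * m) + 1) * T
        - (N / lamlo * (4 * n + 3 * m) + 1) * w x = (-1 - N / lamlo * n) * w x
      + (N / lamlo * n * W + N / lamlo * Real.exp (N / lamlo * (4 * n + 3 * m) + 1) * T) := by ring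
    linarith
  have hmono : ∫ x in (0:ℝ)..1, g x ≤ ∫ x in (0:ℝ)..1, (-P' x + ((-1 - N / lamlo * n) * w x
      + (N / lamlo * n * W + N / lamlo * Real.exp ν * T))) := by
    apply intervalIntegral.integral_mono_on zero_le_one (hII _ hgc _ h0 _ h1) _ hpt
    exact hII _ (hP'c.neg.add ((continuousOn_const.mul hwc).add continuousOn_const)) _ h0 _ h1
  have i1 : IntervalIntegrable (fun x => -P' x) volume 0 1 := hII _ hP'c.neg _ h0 _ h1
  have i2 : IntervalIntegrable (fun x => (-1 - N / lamlo * n) * w x) volume 0 1 :=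
    hII _ (continuousOn_const.mul hwc) _ h0 _ h1
  rw [intervalIntegral.integral_add i1 (i2.add (by simp)),
    intervalIntegral.integral_add i2 (by simp),
    intervalIntegral.integral_neg, intervalIntegral.integral_const_mul, hFTC,
    intervalIntegral.integral_const] at hmono
  have hP1 : 0 ≤ P 1 := by
    simp only [hP, hb1]
    simp
    exact Finset.sum_nonneg fun i _ => by positivity
  have hP0 : P 0 + N / lamlo * Real.exp ν * T ≤ 0 := by
    have := boundary_bound Q0 (v 0) d _ hd
    simp only [hP, hb0, mul_zero, Real.exp_zero, one_mul]
    linarith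
  simp only [sub_zero, one_smul] at hmono
  linarith

theorem target_system_exponential_stability
    (n m : ℕ)
    (lr : Fin n → ℝ → ℝ) (ll : Fin m → ℝ → ℝ)
    (lamlo lamhi M B : ℝ) (hlamlo : 0 < lamlo)
    (hlrC1 : ∀ i, ContDiffOn ℝ 1 (lr i) (Icc 0 1))
    (hllC1 : ∀ j, ContDiffOn ℝ 1 (ll j) (Icc 0 1))
    (hlrb : ∀ i, ∀ x ∈ Icc (0:ℝ) 1, lamlo ≤ lr i x ∧ lr i x ≤ lamhi)
    (hllb : ∀ j, ∀ x ∈ Icc (0:ℝ) 1, lamlo ≤ ll j x ∧ ll j x ≤ lamhi)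
    (Sr : ℝ → Matrix (Fin n) (Fin n) ℝ) (Sl : ℝ → Matrix (Fin n) (Fin m) ℝ)
    (hSrc : ContinuousOn Sr (Icc 0 1)) (hSlc : ContinuousOn Sl (Icc 0 1))
    (hSrM : ∀ x ∈ Icc (0:ℝ) 1, l2OpNorm (Sr x) ≤ M)
    (hSlM : ∀ x ∈ Icc (0:ℝ) 1, l2OpNorm (Sl x) ≤ M)
    (Cr : ℝ → ℝ → Matrix (Fin n) (Fin n) ℝ) (Cl : ℝ → ℝ → Matrix (Fin n) (Fin m) ℝ)
    (hCrc : ContinuousOn (fun p : ℝ × ℝ => Cr p.1 p.2)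
      {p : ℝ × ℝ | 0 ≤ p.2 ∧ p.2 ≤ p.1 ∧ p.1 ≤ 1})
    (hClc : ContinuousOn (fun p : ℝ × ℝ => Cl p.1 p.2)
      {p : ℝ × ℝ | 0 ≤ p.2 ∧ p.2 ≤ p.1 ∧ p.1 ≤ 1})
    (hCrM : ∀ x ξ : ℝ, 0 ≤ ξ → ξ ≤ x → x ≤ 1 → l2OpNorm (Cr x ξ) ≤ M)
    (hClM : ∀ x ξ : ℝ, 0 ≤ ξ → ξ ≤ x → x ≤ 1 → l2OpNorm (Cl x ξ) ≤ M)
    (Δ : ℝ → Matrix (Fin m) (Fin m) ℝ)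
    (hΔc : ContinuousOn Δ (Icc 0 1))
    (hΔb : ∀ x ∈ Icc (0:ℝ) 1, l2OpNorm (Δ x) ≤ B)
    (hΔtri : ∀ x ∈ Icc (0:ℝ) 1, ∀ i j : Fin m, i ≤ j → Δ x i j = 0)
    (Q0 : Matrix (Fin n) (Fin m) ℝ) :
    ∃ K c : ℝ, 1 ≤ K ∧ 0 < c ∧
      ∀ (ε εt εx : ℝ → ℝ → Fin n → ℝ) (β βt βx : ℝ → ℝ → Fin m → ℝ),
        ContinuousOn (fun p : ℝ × ℝ => ε p.1 p.2) (Ici 0 ×ˢ Icc 0 1) →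
        ContinuousOn (fun p : ℝ × ℝ => β p.1 p.2) (Ici 0 ×ˢ Icc 0 1) →
        ContinuousOn (fun p : ℝ × ℝ => εt p.1 p.2) (Ici 0 ×ˢ Icc 0 1) →
        ContinuousOn (fun p : ℝ × ℝ => εx p.1 p.2) (Ici 0 ×ˢ Icc 0 1) →
        ContinuousOn (fun p : ℝ × ℝ => βt p.1 p.2) (Ici 0 ×ˢ Icc 0 1) →
        ContinuousOn (fun p : ℝ × ℝ => βx p.1 p.2) (Ici 0 ×ˢ Icc 0 1) →
        (∀ t ∈ Ici (0:ℝ), ∀ x ∈ Icc (0:ℝ) 1,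
          HasDerivWithinAt (fun s => ε s x) (εt t x) (Ici 0) t ∧
          HasDerivWithinAt (fun y => ε t y) (εx t x) (Icc 0 1) x ∧
          HasDerivWithinAt (fun s => β s x) (βt t x) (Ici 0) t ∧
          HasDerivWithinAt (fun y => β t y) (βx t x) (Icc 0 1) x) →
        (∀ t ∈ Ici (0:ℝ), ∀ x ∈ Icc (0:ℝ) 1,
          εt t x + (Matrix.diagonal fun i => lr i x).mulVec (εx t x)
            = (Sr x).mulVec (ε t x) + (Sl x).mulVec (β t x)
              + (∫ ξ in (0:ℝ)..x, (Cr x ξ).mulVec (ε t ξ))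
              + ∫ ξ in (0:ℝ)..x, (Cl x ξ).mulVec (β t ξ)) →
        (∀ t ∈ Ici (0:ℝ), ∀ x ∈ Icc (0:ℝ) 1,
          βt t x - (Matrix.diagonal fun j => ll j x).mulVec (βx t x)
            = (Δ x).mulVec (β t 0)) →
        (∀ t ∈ Ici (0:ℝ), ε t 0 = Q0.mulVec (β t 0) ∧ β t 1 = 0) →
        ∀ t ∈ Ici (0:ℝ),
          Real.sqrt (∫ x in (0:ℝ)..1,
              ((∑ i, (ε t x i) ^ 2) + ∑ j, (β t x j) ^ 2))
            ≤ K * Real.exp (-c * t) *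
              Real.sqrt (∫ x in (0:ℝ)..1,
                ((∑ i, (ε 0 x i) ^ 2) + ∑ j, (β 0 x j) ^ 2)) := by
  have hexp_c : ∀ a : ℝ, Continuous (fun p : ℝ × ℝ => Real.exp (a * p.2)) := by
    intro a; fun_prop
  set N : ℝ := |M| + |B| with hNdef
  have hN : 0 ≤ N := by positivity
  have hMN : M ≤ N := (le_abs_self M).trans (by linarith [abs_nonneg B])
  have hBN : B ≤ N := (le_abs_self B).trans (by linarith [abs_nonneg M])
  obtain ⟨ν, hν⟩ : ∃ ν : ℝ, N / lamlo * (4 * n + 3 * m) + 1 = ν := ⟨_, rfl⟩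
  have hν0 : 0 ≤ ν := by rw [← hν]; positivity
  obtain ⟨d, D, hd1, hdD, hD1, hd⟩ := exists_weights m (∑ i, ∑ k, Q0 i k ^ 2)
    (N / lamlo * Real.exp ν) (by positivity) (by positivity)
  have hd0 : ∀ j, 0 ≤ d j := fun j => zero_le_one.trans (hd1 j)
  set H : ℝ := max lamhi 1 with hH
  have hH0 : 0 < H := lt_of_lt_of_le one_pos (le_max_right _ _)
  have hlamH : lamhi ≤ H := le_max_left _ _
  set K2 : ℝ := H * Real.exp ν * (Real.exp ν * D / lamlo) with hK2
  have hK20 : 0 ≤ K2 := by positivity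
  refine ⟨max 1 (Real.sqrt K2), lamlo / 2, le_max_left _ _, by positivity, ?_⟩
  intro ε εt εx β βt βx hε hβ hεt hεx hβt hβx hder hpε hpβ hbc t ht
  have hlrc : ∀ i, ContinuousOn (lr i) (Icc 0 1) := fun i => (hlrC1 i).continuousOn
  have hllc : ∀ j, ContinuousOn (ll j) (Icc 0 1) := fun j => (hllC1 j).continuousOn
  have hlr0 : ∀ i, ∀ x ∈ Icc (0:ℝ) 1, 0 < lr i x :=
    fun i x hx => (lt_of_lt_of_le hlamlo (hlrb i x hx).1)
  have hll0 : ∀ i, ∀ x ∈ Icc (0:ℝ) 1, 0 < ll i x :=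
    fun i x hx => (lt_of_lt_of_le hlamlo (hllb i x hx).1)
  have hexpc : ∀ a : ℝ, ContinuousOn (fun p : ℝ × ℝ => Real.exp (a * p.2)) (Ici 0 ×ˢ Icc 0 1) :=
    fun a => (hexp_c a).continuousOn
  have hlrc2 : ∀ i, ContinuousOn (fun p : ℝ × ℝ => lr i p.2) (Ici 0 ×ˢ Icc 0 1) :=
    fun i => (hlrc i).comp continuous_snd.continuousOn fun p hp => hp.2
  have hllc2 : ∀ i, ContinuousOn (fun p : ℝ × ℝ => ll i p.2) (Ici 0 ×ˢ Icc 0 1) :=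
    fun i => (hllc i).comp continuous_snd.continuousOn fun p hp => hp.2
  have hεi : ∀ i, ContinuousOn (fun p : ℝ × ℝ => ε p.1 p.2 i) (Ici 0 ×ˢ Icc 0 1) :=
    fun i => (continuous_apply i).comp_continuousOn hε
  have hβi : ∀ i, ContinuousOn (fun p : ℝ × ℝ => β p.1 p.2 i) (Ici 0 ×ˢ Icc 0 1) :=
    fun i => (continuous_apply i).comp_continuousOn hβ
  have hεti : ∀ i, ContinuousOn (fun p : ℝ × ℝ => εt p.1 p.2 i) (Ici 0 ×ˢ Icc 0 1) :=
    fun i => (continuous_apply i).comp_continuousOn hεt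
  have hβti : ∀ i, ContinuousOn (fun p : ℝ × ℝ => βt p.1 p.2 i) (Ici 0 ×ˢ Icc 0 1) :=
    fun i => (continuous_apply i).comp_continuousOn hβt
  obtain ⟨g, hg⟩ : ∃ g : ℝ → ℝ → ℝ, g = fun t x =>
      ∑ i, Real.exp (-ν * x) / lr i x * ε t x i ^ 2
      + ∑ j, d j * (Real.exp (ν * x) / ll j x * β t x j ^ 2) := ⟨_, rfl⟩
  obtain ⟨gt, hgt⟩ : ∃ gt : ℝ → ℝ → ℝ, gt = fun t x =>
      ∑ i, Real.exp (-ν * x) / lr i x * (2 * ε t x i * εt t x i)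
      + ∑ j, d j * (Real.exp (ν * x) / ll j x * (2 * β t x j * βt t x j)) := ⟨_, rfl⟩
  obtain ⟨w, hw⟩ : ∃ w : ℝ → ℝ → ℝ, w = fun t x =>
      ∑ i, Real.exp (-ν * x) * ε t x i ^ 2
      + ∑ j, d j * (Real.exp (ν * x) * β t x j ^ 2) := ⟨_, rfl⟩
  obtain ⟨a, ha⟩ : ∃ a : ℝ → ℝ → ℝ, a = fun t x =>
      (∑ i, ε t x i ^ 2) + ∑ j, β t x j ^ 2 := ⟨_, rfl⟩
  have hgc : ContinuousOn (fun p : ℝ × ℝ => g p.1 p.2) (Ici 0 ×ˢ Icc 0 1) := by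
    rw [hg]
    exact (continuousOn_finsetSum _ fun i _ => ((hexpc _).div (hlrc2 i)
        (fun p hp => (hlr0 i _ hp.2).ne')).mul ((hεi i).pow 2)).add
      (continuousOn_finsetSum _ fun j _ => continuousOn_const.mul (((hexpc _).div (hllc2 j)
        (fun p hp => (hll0 j _ hp.2).ne')).mul ((hβi j).pow 2)))
  have hgtc : ContinuousOn (fun p : ℝ × ℝ => gt p.1 p.2) (Ici 0 ×ˢ Icc 0 1) := by
    rw [hgt]
    exact (continuousOn_finsetSum _ fun i _ => ((hexpc _).div (hlrc2 i)
        (fun p hp => (hlr0 i _ hp.2).ne')).mul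
          ((continuousOn_const.mul (hεi i)).mul (hεti i))).add
      (continuousOn_finsetSum _ fun j _ => continuousOn_const.mul (((hexpc _).div (hllc2 j)
        (fun p hp => (hll0 j _ hp.2).ne')).mul ((continuousOn_const.mul (hβi j)).mul (hβti j))))
  have hwc : ContinuousOn (fun p : ℝ × ℝ => w p.1 p.2) (Ici 0 ×ˢ Icc 0 1) := by
    rw [hw]
    exact (continuousOn_finsetSum _ fun i _ => (hexpc _).mul ((hεi i).pow 2)).add
      (continuousOn_finsetSum _ fun j _ => continuousOn_const.mul ((hexpc _).mul ((hβi j).pow 2)))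
  have hac : ContinuousOn (fun p : ℝ × ℝ => a p.1 p.2) (Ici 0 ×ˢ Icc 0 1) := by
    rw [ha]
    exact (continuousOn_finsetSum _ fun i _ => (hεi i).pow 2).add
      (continuousOn_finsetSum _ fun j _ => (hβi j).pow 2)
  have hint : ∀ (h : ℝ → ℝ → ℝ),
      ContinuousOn (fun p : ℝ × ℝ => h p.1 p.2) (Ici 0 ×ˢ Icc 0 1) → ∀ s, 0 ≤ s →
      IntervalIntegrable (h s) volume 0 1 := by
    intro h hh s hs
    apply ContinuousOn.intervalIntegrable
    rw [uIcc_of_le zero_le_one]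
    exact slice_cont h hh s hs
  have hgd : ∀ t ∈ Ici (0:ℝ), ∀ x ∈ Icc (0:ℝ) 1,
      HasDerivWithinAt (fun s => g s x) (gt t x) (Ici 0) t := by
    intro t ht x hx
    obtain ⟨h1, -, h2, -⟩ := hder t ht x hx
    have h1i := hasDerivWithinAt_pi.1 h1
    have h2i := hasDerivWithinAt_pi.1 h2
    rw [hg, hgt]
    refine HasDerivWithinAt.add (HasDerivWithinAt.fun_sum fun i _ => ?_)
      (HasDerivWithinAt.fun_sum fun j _ => HasDerivWithinAt.const_mul _ ?_)
    · refine HasDerivWithinAt.const_mul _ ?_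
      simpa using (h1i i).fun_pow 2
    · refine HasDerivWithinAt.const_mul _ ?_
      simpa using (h2i j).fun_pow 2
  have hdiss : ∀ s, 0 ≤ s → ∫ x in (0:ℝ)..1, gt s x ≤ - ∫ x in (0:ℝ)..1, w s x := by
    intro s hs
    rw [hgt, hw]
    refine spatial lr ll lamlo N ν hlamlo hN hlrc hllc (fun i x hx => (hlrb i x hx).1)
      (fun i x hx => (hllb i x hx).1) Sr Sl
      (fun x hx i j => (entry_le _ i j).trans ((hSrM x hx).trans hMN))
      (fun x hx i j => (entry_le _ i j).trans ((hSlM x hx).trans hMN)) Cr Cl ?_ ?_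
      (fun x hx ξ hξ i j => (entry_le _ i j).trans ((hCrM x ξ hξ.1 hξ.2 hx.2).trans hMN))
      (fun x hx ξ hξ i j => (entry_le _ i j).trans ((hClM x ξ hξ.1 hξ.2 hx.2).trans hMN)) Δ
      (fun x hx i j => (entry_le _ i j).trans ((hΔb x hx).trans hBN)) hΔtri Q0 hν d hd1 hd
      (ε s) (εt s) (εx s) (β s) (βt s) (βx s) (slice_cont _ hε s hs) (slice_cont _ hβ s hs)
      (slice_cont _ hεt s hs) (slice_cont _ hεx s hs) (slice_cont _ hβt s hs)
      (slice_cont _ hβx s hs) (fun x hx => (hder s hs x hx).2.1)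
      (fun x hx => (hder s hs x hx).2.2.2) (hpε s hs) (hpβ s hs) (hbc s hs).1 (hbc s hs).2
    · intro x hx
      exact hCrc.comp (f := fun ξ : ℝ => (x, ξ)) (by fun_prop) fun ξ hξ => ⟨hξ.1, hξ.2, hx.2⟩
    · intro x hx
      exact hClc.comp (f := fun ξ : ℝ => (x, ξ)) (by fun_prop) fun ξ hξ => ⟨hξ.1, hξ.2, hx.2⟩
  have hgw : ∀ s, 0 ≤ s → lamlo * ∫ x in (0:ℝ)..1, g s x ≤ ∫ x in (0:ℝ)..1, w s x := by
    intro s hs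
    rw [← intervalIntegral.integral_const_mul]
    apply intervalIntegral.integral_mono_on zero_le_one ((hint g hgc s hs).const_mul _)
      (hint w hwc s hs)
    intro x hx
    rw [hg, hw]
    simp only [mul_add, Finset.mul_sum]
    refine add_le_add (Finset.sum_le_sum fun i _ => ?_) (Finset.sum_le_sum fun j _ => ?_)
    · have h1 := hlr0 i x hx
      have h2 : lamlo / lr i x ≤ 1 := (div_le_one h1).2 (hlrb i x hx).1
      calc lamlo * (Real.exp (-ν * x) / lr i x * ε s x i ^ 2)
          = lamlo / lr i x * (Real.exp (-ν * x) * ε s x i ^ 2) := by ring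
        _ ≤ _ := mul_le_of_le_one_left (by positivity) h2
    · have h1 := hll0 j x hx
      have h2 : lamlo / ll j x ≤ 1 := (div_le_one h1).2 (hllb j x hx).1
      have := hd0 j
      calc lamlo * (d j * (Real.exp (ν * x) / ll j x * β s x j ^ 2))
          = lamlo / ll j x * (d j * (Real.exp (ν * x) * β s x j ^ 2)) := by ring
        _ ≤ _ := mul_le_of_le_one_left (by positivity) h2
  have hdecay := decay_of_deriv_le (fun t => ∫ x in (0:ℝ)..1, g t x)
    (fun t => ∫ x in (0:ℝ)..1, gt t x) lamlo (param_cont g hgc)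
    (fun t ht => param_deriv g gt hgc hgtc hgd t ht)
    (fun t ht => by
      have h1 := hdiss t ht.le
      have h2 := hgw t ht.le
      linarith) t ht
  -- comparison of `a` and `g`
  have hag : ∀ s, 0 ≤ s → ∫ x in (0:ℝ)..1, a s x
      ≤ H * Real.exp ν * ∫ x in (0:ℝ)..1, g s x := by
    intro s hs
    rw [← intervalIntegral.integral_const_mul]
    apply intervalIntegral.integral_mono_on zero_le_one (hint a hac s hs)
      ((hint g hgc s hs).const_mul _)
    intro x hx
    have key : ∀ l y e dd : ℝ, 0 < l → l ≤ H → Real.exp (-ν) ≤ e → 1 ≤ dd →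
        y ^ 2 ≤ H * Real.exp ν * (dd * (e / l * y ^ 2)) := by
      intro l y e dd hl hlH he hdd
      have h1 : 1 ≤ H / l := (one_le_div hl).2 hlH
      have h2 : 1 ≤ Real.exp ν * e := by
        calc (1:ℝ) = Real.exp ν * Real.exp (-ν) := by rw [← Real.exp_add]; simp
          _ ≤ _ := by gcongr
      have h3 : 1 ≤ (H / l) * (Real.exp ν * e) * dd :=
        one_le_mul_of_one_le_of_one_le (one_le_mul_of_one_le_of_one_le h1 h2) hdd
      calc y ^ 2 ≤ (H / l) * (Real.exp ν * e) * dd * y ^ 2 :=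
            le_mul_of_one_le_left (sq_nonneg _) h3
        _ = _ := by ring
    rw [ha, hg]
    simp only [mul_add, Finset.mul_sum]
    refine add_le_add (Finset.sum_le_sum fun i _ => ?_) (Finset.sum_le_sum fun j _ => ?_)
    · have := key (lr i x) (ε s x i) (Real.exp (-ν * x)) 1 (hlr0 i x hx)
        ((hlrb i x hx).2.trans hlamH) (Real.exp_le_exp.2 (by nlinarith [hx.2])) le_rfl
      simpa using this
    · exact key (ll j x) (β s x j) (Real.exp (ν * x)) (d j) (hll0 j x hx)
        ((hllb j x hx).2.trans hlamH) (Real.exp_le_exp.2 (by nlinarith [hx.1])) (hd1 j)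
  have hga : ∀ s, 0 ≤ s → ∫ x in (0:ℝ)..1, g s x
      ≤ Real.exp ν * D / lamlo * ∫ x in (0:ℝ)..1, a s x := by
    intro s hs
    rw [← intervalIntegral.integral_const_mul]
    apply intervalIntegral.integral_mono_on zero_le_one (hint g hgc s hs)
      ((hint a hac s hs).const_mul _)
    intro x hx
    have key : ∀ l y e dd : ℝ, lamlo ≤ l → 0 ≤ e → e ≤ Real.exp ν → 0 ≤ dd → dd ≤ D →
        dd * (e / l * y ^ 2) ≤ Real.exp ν * D / lamlo * y ^ 2 := by
      intro l y e dd hl he0 he hdd0 hdd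
      have hl0 : 0 < l := lt_of_lt_of_le hlamlo hl
      calc dd * (e / l * y ^ 2) ≤ D * (Real.exp ν / lamlo * y ^ 2) := by gcongr
        _ = _ := by ring
    rw [ha, hg]
    simp only [mul_add, Finset.mul_sum]
    refine add_le_add (Finset.sum_le_sum fun i _ => ?_) (Finset.sum_le_sum fun j _ => ?_)
    · have := key (lr i x) (ε s x i) (Real.exp (-ν * x)) 1 (hlrb i x hx).1 (Real.exp_pos _).le
        (Real.exp_le_exp.2 (by nlinarith [hx.1])) zero_le_one hD1
      simpa using this
    · exact key (ll j x) (β s x j) (Real.exp (ν * x)) (d j) (hllb j x hx).1 (Real.exp_pos _).le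
        (Real.exp_le_exp.2 (by nlinarith [hx.2])) (hd0 j) (hdD j)
  have hfin : ∫ x in (0:ℝ)..1, a t x
      ≤ K2 * Real.exp (-(lamlo / 2) * t) ^ 2 * ∫ x in (0:ℝ)..1, a 0 x := by
    have e1 : Real.exp (-(lamlo / 2) * t) ^ 2 = Real.exp (-lamlo * t) := by
      rw [← Real.exp_nat_mul]; congr 1; push_cast; ring
    rw [e1]
    calc ∫ x in (0:ℝ)..1, a t x ≤ H * Real.exp ν * ∫ x in (0:ℝ)..1, g t x := hag t ht
      _ ≤ H * Real.exp ν * (Real.exp (-lamlo * t) * ∫ x in (0:ℝ)..1, g 0 x) := by gcongr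
      _ ≤ H * Real.exp ν * (Real.exp (-lamlo * t) *
          (Real.exp ν * D / lamlo * ∫ x in (0:ℝ)..1, a 0 x)) := by
        have := hga 0 le_rfl
        gcongr
      _ = _ := by rw [hK2]; ring
  have hgoal : Real.sqrt (∫ x in (0:ℝ)..1, a t x)
      ≤ max 1 (Real.sqrt K2) * Real.exp (-(lamlo / 2) * t)
        * Real.sqrt (∫ x in (0:ℝ)..1, a 0 x) := by
    calc Real.sqrt (∫ x in (0:ℝ)..1, a t x)
        ≤ Real.sqrt (K2 * Real.exp (-(lamlo / 2) * t) ^ 2 * ∫ x in (0:ℝ)..1, a 0 x) :=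
          Real.sqrt_le_sqrt hfin
      _ = Real.sqrt K2 * Real.exp (-(lamlo / 2) * t) * Real.sqrt (∫ x in (0:ℝ)..1, a 0 x) := by
          rw [Real.sqrt_mul (by positivity), Real.sqrt_mul hK20,
            Real.sqrt_sq (Real.exp_pos _).le]
      _ ≤ _ := by
          gcongr
          exact le_max_right _ _
  rw [ha] at hgoal
  exact hgoal
end

section
/- Exponential stability of the closed-loop system under the backstepping boundary control (Theorem 1): Suppose Λʳ(x) = diag(λʳ₁(x),…,λʳₙ(x)) and Λˡ(x) = diag(λˡ₁(x),…,λˡₘ(x)) are C¹ diagonal matrix functions on [0,1] whose entries satisfy 0 < λ̲ ≤ λʳᵢ(x), λˡⱼ(x) ≤ λ̄; Sʳ, Sˡ, Sᵒ are continuous and bounded by M in matrix norm; Q₀ ∈ ℝ^{n×m}, R₁ ∈ ℝ^{m×n}. Suppose the kernels G₂₁: 𝕋 → ℝ^{m×n} and G₂₂: 𝕋 → ℝ^{m×m} are C¹ and satisfy the kernel equations (K1), (K2) and boundary conditions (B1), (B2), the matrix Δ(x) := G₂₂(x,0)Λˡ(0) − G₂₁(x,0)Λʳ(0)Q₀ is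 strictly lower triangular for every x ∈ [0,1], and Cʳ: 𝕋 → ℝ^{n×n}, Cˡ: 𝕋 → ℝ^{n×m} are continuous and satisfy the relations Cʳ(x,ξ) = Sˡ(x)G₂₁(x,ξ) + ∫_ξˣ Cˡ(x,η)G₂₁(η,ξ)dη and Cˡ(x,ξ) = Sˡ(x)G₂₂(x,ξ) + ∫_ξˣ Cˡ(x,η)G₂₂(η,ξ)dη. Then there exist constants K ≥ 1 and c > 0 such that every classical C¹ solution (u, v) of the plant system with boundary conditions u(t,0) = Q₀v(t,0) and v(t,1) = R₁u(t,1) + 𝔘(t), where the feedback control is 𝔘(t) = −R₁u(t,1) + ∫₀¹ [G₂₁(1,ξ)u(t,ξ) + G₂₂(1,ξ)v(t,ξ)] dξ, satisfies ‖(u(t,·), v(t,·))‖_{L²(0,1)} ≤ K e^{−ct} ‖(u(0,·), v(0,·))‖_{L²(0,1)} for all t ≥ 0. -/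
open MeasureTheory Set Matrix Real

open scoped Interval


lemma aux_paramDeriv (f ft : ℝ → ℝ → ℝ) (a b t : ℝ) (s : Set ℝ) (hs : s ∈ nhds t) (hsc : IsCompact s)
    (hab : a ≤ b)
    (hf : ∀ r ∈ s, ContinuousOn (fun x => f r x) (Icc a b))
    (hft : ContinuousOn (fun p : ℝ × ℝ => ft p.1 p.2) (s ×ˢ Icc a b))
    (hd : ∀ r ∈ s, ∀ x ∈ Icc a b, HasDerivAt (fun q => f q x) (ft r x) r) :
    HasDerivAt (fun q => ∫ x in a..b, f q x) (∫ x in a..b, ft t x) t := by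
  obtain ⟨B, hB⟩ := (hsc.prod (isCompact_Icc (a := a) (b := b))).exists_bound_of_continuousOn hft
  have hts : t ∈ s := mem_of_mem_nhds hs
  have hsub : Ι a b ⊆ Icc a b := by
    rw [uIoc_of_le hab]; exact Ioc_subset_Icc_self
  refine (intervalIntegral.hasDerivAt_integral_of_dominated_loc_of_deriv_le (F := f) (F' := ft)
    (bound := fun _ => B) hs ?_ ?_ ?_ ?_ ?_ ?_).2
  · filter_upwards [hs] with r hr
    exact ((hf r hr).mono hsub).aestronglyMeasurable measurableSet_uIoc
  · exact (hf t hts).intervalIntegrable_of_Icc hab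
  · have : ContinuousOn (fun x => ft t x) (Icc a b) :=
      hft.comp (f := fun x => (t, x)) (by fun_prop) (fun x hx => ⟨hts, hx⟩)
    exact (this.mono hsub).aestronglyMeasurable measurableSet_uIoc
  · exact .of_forall fun x hx r hr => hB (r, x) ⟨hr, hsub hx⟩
  · exact intervalIntegrable_const
  · exact .of_forall fun x hx r hr => hd r hr x (hsub hx)

lemma aux_leib (f fx : ℝ → ℝ → ℝ) (hf : Continuous f.uncurry) (hfx : Continuous fx.uncurry)
    (hd : ∀ x ξ, HasDerivAt (fun y => f y ξ) (fx x ξ) x) (x : ℝ) (hx : 0 ≤ x) :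
    HasDerivAt (fun y => ∫ ξ in (0:ℝ)..y, f y ξ) (f x x + ∫ ξ in (0:ℝ)..x, fx x ξ) x := by
  have hfs : ∀ y, Continuous (f y) := fun y => hf.comp (f := fun z => (y, z)) (by fun_prop)
  have hfxs : ∀ y, Continuous (fx y) := fun y => hfx.comp (f := fun z => (y, z)) (by fun_prop)
  have h := hasStrictFDerivAt_uncurry_coprod (𝕜 := ℝ) (u := ((x, x) : ℝ × ℝ))
    (f := fun y b => ∫ ξ in (0:ℝ)..b, f y ξ)
    (f₁ := fun y b => ContinuousLinearMap.toSpanSingleton ℝ (∫ ξ in (0:ℝ)..b, fx y ξ))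
    (f₂ := fun y b => ContinuousLinearMap.toSpanSingleton ℝ (f y b)) ?_ ?_ ?_ ?_
  · have h2 := HasFDerivAt.comp_hasDerivAt (f := fun y : ℝ => (y, y)) x h.hasFDerivAt
      ((hasDerivAt_id x).prodMk (hasDerivAt_id x))
    refine HasDerivAt.congr_deriv h2 ?_
    simp [Function.HasUncurry.uncurry, add_comm]
  · have : ∀ᶠ p : ℝ × ℝ in nhds (x, x), True := Filter.univ_mem
    refine this.mono fun p _ => ?_
    have := aux_paramDeriv (fun q ξ => f q ξ) fx (min 0 p.2) (max 0 p.2) p.1 (Icc (p.1 - 1) (p.1 + 1))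
      (Icc_mem_nhds (by linarith) (by linarith)) isCompact_Icc (by simp) 
      (fun r _ => (hfs r).continuousOn) (hfx.continuousOn) (fun r _ ξ _ => hd r ξ)
    rcases le_total 0 p.2 with h0 | h0
    · simp only [h0, min_eq_left, max_eq_right] at this
      exact this.hasFDerivAt
    · simp only [h0, min_eq_right, max_eq_left] at this
      have h5 : HasDerivAt (fun q => -∫ x in p.2..0, f q x) (-∫ x in p.2..0, fx p.1 x) p.1 := this.neg
      simp only [← intervalIntegral.integral_symm] at h5
      exact h5.hasFDerivAt
  · refine Filter.Eventually.of_forall fun p => ?_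
    exact (intervalIntegral.integral_hasDerivAt_right ((hfs _).intervalIntegrable _ _)
      ((hfs _).stronglyMeasurableAtFilter _ _) (hfs _).continuousAt).hasFDerivAt
  · have : Continuous fun p : ℝ × ℝ => ∫ ξ in (0:ℝ)..p.2, fx p.1 ξ :=
      intervalIntegral.continuous_parametric_primitive_of_continuous hfx
    have h3 := (ContinuousLinearMap.toSpanSingletonCLE (𝕜 := ℝ) (E := ℝ)).continuous.comp this
    exact h3.continuousAt
  · have h3 := (ContinuousLinearMap.toSpanSingletonCLE (𝕜 := ℝ) (E := ℝ)).continuous.comp hf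
    exact h3.continuousAt

abbrev Tri : Set (ℝ × ℝ) := {p : ℝ × ℝ | 0 ≤ p.2 ∧ p.2 ≤ p.1 ∧ p.1 ≤ 1}

def clT (p : ℝ × ℝ) : ℝ × ℝ := (max (max 0 (min p.2 1)) (min p.1 1), max 0 (min p.2 1))

lemma clT_cont : Continuous clT := by unfold clT; fun_prop

lemma clT_mem (p : ℝ × ℝ) : clT p ∈ Tri := by
  refine ⟨le_max_left _ _, le_max_left _ _, ?_⟩
  simp [clT]

lemma clT_eq {p : ℝ × ℝ} (hp : p ∈ Tri) : clT p = p := by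
  obtain ⟨h1, h2, h3⟩ := hp
  have h4 : p.2 ≤ 1 := h2.trans h3
  simp [clT, h1, h2, h3, h4]

lemma clT_extend {E : Type*} [TopologicalSpace E] {f : ℝ × ℝ → E} (hf : ContinuousOn f Tri) :
    Continuous (fun p => f (clT p)) := hf.comp_continuous clT_cont clT_mem

lemma aux_leib_tri (K Kx : ℝ → ℝ → ℝ)
    (hK : ContinuousOn (fun p : ℝ × ℝ => K p.1 p.2) Tri)
    (hKx : ContinuousOn (fun p : ℝ × ℝ => Kx p.1 p.2) Tri)
    (hd : ∀ x ξ : ℝ, 0 ≤ ξ → ξ ≤ x → x ≤ 1 →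
      HasDerivWithinAt (fun y => K y ξ) (Kx x ξ) (Icc ξ 1) x) (x : ℝ) (hx : x ∈ Ioo (0:ℝ) 1) :
    HasDerivAt (fun y => ∫ ξ in (0:ℝ)..y, K y ξ) (K x x + ∫ ξ in (0:ℝ)..x, Kx x ξ) x := by
  have hk := clT_extend hK
  have hkx := clT_extend hKx
  set kx : ℝ → ℝ → ℝ := fun z ξ => Kx (clT (z, ξ)).1 (clT (z, ξ)).2 with hkxdef
  have hkxc : ∀ ξ, Continuous (fun z => kx z ξ) := fun ξ =>
    hkx.comp (f := fun z => (z, ξ)) (by fun_prop)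
  set f : ℝ → ℝ → ℝ := fun y ξ => K (clT (ξ, ξ)).1 (clT (ξ, ξ)).2 + ∫ z in ξ..y, kx z ξ with hfdef
  have hfeq : ∀ y ξ, (y, ξ) ∈ Tri → f y ξ = K y ξ := by
    intro y ξ h
    have h' := h
    obtain ⟨h1, h2, h3⟩ := h'
    replace h1 : 0 ≤ ξ := h1
    replace h2 : ξ ≤ y := h2
    replace h3 : y ≤ 1 := h3
    have e1 : clT (ξ, ξ) = (ξ, ξ) := clT_eq ⟨h1, le_rfl, h2.trans h3⟩
    have e2 : ∫ z in ξ..y, kx z ξ = K y ξ - K ξ ξ := by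
      refine intervalIntegral.integral_eq_sub_of_hasDerivAt_of_le (f := fun z => K z ξ) h2 ?_ ?_ ((hkxc ξ).intervalIntegrable _ _)
      · exact hK.comp (f := fun z => (z, ξ)) (by fun_prop) (fun z hz => ⟨h1, hz.1, hz.2.trans h3⟩)
      · intro z hz
        have e3 : clT (z, ξ) = (z, ξ) := clT_eq ⟨h1, hz.1.le, hz.2.le.trans h3⟩
        simp only [hkxdef, e3]
        exact (hd z ξ h1 hz.1.le (hz.2.le.trans h3)).hasDerivAt
          (Icc_mem_nhds hz.1 (hz.2.trans_le h3))
    simp only [hfdef, e1, e2]; ring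
  have hfc : Continuous f.uncurry := by
    have c1 : Continuous fun p : ℝ × ℝ => K (clT (p.2, p.2)).1 (clT (p.2, p.2)).2 :=
      hk.comp (f := fun p : ℝ × ℝ => (p.2, p.2)) (by fun_prop)
    have c2 : Continuous fun q : ℝ × ℝ => ∫ z in (0:ℝ)..q.2, kx z q.1 :=
      intervalIntegral.continuous_parametric_primitive_of_continuous (f := fun ξ z => kx z ξ)
        (hkx.comp (f := fun p : ℝ × ℝ => (p.2, p.1)) (by fun_prop))
    have c3 : Continuous fun p : ℝ × ℝ => K (clT (p.2, p.2)).1 (clT (p.2, p.2)).2 +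
        ((∫ z in (0:ℝ)..p.1, kx z p.2) - ∫ z in (0:ℝ)..p.2, kx z p.2) :=
      c1.add ((c2.comp (f := fun p : ℝ × ℝ => (p.2, p.1)) (by fun_prop)).sub
        (c2.comp (f := fun p : ℝ × ℝ => (p.2, p.2)) (by fun_prop)))
    convert c3 using 1
    ext ⟨y, ξ⟩
    simp only [Function.uncurry, hfdef]
    rw [intervalIntegral.integral_interval_sub_left ((hkxc ξ).intervalIntegrable _ _)
      ((hkxc ξ).intervalIntegrable _ _)]
  have hder := aux_leib f kx hfc hkx (fun y ξ => by
    simp only [hfdef]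
    exact ((intervalIntegral.integral_hasDerivAt_right ((hkxc ξ).intervalIntegrable _ _)
      ((hkxc ξ).stronglyMeasurableAtFilter _ _) (hkxc ξ).continuousAt)).const_add _) x hx.1.le
  have e4 : f x x = K x x := hfeq x x ⟨hx.1.le, le_rfl, hx.2.le⟩
  have e5 : ∫ ξ in (0:ℝ)..x, kx x ξ = ∫ ξ in (0:ℝ)..x, Kx x ξ := by
    refine intervalIntegral.integral_congr fun ξ hξ => ?_
    rw [uIcc_of_le hx.1.le] at hξ
    have e3 : clT (x, ξ) = (x, ξ) := clT_eq ⟨hξ.1, hξ.2, hx.2.le⟩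
    simp only [hkxdef, e3]
  rw [e4, e5] at hder
  refine hder.congr_of_eventuallyEq ?_
  filter_upwards [Ioo_mem_nhds hx.1 hx.2] with y hy
  refine intervalIntegral.integral_congr fun ξ hξ => ?_
  rw [uIcc_of_le hy.1.le] at hξ
  exact (hfeq y ξ ⟨hξ.1, hξ.2, hy.2.le⟩).symm

lemma aux_tri_cont {X : Type*} [TopologicalSpace X] {S : Set X} (K : X → ℝ → ℝ → ℝ)
    (hK : ContinuousOn (fun p : X × (ℝ × ℝ) => K p.1 p.2.1 p.2.2) (S ×ˢ Tri)) :
    ContinuousOn (fun p : X × ℝ => ∫ ξ in (0:ℝ)..p.2, K p.1 p.2 ξ) (S ×ˢ Icc 0 1) := by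
  rw [continuousOn_iff_continuous_domRestrict]
  have h1 : Continuous (fun q : (S ×ˢ Icc (0:ℝ) 1 : Set (X × ℝ)) × ℝ =>
      K q.1.1.1 (clT (q.1.1.2, q.2)).1 (clT (q.1.1.2, q.2)).2) := by
    have := hK.comp_continuous (f := fun q : (S ×ˢ Icc (0:ℝ) 1 : Set (X × ℝ)) × ℝ =>
      (q.1.1.1, clT (q.1.1.2, q.2))) (by have := clT_cont; fun_prop)
      (fun q => ⟨q.1.2.1, clT_mem _⟩)
    exact this
  have h2 := intervalIntegral.continuous_parametric_intervalIntegral_of_continuous (a₀ := 0)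
    (f := fun (q : (S ×ˢ Icc (0:ℝ) 1 : Set (X × ℝ))) ξ => K q.1.1 (clT (q.1.2, ξ)).1 (clT (q.1.2, ξ)).2)
    (μ := volume) h1 (s := fun q => q.1.2) (by fun_prop)
  convert h2 using 1
  ext ⟨q, hq⟩
  refine intervalIntegral.integral_congr fun ξ hξ => ?_
  rw [uIcc_of_le hq.2.1] at hξ
  have e3 : clT (q.2, ξ) = (q.2, ξ) := clT_eq ⟨hξ.1, hξ.2, hq.2.2⟩
  simp only [e3]


lemma aux_transport (f fx F lam ft : ℝ → ℝ) (σ ε δ lo : ℝ) (hδ : ε * σ = δ) (hlo : 0 < lo)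
    (hlam : ∀ x ∈ Icc (0:ℝ) 1, lo ≤ lam x) (hlamc : ContinuousOn lam (Icc 0 1))
    (hf : ContinuousOn f (Icc 0 1)) (hfx : ContinuousOn fx (Icc 0 1)) (hF : ContinuousOn F (Icc 0 1))
    (hd : ∀ x ∈ Ioo (0:ℝ) 1, HasDerivAt f (fx x) x)
    (hft : ∀ x ∈ Icc (0:ℝ) 1, ft x = ε * (lam x * fx x) + F x) :
    ∫ x in (0:ℝ)..1, 2 * (exp (σ * x) / lam x) * f x * ft x ≤
      ε * (exp σ * f 1 ^ 2 - f 0 ^ 2) - (δ - 1) * (∫ x in (0:ℝ)..1, exp (σ * x) * f x ^ 2)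
        + 1 / lo ^ 2 * ∫ x in (0:ℝ)..1, exp (σ * x) * F x ^ 2 := by
  have hlam0 : ∀ x ∈ Icc (0:ℝ) 1, lam x ≠ 0 := fun x hx => (hlo.trans_le (hlam x hx)).ne'
  have he : ContinuousOn (fun x => exp (σ * x)) (Icc (0:ℝ) 1) := by fun_prop
  have h1 : ∫ x in (0:ℝ)..1, (σ * exp (σ * x) * f x ^ 2 + exp (σ * x) * (2 * f x * fx x))
      = exp σ * f 1 ^ 2 - f 0 ^ 2 := by
    have := intervalIntegral.integral_eq_sub_of_hasDerivAt_of_le (a := 0) (b := 1)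
      (f := fun x => exp (σ * x) * f x ^ 2)
      (f' := fun x => (σ * exp (σ * x) * f x ^ 2 + exp (σ * x) * (2 * f x * fx x))) zero_le_one
      (he.mul (hf.pow 2)) ?_ (ContinuousOn.intervalIntegrable_of_Icc zero_le_one (by fun_prop))
    · rw [this]; simp
    · intro x hx
      have e1 : HasDerivAt (fun x => exp (σ * x)) (σ * exp (σ * x)) x := by
        have := ((hasDerivAt_id x).const_mul σ).exp
        simpa [mul_comm] using this
      have e2 := e1.mul ((hd x hx).pow 2)
      refine e2.congr_deriv ?_
      simp
  have i1 : IntervalIntegrable (fun x => (σ * exp (σ * x) * f x ^ 2 + exp (σ * x) * (2 * f x * fx x)))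
      volume 0 1 := ContinuousOn.intervalIntegrable_of_Icc zero_le_one (by fun_prop)
  have i2 : IntervalIntegrable (fun x => exp (σ * x) * f x ^ 2) volume 0 1 :=
    ContinuousOn.intervalIntegrable_of_Icc zero_le_one (by fun_prop)
  have i3 : IntervalIntegrable (fun x => exp (σ * x) * F x ^ 2) volume 0 1 :=
    ContinuousOn.intervalIntegrable_of_Icc zero_le_one (by fun_prop)
  have h2 : ∫ x in (0:ℝ)..1, (ε * (σ * exp (σ * x) * f x ^ 2 + exp (σ * x) * (2 * f x * fx x))
      - (δ - 1) * (exp (σ * x) * f x ^ 2) + 1 / lo ^ 2 * (exp (σ * x) * F x ^ 2)) =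
      ε * (exp σ * f 1 ^ 2 - f 0 ^ 2) - (δ - 1) * (∫ x in (0:ℝ)..1, exp (σ * x) * f x ^ 2)
        + 1 / lo ^ 2 * ∫ x in (0:ℝ)..1, exp (σ * x) * F x ^ 2 := by
    rw [intervalIntegral.integral_add ((i1.const_mul _).sub (i2.const_mul _)) (i3.const_mul _),
      intervalIntegral.integral_sub (i1.const_mul _) (i2.const_mul _)]
    simp only [intervalIntegral.integral_const_mul, h1]
  rw [← h2]
  have hdiv : ContinuousOn (fun x => exp (σ * x) / lam x) (Icc (0:ℝ) 1) := he.div hlamc hlam0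
  refine intervalIntegral.integral_mono_on zero_le_one ?_
    (((i1.const_mul _).sub (i2.const_mul _)).add (i3.const_mul _)) ?_
  · have : ContinuousOn (fun x => 2 * (exp (σ * x) / lam x) * f x * (ε * (lam x * fx x) + F x)) (Icc 0 1) := by
      fun_prop
    refine ContinuousOn.intervalIntegrable_of_Icc zero_le_one (this.congr fun x hx => ?_)
    simp only [hft x hx]
  · intro x hx
    rw [hft x hx]
    have hp : 0 < exp (σ * x) := exp_pos _
    have hl := hlam x hx
    have hl0 : 0 < lam x := hlo.trans_le hl
    have k1 : 2 * (exp (σ * x) / lam x) * f x * (ε * (lam x * fx x) + F x)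
        = ε * (exp (σ * x) * (2 * f x * fx x)) + exp (σ * x) * (2 * f x * (F x / lam x)) := by
      field_simp
    have k2 : (F x / lam x) ^ 2 ≤ 1 / lo ^ 2 * F x ^ 2 := by
      rw [div_pow, div_eq_mul_one_div, mul_comm]
      gcongr
    have k3 : 2 * f x * (F x / lam x) ≤ f x ^ 2 + 1 / lo ^ 2 * F x ^ 2 := by
      nlinarith [sq_nonneg (f x - F x / lam x)]
    have k4 := mul_le_mul_of_nonneg_left k3 hp.le
    rw [k1, ← hδ]
    nlinarith

lemma aux_prim {g : ℝ → ℝ} (hg : ContinuousOn g (Icc 0 1)) :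
    ContinuousOn (fun x => ∫ ξ in (0:ℝ)..x, g ξ) (Icc 0 1) := by
  have := intervalIntegral.continuousOn_primitive_interval' (a := 0)
    (hg.intervalIntegrable_of_Icc zero_le_one (μ := volume)) (by simp)
  rwa [uIcc_of_le zero_le_one] at this

lemma aux_volterra (g : ℝ → ℝ) (hg : ContinuousOn g (Icc 0 1)) (hg0 : ∀ x ∈ Icc (0:ℝ) 1, 0 ≤ g x)
    (δ : ℝ) (hδ : 0 < δ) :
    ∫ x in (0:ℝ)..1, exp (-δ * x) * (∫ ξ in (0:ℝ)..x, g ξ) ≤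
      1 / δ * ∫ x in (0:ℝ)..1, exp (-δ * x) * g x := by
  have hP : ContinuousOn (fun x => ∫ ξ in (0:ℝ)..x, g ξ) (Icc 0 1) := by
    exact aux_prim hg
  have i1 : IntervalIntegrable (fun x => exp (-δ * x) * g x) volume 0 1 :=
    ContinuousOn.intervalIntegrable_of_Icc zero_le_one (by fun_prop)
  have i2 : IntervalIntegrable (fun x => exp (-δ * x) * (∫ ξ in (0:ℝ)..x, g ξ)) volume 0 1 :=
    ContinuousOn.intervalIntegrable_of_Icc zero_le_one (by fun_prop)
  have h := intervalIntegral.integral_eq_sub_of_hasDerivAt_of_le (a := 0) (b := 1)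
      (f := fun x => exp (-δ * x) * ∫ ξ in (0:ℝ)..x, g ξ)
      (f' := fun x => -δ * (exp (-δ * x) * (∫ ξ in (0:ℝ)..x, g ξ)) + exp (-δ * x) * g x) zero_le_one
      (by fun_prop) ?_ ((i2.const_mul _).add i1)
  · rw [intervalIntegral.integral_add (i2.const_mul _) i1, intervalIntegral.integral_const_mul] at h
    have h3 : 0 ≤ exp (-δ * 1) * ∫ ξ in (0:ℝ)..1, g ξ :=
      mul_nonneg (exp_pos _).le (intervalIntegral.integral_nonneg zero_le_one hg0)
    simp only [intervalIntegral.integral_same, mul_zero, sub_zero] at h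
    rw [one_div, inv_mul_eq_div, le_div_iff₀ hδ]
    linarith
  · intro x hx
    have e1 : HasDerivAt (fun x => exp (-δ * x)) (-δ * exp (-δ * x)) x := by
      have := ((hasDerivAt_id x).const_mul (-δ)).exp
      simpa [mul_comm] using this
    have e0 : Icc (0:ℝ) 1 ∈ nhds x := Icc_mem_nhds hx.1 hx.2
    have e2 : HasDerivAt (fun x => ∫ ξ in (0:ℝ)..x, g ξ) (g x) x := by
      refine intervalIntegral.integral_hasDerivAt_right ?_ ?_ (hg.continuousAt e0)
      · exact (hg.mono (Icc_subset_Icc_right hx.2.le)).intervalIntegrable_of_Icc hx.1.le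
      · exact ⟨Icc 0 1, e0, hg.aestronglyMeasurable measurableSet_Icc⟩
    refine (e1.mul e2).congr_deriv ?_
    ring

lemma aux_CS (h : ℝ → ℝ) (x : ℝ) (hx : x ∈ Icc (0:ℝ) 1) (hh : ContinuousOn h (Icc 0 x)) :
    (∫ ξ in (0:ℝ)..x, h ξ) ^ 2 ≤ ∫ ξ in (0:ℝ)..x, h ξ ^ 2 := by
  set I := ∫ ξ in (0:ℝ)..x, h ξ with hI
  have i1 : IntervalIntegrable h volume 0 x := hh.intervalIntegrable_of_Icc hx.1
  have i2 : IntervalIntegrable (fun ξ => h ξ ^ 2) volume 0 x := (hh.pow 2).intervalIntegrable_of_Icc hx.1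
  have h0 : 0 ≤ ∫ ξ in (0:ℝ)..x, (h ξ ^ 2 - 2 * I * h ξ + I ^ 2) :=
    intervalIntegral.integral_nonneg hx.1 fun ξ _ => by nlinarith [sq_nonneg (h ξ - I)]
  rw [intervalIntegral.integral_add (i2.sub (i1.const_mul _)) intervalIntegrable_const,
    intervalIntegral.integral_sub i2 (i1.const_mul _), intervalIntegral.integral_const_mul,
    intervalIntegral.integral_const, ← hI] at h0
  simp only [sub_zero, smul_eq_mul] at h0
  nlinarith [sq_nonneg I, hx.2]

lemma aux_int_cont (f : ℝ → ℝ → ℝ)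
    (hf : ContinuousOn (fun p : ℝ × ℝ => f p.1 p.2) (Ici 0 ×ˢ Icc 0 1)) :
    ContinuousOn (fun t => ∫ x in (0:ℝ)..1, f t x) (Ici 0) := by
  have := aux_tri_cont (S := Ici (0:ℝ)) (fun t _ ξ => f t ξ)
    (hf.comp (f := fun p : ℝ × (ℝ × ℝ) => (p.1, p.2.2)) (by fun_prop)
      (fun p hp => ⟨hp.1, hp.2.1, hp.2.2.1.trans hp.2.2.2⟩))
  exact this.comp (f := fun t => (t, (1:ℝ))) (by fun_prop) (fun t ht => ⟨ht, by simp⟩)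

/-- weights -/
lemma aux_weights (m : ℕ) (C : ℝ) (hC : 0 ≤ C) :
    ∃ q : Fin m → ℝ, ∀ k, 1 ≤ q k ∧ 1 + C * ∑ j, (if k < j then q j else 0) ≤ q k := by
  induction m with
  | zero => exact ⟨fun _ => 1, fun k => k.elim0⟩
  | succ m ih =>
    obtain ⟨q, hq⟩ := ih
    have hs : 0 ≤ ∑ j, q j := Finset.sum_nonneg fun j _ => by linarith [(hq j).1]
    refine ⟨Fin.cons (1 + C * ∑ j, q j) q, fun k => ?_⟩
    refine Fin.cases ?_ (fun k => ?_) k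
    · simp [Fin.sum_univ_succ]
      positivity
    · simpa [Fin.sum_univ_succ] using hq k

lemma aux_static (gu gv gb : ℝ → ℝ) (C δ : ℝ) (hC : 0 < C) (hδ : 4 * C ≤ δ)
    (hu : ContinuousOn gu (Icc 0 1)) (hv : ContinuousOn gv (Icc 0 1)) (hb : ContinuousOn gb (Icc 0 1))
    (hu0 : ∀ x, 0 ≤ gu x) (hv0 : ∀ x, 0 ≤ gv x)
    (h1 : ∀ x ∈ Icc (0:ℝ) 1, gv x ≤ 2 * gb x + 2 * (C * ∫ ξ in (0:ℝ)..x, (gu ξ + gv ξ))) :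
    ∫ x in (0:ℝ)..1, exp (-δ * x) * gv x ≤
      4 * (∫ x in (0:ℝ)..1, exp (-δ * x) * gb x) + ∫ x in (0:ℝ)..1, exp (-δ * x) * gu x := by
  have hδ0 : 0 < δ := by linarith
  have hV := aux_volterra (fun x => gu x + gv x) (hu.add hv) (fun x _ => add_nonneg (hu0 x) (hv0 x)) δ hδ0
  have hP : ContinuousOn (fun x => ∫ ξ in (0:ℝ)..x, (gu ξ + gv ξ)) (Icc 0 1) := by
    exact aux_prim (hu.add hv)
  have iu : IntervalIntegrable (fun x => exp (-δ * x) * gu x) volume 0 1 :=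
    ContinuousOn.intervalIntegrable_of_Icc zero_le_one (by fun_prop)
  have iv : IntervalIntegrable (fun x => exp (-δ * x) * gv x) volume 0 1 :=
    ContinuousOn.intervalIntegrable_of_Icc zero_le_one (by fun_prop)
  have ib : IntervalIntegrable (fun x => exp (-δ * x) * gb x) volume 0 1 :=
    ContinuousOn.intervalIntegrable_of_Icc zero_le_one (by fun_prop)
  have iP : IntervalIntegrable (fun x => exp (-δ * x) * ∫ ξ in (0:ℝ)..x, (gu ξ + gv ξ)) volume 0 1 :=
    ContinuousOn.intervalIntegrable_of_Icc zero_le_one (by fun_prop)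
  have e1 : ∫ x in (0:ℝ)..1, exp (-δ * x) * (gu x + gv x) =
      (∫ x in (0:ℝ)..1, exp (-δ * x) * gu x) + ∫ x in (0:ℝ)..1, exp (-δ * x) * gv x := by
    rw [← intervalIntegral.integral_add iu iv]; simp only [mul_add]
  have e2 : ∫ x in (0:ℝ)..1, exp (-δ * x) * gv x ≤ 2 * (∫ x in (0:ℝ)..1, exp (-δ * x) * gb x) +
      2 * C * ∫ x in (0:ℝ)..1, exp (-δ * x) * (∫ ξ in (0:ℝ)..x, (gu ξ + gv ξ)) := by
    rw [← intervalIntegral.integral_const_mul, ← intervalIntegral.integral_const_mul,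
      ← intervalIntegral.integral_add (ib.const_mul _) (iP.const_mul _)]
    refine intervalIntegral.integral_mono_on zero_le_one iv ((ib.const_mul _).add (iP.const_mul _)) ?_
    intro x hx
    have := mul_le_mul_of_nonneg_left (h1 x hx) (exp_pos (-δ * x)).le
    linarith
  have hU : 0 ≤ ∫ x in (0:ℝ)..1, exp (-δ * x) * gu x :=
    intervalIntegral.integral_nonneg zero_le_one fun x _ => mul_nonneg (exp_pos _).le (hu0 x)
  have hV0 : 0 ≤ ∫ x in (0:ℝ)..1, exp (-δ * x) * gv x :=
    intervalIntegral.integral_nonneg zero_le_one fun x _ => mul_nonneg (exp_pos _).le (hv0 x)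
  rw [e1] at hV
  have e3 : 2 * C * (1 / δ * ((∫ x in (0:ℝ)..1, exp (-δ * x) * gu x) +
      ∫ x in (0:ℝ)..1, exp (-δ * x) * gv x)) ≤ 1 / 2 * ((∫ x in (0:ℝ)..1, exp (-δ * x) * gu x) +
      ∫ x in (0:ℝ)..1, exp (-δ * x) * gv x) := by
    rw [← mul_assoc]
    refine mul_le_mul_of_nonneg_right ?_ (by positivity)
    rw [mul_one_div, div_le_div_iff₀ hδ0 two_pos]; linarith
  have e4 := mul_le_mul_of_nonneg_left hV (by positivity : 0 ≤ 2 * C)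
  linarith


lemma aux_int_sum {n : ℕ} (w : ℝ → ℝ) (hw : ContinuousOn w (Icc 0 1)) (u : Fin n → ℝ → ℝ)
    (hu : ∀ i, ContinuousOn (u i) (Icc 0 1)) :
    ∫ x in (0:ℝ)..1, w x * ∑ i, u i x = ∑ i, ∫ x in (0:ℝ)..1, w x * u i x := by
  simp only [Finset.mul_sum]
  rw [intervalIntegral.integral_finsetSum]
  intro i _
  exact (hw.mul (hu i)).intervalIntegrable_of_Icc zero_le_one

lemma aux_dissipation {n m : ℕ} (lo C δ p : ℝ) (hlo : 0 < lo) (hC : 0 < C)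
    (hδ : δ = 2 + 2 * C / lo ^ 2 + 4 * C) (hp : p = C + 8 * C / lo ^ 2 + 1)
    (q : Fin m → ℝ) (hq : ∀ k, 1 ≤ q k ∧
      1 + (C / lo ^ 2 * exp δ) * ∑ j, (if k < j then q j else 0) ≤ q k)
    (lr : Fin n → ℝ → ℝ) (ll : Fin m → ℝ → ℝ)
    (hlrc : ∀ i, ContinuousOn (lr i) (Icc 0 1)) (hllc : ∀ i, ContinuousOn (ll i) (Icc 0 1))
    (hlr : ∀ i, ∀ x ∈ Icc (0:ℝ) 1, lo ≤ lr i x) (hll : ∀ i, ∀ x ∈ Icc (0:ℝ) 1, lo ≤ ll i x)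
    (u ut ux F : Fin n → ℝ → ℝ) (v b bt bx D : Fin m → ℝ → ℝ)
    (cu : ∀ i, ContinuousOn (u i) (Icc 0 1)) (cux : ∀ i, ContinuousOn (ux i) (Icc 0 1))
    (cF : ∀ i, ContinuousOn (F i) (Icc 0 1)) (cv : ∀ i, ContinuousOn (v i) (Icc 0 1))
    (cb : ∀ i, ContinuousOn (b i) (Icc 0 1)) (cbx : ∀ i, ContinuousOn (bx i) (Icc 0 1))
    (cD : ∀ i, ContinuousOn (D i) (Icc 0 1))
    (du : ∀ i, ∀ x ∈ Ioo (0:ℝ) 1, HasDerivAt (u i) (ux i x) x)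
    (db : ∀ i, ∀ x ∈ Ioo (0:ℝ) 1, HasDerivAt (b i) (bx i x) x)
    (eu : ∀ i, ∀ x ∈ Icc (0:ℝ) 1, ut i x = -(lr i x * ux i x) + F i x)
    (eb : ∀ i, ∀ x ∈ Icc (0:ℝ) 1, bt i x = ll i x * bx i x + D i x)
    (hF : ∀ x ∈ Icc (0:ℝ) 1, ∑ i, F i x ^ 2 ≤ C * (∑ i, u i x ^ 2 + ∑ j, v j x ^ 2))
    (hD : ∀ j, ∀ x ∈ Icc (0:ℝ) 1, D j x ^ 2 ≤ C * ∑ k, if k < j then v k 0 ^ 2 else 0)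
    (hu0 : ∑ i, u i 0 ^ 2 ≤ C * ∑ j, v j 0 ^ 2) (hb0 : ∀ j, b j 0 = v j 0) (hb1 : ∀ j, b j 1 = 0)
    (hvol : ∀ x ∈ Icc (0:ℝ) 1, ∑ j, (v j x - b j x) ^ 2 ≤
      C * ∫ ξ in (0:ℝ)..x, (∑ i, u i ξ ^ 2 + ∑ j, v j ξ ^ 2)) :
    (∑ i, ∫ x in (0:ℝ)..1, 2 * (exp (-δ * x) / lr i x) * u i x * ut i x) +
      (∑ j, p * q j * ∫ x in (0:ℝ)..1, 2 * (exp (δ * x) / ll j x) * b j x * bt j x) ≤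
    -(lo / 2) * ((∑ i, ∫ x in (0:ℝ)..1, (exp (-δ * x) / lr i x) * u i x ^ 2) +
      (∑ j, p * q j * ∫ x in (0:ℝ)..1, (exp (δ * x) / ll j x) * b j x ^ 2)) := by
  have hCl : 0 < C / lo ^ 2 := by positivity
  have hCl2 : 2 * C / lo ^ 2 = 2 * (C / lo ^ 2) := by ring
  have hCl8 : 8 * C / lo ^ 2 = 8 * (C / lo ^ 2) := by ring
  rw [hCl2] at hδ
  rw [hCl8] at hp
  set L := C / lo ^ 2 with hL
  have hp0 : 0 < p := by rw [hp]; positivity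
  have hδ0 : 0 < δ := by rw [hδ]; positivity
  have ce : ∀ σ : ℝ, ContinuousOn (fun x => exp (σ * x)) (Icc (0:ℝ) 1) := fun σ => by fun_prop
  have cgu : ContinuousOn (fun x => ∑ i, u i x ^ 2) (Icc 0 1) :=
    continuousOn_finsetSum _ fun i _ => (cu i).pow 2
  have cgv : ContinuousOn (fun x => ∑ i, v i x ^ 2) (Icc 0 1) :=
    continuousOn_finsetSum _ fun i _ => (cv i).pow 2
  have cgb : ContinuousOn (fun x => ∑ i, b i x ^ 2) (Icc 0 1) :=
    continuousOn_finsetSum _ fun i _ => (cb i).pow 2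
  have cgF : ContinuousOn (fun x => ∑ i, F i x ^ 2) (Icc 0 1) :=
    continuousOn_finsetSum _ fun i _ => (cF i).pow 2
  set U : Fin n → ℝ := fun i => ∫ x in (0:ℝ)..1, exp (-δ * x) * u i x ^ 2 with hU
  set B : Fin m → ℝ := fun j => ∫ x in (0:ℝ)..1, exp (δ * x) * b j x ^ 2 with hB
  set W : ℝ := ∫ x in (0:ℝ)..1, exp (-δ * x) * ∑ j, v j x ^ 2 with hW
  have hU0 : ∀ i, 0 ≤ U i := fun i =>
    intervalIntegral.integral_nonneg zero_le_one fun x _ => by positivity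
  have hB0 : ∀ i, 0 ≤ B i := fun i =>
    intervalIntegral.integral_nonneg zero_le_one fun x _ => by positivity
  have hUs : ∫ x in (0:ℝ)..1, exp (-δ * x) * ∑ i, u i x ^ 2 = ∑ i, U i :=
    aux_int_sum _ (ce _) (fun i x => u i x ^ 2) fun i => (cu i).pow 2
  -- static estimate
  have hstat : W ≤ 4 * (∑ j, B j) + ∑ i, U i := by
    have h1 := aux_static (fun x => ∑ i, u i x ^ 2) (fun x => ∑ i, v i x ^ 2)
      (fun x => ∑ i, b i x ^ 2) C δ hC (by linarith) cgu cgv cgb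
      (fun x => by positivity) (fun x => by positivity) (by
        intro x hx
        have h2 := hvol x hx
        have h3 : ∑ j, v j x ^ 2 ≤ ∑ j, (2 * b j x ^ 2 + 2 * (v j x - b j x) ^ 2) :=
          Finset.sum_le_sum fun j _ => by nlinarith [sq_nonneg (v j x - 2 * b j x)]
        rw [Finset.sum_add_distrib, ← Finset.mul_sum, ← Finset.mul_sum] at h3
        linarith)
    rw [hUs] at h1
    have h4 : ∫ x in (0:ℝ)..1, exp (-δ * x) * ∑ j, b j x ^ 2 ≤ ∑ j, B j := by
      rw [aux_int_sum _ (ce _) (fun i x => b i x ^ 2) fun i => (cb i).pow 2]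
      refine Finset.sum_le_sum fun j _ => ?_
      refine intervalIntegral.integral_mono_on zero_le_one ?_ ?_ ?_
      · exact ((ce _).mul ((cb j).pow 2)).intervalIntegrable_of_Icc zero_le_one
      · exact ((ce _).mul ((cb j).pow 2)).intervalIntegrable_of_Icc zero_le_one
      · intro x hx
        have : exp (-δ * x) ≤ exp (δ * x) := exp_le_exp.2 (by nlinarith [hx.1])
        gcongr
    linarith
  -- u part
  have hA : (∑ i, ∫ x in (0:ℝ)..1, 2 * (exp (-δ * x) / lr i x) * u i x * ut i x) ≤
      C * (∑ j, v j 0 ^ 2) - (δ - 1) * (∑ i, U i) + L * ((∑ i, U i) + W) := by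
    have h1 : ∀ i, ∫ x in (0:ℝ)..1, 2 * (exp (-δ * x) / lr i x) * u i x * ut i x ≤
        u i 0 ^ 2 - (δ - 1) * U i + 1 / lo ^ 2 * ∫ x in (0:ℝ)..1, exp (-δ * x) * F i x ^ 2 := by
      intro i
      have := aux_transport (u i) (ux i) (F i) (lr i) (ut i) (-δ) (-1) δ lo (by ring) hlo (hlr i)
        (hlrc i) (cu i) (cux i) (cF i) (du i) (fun x hx => by rw [eu i x hx]; ring)
      have h2 : 0 ≤ exp (-δ) * u i 1 ^ 2 := by positivity
      linarith
    have h2 := Finset.sum_le_sum fun i (_ : i ∈ Finset.univ) => h1 i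
    rw [Finset.sum_add_distrib, Finset.sum_sub_distrib, ← Finset.mul_sum, ← Finset.mul_sum,
      ← aux_int_sum _ (ce _) (fun i x => F i x ^ 2) fun i => (cF i).pow 2] at h2
    have h3 : ∫ x in (0:ℝ)..1, exp (-δ * x) * ∑ i, F i x ^ 2 ≤ C * ((∑ i, U i) + W) := by
      rw [← hUs, hW, ← intervalIntegral.integral_add, ← intervalIntegral.integral_const_mul]
      · refine intervalIntegral.integral_mono_on zero_le_one ?_ ?_ ?_
        · exact ((ce _).mul cgF).intervalIntegrable_of_Icc zero_le_one
        · exact (ContinuousOn.const_mul (((ce _).mul cgu).add ((ce _).mul cgv)) C).intervalIntegrable_of_Icc zero_le_one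
        · intro x hx
          have := mul_le_mul_of_nonneg_left (hF x hx) (exp_pos (-δ * x)).le
          linarith
      · exact ((ce _).mul cgu).intervalIntegrable_of_Icc zero_le_one
      · exact ((ce _).mul cgv).intervalIntegrable_of_Icc zero_le_one
    have h4 : 1 / lo ^ 2 * (∫ x in (0:ℝ)..1, exp (-δ * x) * ∑ i, F i x ^ 2) ≤ L * ((∑ i, U i) + W) := by
      have := mul_le_mul_of_nonneg_left h3 (by positivity : 0 ≤ 1 / lo ^ 2)
      calc _ ≤ _ := this
        _ = _ := by rw [hL]; ring
    linarith
  -- b part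
  have hBb : ∀ j, ∫ x in (0:ℝ)..1, 2 * (exp (δ * x) / ll j x) * b j x * bt j x ≤
      -(v j 0 ^ 2) - (δ - 1) * B j + L * exp δ * ∑ k, if k < j then v k 0 ^ 2 else 0 := by
    intro j
    have h1 := aux_transport (b j) (bx j) (D j) (ll j) (bt j) δ 1 δ lo (by ring) hlo (hll j)
      (hllc j) (cb j) (cbx j) (cD j) (db j) (fun x hx => by rw [eb j x hx]; ring)
    rw [hb1, hb0] at h1
    have hs : 0 ≤ ∑ k, if k < j then v k 0 ^ 2 else 0 :=
      Finset.sum_nonneg fun k _ => by split_ifs <;> positivity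
    have h2 : ∫ x in (0:ℝ)..1, exp (δ * x) * D j x ^ 2 ≤
        exp δ * (C * ∑ k, if k < j then v k 0 ^ 2 else 0) := by
      have : ∫ x in (0:ℝ)..1, exp (δ * x) * D j x ^ 2 ≤
        ∫ x in (0:ℝ)..1, exp δ * (C * ∑ k, if k < j then v k 0 ^ 2 else 0) := by
        refine intervalIntegral.integral_mono_on zero_le_one ?_ intervalIntegrable_const ?_
        · exact ((ce _).mul ((cD j).pow 2)).intervalIntegrable_of_Icc zero_le_one
        · intro x hx
          have e1 : exp (δ * x) ≤ exp δ := exp_le_exp.2 (by nlinarith [hx.2])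
          exact mul_le_mul e1 (hD j x hx) (sq_nonneg _) (exp_pos _).le
      simpa using this
    have h4 := mul_le_mul_of_nonneg_left h2 (by positivity : 0 ≤ 1 / lo ^ 2)
    have h5 : 1 / lo ^ 2 * (exp δ * (C * ∑ k, if k < j then v k 0 ^ 2 else 0)) =
      L * exp δ * ∑ k, if k < j then v k 0 ^ 2 else 0 := by rw [hL]; ring
    linarith
  have hBs : (∑ j, p * q j * ∫ x in (0:ℝ)..1, 2 * (exp (δ * x) / ll j x) * b j x * bt j x) ≤
      -p * (∑ j, v j 0 ^ 2) - (δ - 1) * (∑ j, p * q j * B j) := by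
    have h1 : (∑ j, p * q j * ∫ x in (0:ℝ)..1, 2 * (exp (δ * x) / ll j x) * b j x * bt j x) ≤
        ∑ j, p * q j * (-(v j 0 ^ 2) - (δ - 1) * B j +
          L * exp δ * ∑ k, if k < j then v k 0 ^ 2 else 0) :=
      Finset.sum_le_sum fun j _ => mul_le_mul_of_nonneg_left (hBb j)
        (mul_nonneg hp0.le (by linarith [(hq j).1]))
    have h2 : ∑ j, p * q j * (-(v j 0 ^ 2) - (δ - 1) * B j +
          L * exp δ * ∑ k, if k < j then v k 0 ^ 2 else 0) =
        -p * (∑ j, q j * v j 0 ^ 2) - (δ - 1) * (∑ j, p * q j * B j) +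
          p * (∑ j, ∑ k, L * exp δ * if k < j then q j * v k 0 ^ 2 else 0) := by
      simp only [Finset.mul_sum]
      rw [← Finset.sum_sub_distrib, ← Finset.sum_add_distrib]
      refine Finset.sum_congr rfl fun j _ => ?_
      rw [mul_add, Finset.mul_sum]
      congr 1
      · ring
      · refine Finset.sum_congr rfl fun k _ => ?_
        split_ifs <;> ring
    have h3 : ∑ j, ∑ k, L * exp δ * (if k < j then q j * v k 0 ^ 2 else 0) ≤
        ∑ k, (q k - 1) * v k 0 ^ 2 := by
      rw [Finset.sum_comm]
      refine Finset.sum_le_sum fun k _ => ?_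
      have h4 : ∑ j, L * exp δ * (if k < j then q j * v k 0 ^ 2 else 0) =
          (L * exp δ * ∑ j, (if k < j then q j else 0)) * v k 0 ^ 2 := by
        rw [Finset.mul_sum, Finset.sum_mul]
        refine Finset.sum_congr rfl fun j _ => ?_
        split_ifs <;> ring
      rw [h4]
      exact mul_le_mul_of_nonneg_right (by linarith [(hq k).2]) (sq_nonneg _)
    have h5 : ∑ k, (q k - 1) * v k 0 ^ 2 = ∑ j, q j * v j 0 ^ 2 - ∑ j, v j 0 ^ 2 := by
      rw [← Finset.sum_sub_distrib]
      exact Finset.sum_congr rfl fun j _ => by ring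
    have h6 := mul_le_mul_of_nonneg_left (h3.trans h5.le) hp0.le
    linarith
  -- upper bounds for V
  have hVu : (∑ i, ∫ x in (0:ℝ)..1, (exp (-δ * x) / lr i x) * u i x ^ 2) ≤ 1 / lo * ∑ i, U i := by
    rw [Finset.mul_sum]
    refine Finset.sum_le_sum fun i _ => ?_
    rw [← intervalIntegral.integral_const_mul]
    refine intervalIntegral.integral_mono_on zero_le_one ?_ ?_ ?_
    · exact (((ce _).div (hlrc i) fun x hx => (hlo.trans_le (hlr i x hx)).ne').mul
        ((cu i).pow 2)).intervalIntegrable_of_Icc zero_le_one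
    · exact (ContinuousOn.const_mul ((ce _).mul ((cu i).pow 2)) _).intervalIntegrable_of_Icc zero_le_one
    · intro x hx
      have := hlr i x hx
      have e1 : exp (-δ * x) / lr i x ≤ exp (-δ * x) / lo := by gcongr
      have := mul_le_mul_of_nonneg_right e1 (sq_nonneg (u i x))
      calc _ ≤ _ := this
        _ = _ := by ring
  have hVb : (∑ j, p * q j * ∫ x in (0:ℝ)..1, (exp (δ * x) / ll j x) * b j x ^ 2) ≤
      1 / lo * ∑ j, p * q j * B j := by
    rw [Finset.mul_sum]
    refine Finset.sum_le_sum fun i _ => ?_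
    have : ∫ x in (0:ℝ)..1, (exp (δ * x) / ll i x) * b i x ^ 2 ≤ 1 / lo * B i := by
      rw [← intervalIntegral.integral_const_mul]
      refine intervalIntegral.integral_mono_on zero_le_one ?_ ?_ ?_
      · exact (((ce _).div (hllc i) fun x hx => (hlo.trans_le (hll i x hx)).ne').mul
          ((cb i).pow 2)).intervalIntegrable_of_Icc zero_le_one
      · exact (ContinuousOn.const_mul ((ce _).mul ((cb i).pow 2)) _).intervalIntegrable_of_Icc zero_le_one
      · intro x hx
        have := hll i x hx
        have e1 : exp (δ * x) / ll i x ≤ exp (δ * x) / lo := by gcongr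
        have := mul_le_mul_of_nonneg_right e1 (sq_nonneg (b i x))
        calc _ ≤ _ := this
          _ = _ := by ring
    have := mul_le_mul_of_nonneg_left this (mul_nonneg hp0.le (by linarith [(hq i).1]) : 0 ≤ p * q i)
    linarith
  have hQB : p * (∑ j, B j) ≤ ∑ j, p * q j * B j := by
    rw [Finset.mul_sum]
    refine Finset.sum_le_sum fun j _ => ?_
    have := mul_nonneg (mul_nonneg hp0.le (by linarith [(hq j).1] : 0 ≤ q j - 1)) (hB0 j)
    linarith
  have hUs0 : 0 ≤ ∑ i, U i := Finset.sum_nonneg fun i _ => hU0 i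
  have hBs0 : 0 ≤ ∑ i, B i := Finset.sum_nonneg fun i _ => hB0 i
  have hv0 : 0 ≤ ∑ j, v j 0 ^ 2 := by positivity
  have hQB0 : 0 ≤ ∑ j, p * q j * B j := (mul_nonneg hp0.le hBs0).trans hQB
  set SU := ∑ i, U i
  set SB := ∑ i, B i
  set SQ := ∑ j, p * q j * B j
  set s := ∑ j, v j 0 ^ 2
  have f1 : -(lo / 2) * ((∑ i, ∫ x in (0:ℝ)..1, (exp (-δ * x) / lr i x) * u i x ^ 2) +
      (∑ j, p * q j * ∫ x in (0:ℝ)..1, (exp (δ * x) / ll j x) * b j x ^ 2)) ≥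
      -(1 / 2) * (SU + SQ) := by
    have := mul_le_mul_of_nonneg_left (add_le_add hVu hVb) (by positivity : 0 ≤ lo / 2)
    have e : lo / 2 * (1 / lo * SU + 1 / lo * SQ) = 1 / 2 * (SU + SQ) := by field_simp
    linarith
  have f2 : L * W ≤ L * (4 * SB + SU) := mul_le_mul_of_nonneg_left hstat hCl.le
  have f3 : C * s ≤ p * s := mul_le_mul_of_nonneg_right (by rw [hp]; linarith) hv0
  have f4 : (1 + 2 * L) * SU ≤ (δ - 1) * SU := mul_le_mul_of_nonneg_right (by linarith) hUs0
  have f5 : SQ ≤ (δ - 1) * SQ := le_mul_of_one_le_left hQB0 (by linarith)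
  have f6 : 8 * L * SB ≤ p * SB := mul_le_mul_of_nonneg_right (by linarith) hBs0
  linarith


/-- The Lyapunov functional is equivalent to the squared norm. -/
lemma aux_equiv {n m : ℕ} (lo hi C δ p : ℝ) (hlo : 0 < lo) (hhi : 0 < hi) (hC : 0 < C)
    (hδ : 4 * C ≤ δ) (hp : 1 ≤ p)
    (q : Fin m → ℝ) (hq : ∀ k, 1 ≤ q k)
    (lr : Fin n → ℝ → ℝ) (ll : Fin m → ℝ → ℝ)
    (hlrc : ∀ i, ContinuousOn (lr i) (Icc 0 1)) (hllc : ∀ i, ContinuousOn (ll i) (Icc 0 1))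
    (hlr : ∀ i, ∀ x ∈ Icc (0:ℝ) 1, lo ≤ lr i x ∧ lr i x ≤ hi)
    (hll : ∀ i, ∀ x ∈ Icc (0:ℝ) 1, lo ≤ ll i x ∧ ll i x ≤ hi)
    (u : Fin n → ℝ → ℝ) (v b : Fin m → ℝ → ℝ)
    (cu : ∀ i, ContinuousOn (u i) (Icc 0 1)) (cv : ∀ i, ContinuousOn (v i) (Icc 0 1))
    (cb : ∀ i, ContinuousOn (b i) (Icc 0 1))
    (hvol : ∀ x ∈ Icc (0:ℝ) 1, ∑ j, (v j x - b j x) ^ 2 ≤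
      C * ∫ ξ in (0:ℝ)..x, (∑ i, u i ξ ^ 2 + ∑ j, v j ξ ^ 2)) :
    (∫ x in (0:ℝ)..1, (∑ i, u i x ^ 2 + ∑ j, v j x ^ 2)) ≤
      4 * exp δ * hi * ((∑ i, ∫ x in (0:ℝ)..1, (exp (-δ * x) / lr i x) * u i x ^ 2) +
      (∑ j, p * q j * ∫ x in (0:ℝ)..1, (exp (δ * x) / ll j x) * b j x ^ 2)) ∧
    ((∑ i, ∫ x in (0:ℝ)..1, (exp (-δ * x) / lr i x) * u i x ^ 2) +
      (∑ j, p * q j * ∫ x in (0:ℝ)..1, (exp (δ * x) / ll j x) * b j x ^ 2)) ≤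
      1 / lo * (1 + p * (∑ j, q j) * exp δ * (2 + 2 * C)) *
        ∫ x in (0:ℝ)..1, (∑ i, u i x ^ 2 + ∑ j, v j x ^ 2) := by
  have hδ0 : 0 < δ := by linarith
  have ce : ∀ σ : ℝ, ContinuousOn (fun x => exp (σ * x)) (Icc (0:ℝ) 1) := fun σ => by fun_prop
  have cgu : ContinuousOn (fun x => ∑ i, u i x ^ 2) (Icc 0 1) :=
    continuousOn_finsetSum _ fun i _ => (cu i).pow 2
  have cgv : ContinuousOn (fun x => ∑ i, v i x ^ 2) (Icc 0 1) :=
    continuousOn_finsetSum _ fun i _ => (cv i).pow 2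
  have cgb : ContinuousOn (fun x => ∑ i, b i x ^ 2) (Icc 0 1) :=
    continuousOn_finsetSum _ fun i _ => (cb i).pow 2
  have one_sum : ∀ {k : ℕ} (f : Fin k → ℝ → ℝ) (_ : ∀ i, ContinuousOn (f i) (Icc 0 1)),
      ∫ x in (0:ℝ)..1, ∑ i, f i x ^ 2 = ∑ i, ∫ x in (0:ℝ)..1, f i x ^ 2 := by
    intro k f hf
    have := aux_int_sum (fun _ => 1) continuousOn_const (fun i x => f i x ^ 2) fun i => (hf i).pow 2
    simpa using this
  have II : ∀ {f : ℝ → ℝ}, ContinuousOn f (Icc 0 1) → IntervalIntegrable f volume 0 1 :=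
    fun hf => hf.intervalIntegrable_of_Icc zero_le_one
  have cwr : ∀ i, ContinuousOn (fun x => exp (-δ * x) / lr i x) (Icc 0 1) := fun i =>
    (ce _).div (hlrc i) fun x hx => (hlo.trans_le (hlr i x hx).1).ne'
  have cwl : ∀ i, ContinuousOn (fun x => exp (δ * x) / ll i x) (Icc 0 1) := fun i =>
    (ce _).div (hllc i) fun x hx => (hlo.trans_le (hll i x hx).1).ne'
  have hN : ∫ x in (0:ℝ)..1, (∑ i, u i x ^ 2 + ∑ j, v j x ^ 2) =
      (∫ x in (0:ℝ)..1, ∑ i, u i x ^ 2) + ∫ x in (0:ℝ)..1, ∑ j, v j x ^ 2 :=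
    intervalIntegral.integral_add (II cgu) (II cgv)
  constructor
  · -- lower bound
    have hstat := aux_static (fun x => ∑ i, u i x ^ 2) (fun x => ∑ i, v i x ^ 2)
      (fun x => ∑ i, b i x ^ 2) C δ hC (by linarith) cgu cgv cgb
      (fun x => by positivity) (fun x => by positivity) (by
        intro x hx
        have h2 := hvol x hx
        have h3 : ∑ j, v j x ^ 2 ≤ ∑ j, (2 * b j x ^ 2 + 2 * (v j x - b j x) ^ 2) :=
          Finset.sum_le_sum fun j _ => by nlinarith [sq_nonneg (v j x - 2 * b j x)]
        rw [Finset.sum_add_distrib, ← Finset.mul_sum, ← Finset.mul_sum] at h3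
        linarith)
    have key : ∀ g : ℝ → ℝ, ContinuousOn g (Icc 0 1) → (∀ x, 0 ≤ g x) →
        ∫ x in (0:ℝ)..1, g x ≤ exp δ * ∫ x in (0:ℝ)..1, exp (-δ * x) * g x := by
      intro g hg hg0
      rw [← intervalIntegral.integral_const_mul]
      refine intervalIntegral.integral_mono_on zero_le_one (II hg)
        ((II ((ce _).mul hg)).const_mul _) fun x hx => ?_
      rw [← mul_assoc, ← exp_add]
      exact le_mul_of_one_le_left (hg0 x) (one_le_exp (by nlinarith [hx.2]))
    have k1 := key _ cgu (fun x => by positivity)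
    have k2 := key _ cgv (fun x => by positivity)
    have hVu : 1 / hi * (∫ x in (0:ℝ)..1, exp (-δ * x) * ∑ i, u i x ^ 2) ≤
        ∑ i, ∫ x in (0:ℝ)..1, (exp (-δ * x) / lr i x) * u i x ^ 2 := by
      rw [aux_int_sum _ (ce _) (fun i x => u i x ^ 2) fun i => (cu i).pow 2, Finset.mul_sum]
      refine Finset.sum_le_sum fun i _ => ?_
      rw [← intervalIntegral.integral_const_mul]
      refine intervalIntegral.integral_mono_on zero_le_one
        ((II ((ce _).mul ((cu i).pow 2))).const_mul _) (II ((cwr i).mul ((cu i).pow 2))) fun x hx => ?_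
      have h1 := hlr i x hx
      have h0 : 0 < lr i x := hlo.trans_le h1.1
      have e1 : exp (-δ * x) / hi ≤ exp (-δ * x) / lr i x := by gcongr; exact h1.2
      have := mul_le_mul_of_nonneg_right e1 (sq_nonneg (u i x))
      calc _ = exp (-δ * x) / hi * u i x ^ 2 := by ring
        _ ≤ _ := this
    have hVb : 1 / hi * (∫ x in (0:ℝ)..1, exp (-δ * x) * ∑ i, b i x ^ 2) ≤
        ∑ j, p * q j * ∫ x in (0:ℝ)..1, (exp (δ * x) / ll j x) * b j x ^ 2 := by
      rw [aux_int_sum _ (ce _) (fun i x => b i x ^ 2) fun i => (cb i).pow 2, Finset.mul_sum]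
      refine Finset.sum_le_sum fun i _ => ?_
      have hnn : 0 ≤ ∫ x in (0:ℝ)..1, (exp (δ * x) / ll i x) * b i x ^ 2 :=
        intervalIntegral.integral_nonneg zero_le_one fun x hx => by
          have : 0 < ll i x := hlo.trans_le (hll i x hx).1
          positivity
      have hpq : 1 ≤ p * q i := by nlinarith [hq i]
      refine le_trans ?_ (le_mul_of_one_le_left hnn hpq)
      rw [← intervalIntegral.integral_const_mul]
      refine intervalIntegral.integral_mono_on zero_le_one
        ((II ((ce _).mul ((cb i).pow 2))).const_mul _) (II ((cwl i).mul ((cb i).pow 2))) fun x hx => ?_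
      have h1 := hll i x hx
      have h0 : 0 < ll i x := hlo.trans_le h1.1
      have h2 : exp (-δ * x) ≤ exp (δ * x) := exp_le_exp.2 (by nlinarith [hx.1])
      have e1 : exp (-δ * x) / hi ≤ exp (δ * x) / ll i x := by gcongr; exact h1.2
      have := mul_le_mul_of_nonneg_right e1 (sq_nonneg (b i x))
      calc _ = exp (-δ * x) / hi * b i x ^ 2 := by ring
        _ ≤ _ := this
    have hU0 : 0 ≤ ∫ x in (0:ℝ)..1, exp (-δ * x) * ∑ i, u i x ^ 2 :=
      intervalIntegral.integral_nonneg zero_le_one fun x _ => by positivity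
    rw [hN]
    set U := ∫ x in (0:ℝ)..1, exp (-δ * x) * ∑ i, u i x ^ 2
    set Bt := ∫ x in (0:ℝ)..1, exp (-δ * x) * ∑ i, b i x ^ 2
    set W := ∫ x in (0:ℝ)..1, exp (-δ * x) * ∑ i, v i x ^ 2
    calc _ ≤ exp δ * U + exp δ * W := add_le_add k1 k2
      _ ≤ exp δ * U + exp δ * (4 * Bt + U) := by gcongr
      _ ≤ 4 * exp δ * (U + Bt) := by nlinarith [exp_pos δ]
      _ = 4 * exp δ * hi * (1 / hi * U + 1 / hi * Bt) := by field_simp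
      _ ≤ _ := mul_le_mul_of_nonneg_left (add_le_add hVu hVb) (by positivity)
  · -- upper bound
    have hVu : (∑ i, ∫ x in (0:ℝ)..1, (exp (-δ * x) / lr i x) * u i x ^ 2) ≤
        1 / lo * ∫ x in (0:ℝ)..1, ∑ i, u i x ^ 2 := by
      rw [one_sum u cu, Finset.mul_sum]
      refine Finset.sum_le_sum fun i _ => ?_
      rw [← intervalIntegral.integral_const_mul]
      refine intervalIntegral.integral_mono_on zero_le_one (II ((cwr i).mul ((cu i).pow 2)))
        ((II ((cu i).pow 2)).const_mul _) fun x hx => ?_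
      have h1 := hlr i x hx
      have e2 : exp (-δ * x) ≤ 1 := exp_le_one_iff.2 (by nlinarith [hx.1])
      have e1 : exp (-δ * x) / lr i x ≤ 1 / lo := by gcongr; exact h1.1
      exact mul_le_mul_of_nonneg_right e1 (sq_nonneg (u i x))
    have hVb : (∑ j, p * q j * ∫ x in (0:ℝ)..1, (exp (δ * x) / ll j x) * b j x ^ 2) ≤
        p * (∑ j, q j) * (exp δ / lo) * ∫ x in (0:ℝ)..1, ∑ i, b i x ^ 2 := by
      rw [one_sum b cb, Finset.mul_sum]
      refine Finset.sum_le_sum fun i _ => ?_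
      have h1 : ∫ x in (0:ℝ)..1, (exp (δ * x) / ll i x) * b i x ^ 2 ≤
          exp δ / lo * ∫ x in (0:ℝ)..1, b i x ^ 2 := by
        rw [← intervalIntegral.integral_const_mul]
        refine intervalIntegral.integral_mono_on zero_le_one (II ((cwl i).mul ((cb i).pow 2)))
          ((II ((cb i).pow 2)).const_mul _) fun x hx => ?_
        have h1 := hll i x hx
        have e2 : exp (δ * x) ≤ exp δ := exp_le_exp.2 (by nlinarith [hx.2])
        have e1 : exp (δ * x) / ll i x ≤ exp δ / lo := by gcongr; exact h1.1
        exact mul_le_mul_of_nonneg_right e1 (sq_nonneg (b i x))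
      have h2 : q i ≤ ∑ j, q j :=
        Finset.single_le_sum (f := q) (fun j _ => by linarith [hq j]) (Finset.mem_univ i)
      have h3 : 0 ≤ ∫ x in (0:ℝ)..1, b i x ^ 2 :=
        intervalIntegral.integral_nonneg zero_le_one fun x _ => sq_nonneg _
      have h4 : 0 ≤ q i := by linarith [hq i]
      calc _ ≤ p * q i * (exp δ / lo * ∫ x in (0:ℝ)..1, b i x ^ 2) := by gcongr
        _ ≤ p * (∑ j, q j) * (exp δ / lo * ∫ x in (0:ℝ)..1, b i x ^ 2) := by gcongr
        _ = _ := by ring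
    set N := ∫ x in (0:ℝ)..1, (∑ i, u i x ^ 2 + ∑ j, v j x ^ 2) with hNdef
    have hgu0 : 0 ≤ ∫ x in (0:ℝ)..1, ∑ i, u i x ^ 2 :=
      intervalIntegral.integral_nonneg zero_le_one fun x _ => by positivity
    have hgv0 : 0 ≤ ∫ x in (0:ℝ)..1, ∑ i, v i x ^ 2 :=
      intervalIntegral.integral_nonneg zero_le_one fun x _ => by positivity
    have hbN : ∫ x in (0:ℝ)..1, ∑ i, b i x ^ 2 ≤ (2 + 2 * C) * N := by
      have : ∫ x in (0:ℝ)..1, ∑ i, b i x ^ 2 ≤ ∫ x in (0:ℝ)..1, (2 * (∑ j, v j x ^ 2) + 2 * (C * N)) := by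
        refine intervalIntegral.integral_mono_on zero_le_one (II cgb)
          (((II cgv).const_mul 2).add intervalIntegrable_const) fun x hx => ?_
        have h2 := hvol x hx
        have h3 : ∑ j, b j x ^ 2 ≤ ∑ j, (2 * v j x ^ 2 + 2 * (v j x - b j x) ^ 2) :=
          Finset.sum_le_sum fun j _ => by nlinarith [sq_nonneg (2 * v j x - b j x)]
        rw [Finset.sum_add_distrib, ← Finset.mul_sum, ← Finset.mul_sum] at h3
        have h4 : ∫ ξ in (0:ℝ)..x, (∑ i, u i ξ ^ 2 + ∑ j, v j ξ ^ 2) ≤ N := by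
          refine intervalIntegral.integral_mono_interval le_rfl hx.1 hx.2 ?_ (II (cgu.add cgv))
          exact Filter.Eventually.of_forall fun x => by
            simp only [Pi.zero_apply]
            positivity
        have h5 := mul_le_mul_of_nonneg_left h4 hC.le
        linarith
      rw [intervalIntegral.integral_add ((II cgv).const_mul 2) intervalIntegrable_const,
        intervalIntegral.integral_const_mul] at this
      simp only [intervalIntegral.integral_const, sub_zero, one_smul] at this
      nlinarith
    have hQ : 0 ≤ ∑ j, q j := Finset.sum_nonneg fun j _ => by linarith [hq j]
    calc _ ≤ _ := add_le_add hVu hVb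
      _ ≤ 1 / lo * N + p * (∑ j, q j) * (exp δ / lo) * ((2 + 2 * C) * N) := by
        gcongr
        linarith
      _ = _ := by ring

lemma aux_gronwall (V V' : ℝ → ℝ) (c : ℝ) (hV : ContinuousOn V (Ici 0))
    (hd : ∀ t, 0 < t → HasDerivAt V (V' t) t) (hle : ∀ t, 0 < t → V' t ≤ -c * V t) :
    ∀ t ∈ Ici (0:ℝ), V t ≤ exp (-c * t) * V 0 := by
  intro t ht
  have hd2 : ∀ t, 0 < t → HasDerivAt (fun s => exp (c * s) * V s)
      (exp (c * t) * (c * V t + V' t)) t := by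
    intro t ht
    have e1 : HasDerivAt (fun x => exp (c * x)) (c * exp (c * t)) t := by
      have := ((hasDerivAt_id t).const_mul c).exp
      simpa [mul_comm] using this
    refine (e1.mul (hd t ht)).congr_deriv ?_
    ring
  have hanti : AntitoneOn (fun s => exp (c * s) * V s) (Ici 0) := by
    refine antitoneOn_of_deriv_nonpos (convex_Ici 0) (by fun_prop) ?_ ?_
    · intro s hs
      rw [interior_Ici] at hs
      exact (hd2 s hs).differentiableAt.differentiableWithinAt
    · intro s hs
      rw [interior_Ici] at hs
      rw [(hd2 s hs).deriv]
      exact mul_nonpos_of_nonneg_of_nonpos (exp_pos _).le (by linarith [hle s hs])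
  have h := hanti ((Set.mem_Ici.2 le_rfl)) ht ht
  simp only [mul_zero, exp_zero, one_mul] at h
  calc V t = exp (-c * t) * (exp (c * t) * V t) := by
        rw [← mul_assoc, ← exp_add]; simp
    _ ≤ _ := mul_le_mul_of_nonneg_left h (exp_pos _).le

theorem core_stability (n m : ℕ) (lo hi C : ℝ) (hlo : 0 < lo) (hhi : 0 < hi) (hC : 0 < C)
    (lr : Fin n → ℝ → ℝ) (ll : Fin m → ℝ → ℝ)
    (hlrc : ∀ i, ContinuousOn (lr i) (Icc 0 1)) (hllc : ∀ i, ContinuousOn (ll i) (Icc 0 1))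
    (hlr : ∀ i, ∀ x ∈ Icc (0:ℝ) 1, lo ≤ lr i x ∧ lr i x ≤ hi)
    (hll : ∀ i, ∀ x ∈ Icc (0:ℝ) 1, lo ≤ ll i x ∧ ll i x ≤ hi) :
    ∃ K c : ℝ, 1 ≤ K ∧ 0 < c ∧
    ∀ (u ut ux F : Fin n → ℝ → ℝ → ℝ) (v b bt bx D : Fin m → ℝ → ℝ → ℝ)
    (_ : ∀ i, ContinuousOn (fun p : ℝ × ℝ => u i p.1 p.2) (Ici 0 ×ˢ Icc 0 1))
    (_ : ∀ i, ContinuousOn (fun p : ℝ × ℝ => ut i p.1 p.2) (Ici 0 ×ˢ Icc 0 1))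
    (_ : ∀ i, ContinuousOn (fun p : ℝ × ℝ => v i p.1 p.2) (Ici 0 ×ˢ Icc 0 1))
    (_ : ∀ i, ContinuousOn (fun p : ℝ × ℝ => b i p.1 p.2) (Ici 0 ×ˢ Icc 0 1))
    (_ : ∀ i, ContinuousOn (fun p : ℝ × ℝ => bt i p.1 p.2) (Ici 0 ×ˢ Icc 0 1))
    (_ : ∀ t, 0 < t → ∀ i, ContinuousOn (ux i t) (Icc 0 1))
    (_ : ∀ t, 0 < t → ∀ i, ContinuousOn (F i t) (Icc 0 1))
    (_ : ∀ t, 0 < t → ∀ i, ContinuousOn (bx i t) (Icc 0 1))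
    (_ : ∀ t, 0 < t → ∀ i, ContinuousOn (D i t) (Icc 0 1))
    (_ : ∀ t, 0 < t → ∀ i, ∀ x ∈ Icc (0:ℝ) 1, HasDerivAt (fun s => u i s x) (ut i t x) t)
    (_ : ∀ t, 0 < t → ∀ i, ∀ x ∈ Icc (0:ℝ) 1, HasDerivAt (fun s => b i s x) (bt i t x) t)
    (_ : ∀ t, 0 < t → ∀ i, ∀ x ∈ Ioo (0:ℝ) 1, HasDerivAt (u i t) (ux i t x) x)
    (_ : ∀ t, 0 < t → ∀ i, ∀ x ∈ Ioo (0:ℝ) 1, HasDerivAt (b i t) (bx i t x) x)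
    (_ : ∀ t, 0 < t → ∀ i, ∀ x ∈ Icc (0:ℝ) 1, ut i t x = -(lr i x * ux i t x) + F i t x)
    (_ : ∀ t, 0 < t → ∀ i, ∀ x ∈ Icc (0:ℝ) 1, bt i t x = ll i x * bx i t x + D i t x)
    (_ : ∀ t, 0 < t → ∀ x ∈ Icc (0:ℝ) 1,
      ∑ i, F i t x ^ 2 ≤ C * (∑ i, u i t x ^ 2 + ∑ j, v j t x ^ 2))
    (_ : ∀ t, 0 < t → ∀ j, ∀ x ∈ Icc (0:ℝ) 1,
      D j t x ^ 2 ≤ C * ∑ k, if k < j then v k t 0 ^ 2 else 0)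
    (_ : ∀ t, 0 < t → ∑ i, u i t 0 ^ 2 ≤ C * ∑ j, v j t 0 ^ 2)
    (_ : ∀ t, 0 < t → ∀ j, b j t 0 = v j t 0) (_ : ∀ t, 0 < t → ∀ j, b j t 1 = 0)
    (_ : ∀ t, 0 ≤ t → ∀ x ∈ Icc (0:ℝ) 1, ∑ j, (v j t x - b j t x) ^ 2 ≤
      C * ∫ ξ in (0:ℝ)..x, (∑ i, u i t ξ ^ 2 + ∑ j, v j t ξ ^ 2)),
    ∀ t ∈ Ici (0:ℝ),
      sqrt (∫ x in (0:ℝ)..1, (∑ i, u i t x ^ 2 + ∑ j, v j t x ^ 2)) ≤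
        K * exp (-c * t) * sqrt (∫ x in (0:ℝ)..1, (∑ i, u i 0 x ^ 2 + ∑ j, v j 0 x ^ 2)) := by
  obtain ⟨δ, hδ⟩ : ∃ δ : ℝ, δ = 2 + 2 * C / lo ^ 2 + 4 * C := ⟨_, rfl⟩
  obtain ⟨p, hp⟩ : ∃ p : ℝ, p = C + 8 * C / lo ^ 2 + 1 := ⟨_, rfl⟩
  obtain ⟨q, hq⟩ := aux_weights m (C / lo ^ 2 * exp δ) (by positivity)
  have hQ : 0 ≤ ∑ j, q j := Finset.sum_nonneg fun j _ => by linarith [(hq j).1]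
  have hδ4 : 4 * C ≤ δ := by
    have : 0 < 2 * C / lo ^ 2 := by positivity
    linarith
  have hp1 : 1 ≤ p := by
    have : 0 < 8 * C / lo ^ 2 := by positivity
    linarith
  have hp0 : 0 < p := by linarith
  set K0 : ℝ := 4 * exp δ * hi * (1 / lo * (1 + p * (∑ j, q j) * exp δ * (2 + 2 * C))) with hK0
  have hK00 : 0 ≤ K0 := by positivity
  refine ⟨1 + sqrt K0, lo / 4, by linarith [sqrt_nonneg K0], by positivity, ?_⟩
  intro u ut ux F v b bt bx D cu cut cv cb cbt cux cF cbx cD dut dbt dux dbx eu eb hF hD hu0 hb0 hb1 hvol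
  have sl : ∀ {f : ℝ → ℝ → ℝ}, ContinuousOn (fun p : ℝ × ℝ => f p.1 p.2) (Ici 0 ×ˢ Icc 0 1) →
      ∀ t, 0 ≤ t → ContinuousOn (f t) (Icc 0 1) := fun hf t ht =>
    hf.comp (f := fun x => (t, x)) (by fun_prop) (fun x hx => ⟨ht, hx⟩)
  set V : ℝ → ℝ := fun t => (∑ i, ∫ x in (0:ℝ)..1, (exp (-δ * x) / lr i x) * u i t x ^ 2) +
      (∑ j, p * q j * ∫ x in (0:ℝ)..1, (exp (δ * x) / ll j x) * b j t x ^ 2) with hVdef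
  set V' : ℝ → ℝ := fun t =>
    (∑ i, ∫ x in (0:ℝ)..1, 2 * (exp (-δ * x) / lr i x) * u i t x * ut i t x) +
      (∑ j, p * q j * ∫ x in (0:ℝ)..1, 2 * (exp (δ * x) / ll j x) * b j t x * bt j t x) with hV'def
  have cw : ∀ (σ : ℝ) (lam : ℝ → ℝ), ContinuousOn lam (Icc 0 1) → (∀ x ∈ Icc (0:ℝ) 1, lo ≤ lam x) →
      ContinuousOn (fun p : ℝ × ℝ => exp (σ * p.2) / lam p.2) (Ici 0 ×ˢ Icc 0 1) := by
    intro σ lam hlam hlam0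
    refine ContinuousOn.div (by fun_prop) ?_ fun p hp => (hlo.trans_le (hlam0 _ hp.2)).ne'
    exact hlam.comp (f := fun p : ℝ × ℝ => p.2) (by fun_prop) (fun p hp => hp.2)
  have main1 : ∀ (σ : ℝ) (lam : ℝ → ℝ), ContinuousOn lam (Icc 0 1) → (∀ x ∈ Icc (0:ℝ) 1, lo ≤ lam x) →
      ∀ f ft : ℝ → ℝ → ℝ, ContinuousOn (fun p : ℝ × ℝ => f p.1 p.2) (Ici 0 ×ˢ Icc 0 1) →
      ContinuousOn (fun p : ℝ × ℝ => ft p.1 p.2) (Ici 0 ×ˢ Icc 0 1) →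
      (∀ t, 0 < t → ∀ x ∈ Icc (0:ℝ) 1, HasDerivAt (fun s => f s x) (ft t x) t) →
      ContinuousOn (fun t => ∫ x in (0:ℝ)..1, (exp (σ * x) / lam x) * f t x ^ 2) (Ici 0) ∧
      ∀ t, 0 < t → HasDerivAt (fun t => ∫ x in (0:ℝ)..1, (exp (σ * x) / lam x) * f t x ^ 2)
        (∫ x in (0:ℝ)..1, 2 * (exp (σ * x) / lam x) * f t x * ft t x) t := by
    intro σ lam hlam hlam0 f ft hf hft hd
    have hw := cw σ lam hlam hlam0
    refine ⟨aux_int_cont (fun t x => (exp (σ * x) / lam x) * f t x ^ 2) (hw.mul (hf.pow 2)), ?_⟩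
    intro t ht
    have hsub : Icc (t / 2) (t + 1) ×ˢ Icc (0:ℝ) 1 ⊆ Ici 0 ×ˢ Icc 0 1 := by
      rintro ⟨r, x⟩ ⟨h1, h2⟩
      exact ⟨le_trans (by positivity) h1.1, h2⟩
    refine aux_paramDeriv (fun t x => (exp (σ * x) / lam x) * f t x ^ 2)
      (fun t x => 2 * (exp (σ * x) / lam x) * f t x * ft t x) 0 1 t (Icc (t / 2) (t + 1))
      (Icc_mem_nhds (by linarith) (by linarith)) isCompact_Icc zero_le_one ?_ ?_ ?_
    · intro r hr
      exact sl (f := fun t x => (exp (σ * x) / lam x) * f t x ^ 2) (hw.mul (hf.pow 2)) r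
        (le_trans (by positivity) hr.1)
    · exact (((ContinuousOn.const_mul hw 2).mul hf).mul hft).mono hsub
    · intro r hr x hx
      have hr0 : 0 < r := lt_of_lt_of_le (by positivity) hr.1
      refine (((hd r hr0 x hx).pow 2).const_mul (exp (σ * x) / lam x)).congr_deriv ?_
      simp
      ring
  have mu := fun i => main1 (-δ) (lr i) (hlrc i) (fun x hx => (hlr i x hx).1) (u i) (ut i) (cu i) (cut i)
    (fun t ht x hx => dut t ht i x hx)
  have mb := fun j => main1 δ (ll j) (hllc j) (fun x hx => (hll j x hx).1) (b j) (bt j) (cb j) (cbt j)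
    (fun t ht x hx => dbt t ht j x hx)
  have hVc : ContinuousOn V (Ici 0) :=
    (continuousOn_finsetSum _ fun i _ => (mu i).1).add
      (continuousOn_finsetSum _ fun j _ => ContinuousOn.const_mul (mb j).1 (p * q j))
  have hVd : ∀ t, 0 < t → HasDerivAt V (V' t) t := by
    intro t ht
    have h1 := HasDerivAt.fun_sum (u := Finset.univ) fun i (_ : i ∈ Finset.univ) => (mu i).2 t ht
    have h2 := HasDerivAt.fun_sum (u := Finset.univ) fun j (_ : j ∈ Finset.univ) =>
      ((mb j).2 t ht).const_mul (p * q j)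
    exact h1.add h2
  have hle : ∀ t, 0 < t → V' t ≤ -(lo / 2) * V t := by
    intro t ht
    exact aux_dissipation lo C δ p hlo hC hδ hp q hq lr ll hlrc hllc (fun i x hx => (hlr i x hx).1)
      (fun i x hx => (hll i x hx).1) (fun i => u i t) (fun i => ut i t) (fun i => ux i t) (fun i => F i t)
      (fun i => v i t) (fun i => b i t) (fun i => bt i t) (fun i => bx i t) (fun i => D i t)
      (fun i => sl (cu i) t ht.le) (cux t ht) (cF t ht) (fun i => sl (cv i) t ht.le)
      (fun i => sl (cb i) t ht.le) (cbx t ht) (cD t ht) (dux t ht) (dbx t ht) (eu t ht) (eb t ht)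
      (hF t ht) (hD t ht) (hu0 t ht) (hb0 t ht) (hb1 t ht) (hvol t ht.le)
  intro t ht
  have hg := aux_gronwall V V' (lo / 2) hVc hVd hle t ht
  have heq := fun s (hs : 0 ≤ s) => aux_equiv lo hi C δ p hlo hhi hC hδ4 hp1 q (fun k => (hq k).1) lr ll
    hlrc hllc hlr hll (fun i => u i s) (fun i => v i s) (fun i => b i s) (fun i => sl (cu i) s hs)
    (fun i => sl (cv i) s hs) (fun i => sl (cb i) s hs) (hvol s hs)
  have h1 := (heq t ht).1
  have h2 := (heq 0 le_rfl).2
  set N : ℝ → ℝ := fun t => ∫ x in (0:ℝ)..1, (∑ i, u i t x ^ 2 + ∑ j, v j t x ^ 2) with hN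
  have h3 : N t ≤ K0 * (exp (-(lo / 4) * t)) ^ 2 * N 0 := by
    have e : exp (-(lo / 2) * t) = exp (-(lo / 4) * t) ^ 2 := by
      rw [← exp_nat_mul]; congr 1; push_cast; ring
    calc N t ≤ 4 * exp δ * hi * V t := h1
      _ ≤ 4 * exp δ * hi * (exp (-(lo / 2) * t) * V 0) := by gcongr
      _ ≤ 4 * exp δ * hi * (exp (-(lo / 2) * t) *
          (1 / lo * (1 + p * (∑ j, q j) * exp δ * (2 + 2 * C)) * N 0)) := by gcongr
      _ = _ := by rw [hK0, e]; ring
  calc sqrt (N t) ≤ sqrt (K0 * (exp (-(lo / 4) * t)) ^ 2 * N 0) := sqrt_le_sqrt h3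
    _ = sqrt K0 * exp (-(lo / 4) * t) * sqrt (N 0) := by
      rw [sqrt_mul (by positivity), sqrt_mul hK00, sqrt_sq (exp_pos _).le]
    _ ≤ _ := by
      gcongr
      linarith


theorem aux_mat_bound {X : Type*} [TopologicalSpace X] {p q : ℕ} {s : Set X} (hs : IsCompact s)
    (f : X → Matrix (Fin p) (Fin q) ℝ) (hf : ContinuousOn f s) :
    ∃ B : ℝ, 0 ≤ B ∧ ∀ x ∈ s, ∀ i j, |f x i j| ≤ B := by
  have hc : ContinuousOn (fun x => ∑ i, ∑ j, |f x i j|) s := by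
    refine continuousOn_finsetSum _ fun i _ => continuousOn_finsetSum _ fun j _ => ?_
    exact (((continuous_apply j).comp (continuous_apply i)).comp_continuousOn hf).abs
  obtain ⟨B, hB⟩ := hs.exists_bound_of_continuousOn hc
  refine ⟨max B 0, le_max_right _ _, fun x hx i j => ?_⟩
  have h1 := (le_abs_self _).trans (hB x hx)
  have h2 : |f x i j| ≤ ∑ j, |f x i j| :=
    Finset.single_le_sum (f := fun j => |f x i j|) (fun _ _ => abs_nonneg _) (Finset.mem_univ j)
  have h3 : ∑ j, |f x i j| ≤ ∑ i, ∑ j, |f x i j| :=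
    Finset.single_le_sum (f := fun i => ∑ j, |f x i j|)
      (fun _ _ => Finset.sum_nonneg fun _ _ => abs_nonneg _) (Finset.mem_univ i)
  exact (h2.trans (h3.trans h1)).trans (le_max_left _ _)

theorem aux_lin_sq {p : ℕ} (a w : Fin p → ℝ) (B : ℝ) (ha : ∀ i, |a i| ≤ B) :
    (∑ i, a i * w i) ^ 2 ≤ p * B ^ 2 * ∑ i, w i ^ 2 := by
  refine (Finset.sum_mul_sq_le_sq_mul_sq _ _ _).trans ?_
  refine mul_le_mul_of_nonneg_right ?_ (Finset.sum_nonneg fun _ _ => sq_nonneg _)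
  calc ∑ i, a i ^ 2 ≤ ∑ _i : Fin p, B ^ 2 := Finset.sum_le_sum fun i _ => by
        rw [← sq_abs]; exact pow_le_pow_left₀ (abs_nonneg _) (ha i) 2
    _ = p * B ^ 2 := by simp

theorem aux_mulVec_sq {r p q : ℕ} (A : Matrix (Fin r) (Fin p) ℝ) (A' : Matrix (Fin r) (Fin q) ℝ)
    (w : Fin p → ℝ) (z : Fin q → ℝ) (B : ℝ) (hA : ∀ i j, |A i j| ≤ B) (hA' : ∀ i j, |A' i j| ≤ B)
    (i : Fin r) :
    ((A *ᵥ w + A' *ᵥ z) i) ^ 2 ≤ 2 * (p + q) * B ^ 2 * (∑ i, w i ^ 2 + ∑ j, z j ^ 2) := by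
  have h1 := aux_lin_sq (A i) w B (hA i)
  have h2 := aux_lin_sq (A' i) z B (hA' i)
  have hw : 0 ≤ ∑ i, w i ^ 2 := Finset.sum_nonneg fun _ _ => sq_nonneg _
  have hz : 0 ≤ ∑ i, z i ^ 2 := Finset.sum_nonneg fun _ _ => sq_nonneg _
  have hp : (0:ℝ) ≤ p := Nat.cast_nonneg _
  have hq : (0:ℝ) ≤ q := Nat.cast_nonneg _
  have e : (A *ᵥ w + A' *ᵥ z) i = (∑ j, A i j * w j) + ∑ j, A' i j * z j := by
    simp [mulVec, dotProduct]
  rw [e]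
  have h3 := sq_nonneg ((∑ j, A i j * w j) - ∑ j, A' i j * z j)
  have h4 : 0 ≤ (p:ℝ) * B ^ 2 * ∑ j, z j ^ 2 := by positivity
  have h5 : 0 ≤ (q:ℝ) * B ^ 2 * ∑ j, w j ^ 2 := by positivity
  nlinarith

theorem aux_mulVec_cont {X : Type*} [TopologicalSpace X] {r p : ℕ} {s : Set X}
    {A : X → Matrix (Fin r) (Fin p) ℝ} {w : X → Fin p → ℝ} (hA : ContinuousOn A s)
    (hw : ContinuousOn w s) : ContinuousOn (fun x => A x *ᵥ w x) s := by
  refine continuousOn_pi.2 fun i => ?_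
  simp only [mulVec, dotProduct]
  refine continuousOn_finsetSum _ fun j _ => ContinuousOn.mul ?_ ?_
  · exact ((continuous_apply j).comp (continuous_apply i)).comp_continuousOn hA
  · exact (continuous_apply j).comp_continuousOn hw

theorem aux_mulVec_comp_deriv {r p : ℕ} {A : ℝ → Matrix (Fin r) (Fin p) ℝ}
    {A' : Matrix (Fin r) (Fin p) ℝ} {w : ℝ → Fin p → ℝ} {w' : Fin p → ℝ} {s : Set ℝ} {x : ℝ}
    (i : Fin r)
    (hA : ∀ j, HasDerivWithinAt (fun y => A y i j) (A' i j) s x)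
    (hw : ∀ j, HasDerivWithinAt (fun y => w y j) (w' j) s x) :
    HasDerivWithinAt (fun y => (A y *ᵥ w y) i) ((A' *ᵥ w x + A x *ᵥ w') i) s x := by
  have e : (A' *ᵥ w x + A x *ᵥ w') i = ∑ j, (A' i j * w x j + A x i j * w' j) := by
    simp [mulVec, dotProduct, Finset.sum_add_distrib]
  rw [e]
  simp only [mulVec, dotProduct]
  exact HasDerivWithinAt.fun_sum fun j _ => (hA j).mul (hw j)

theorem aux_kernel_identity {n m : ℕ}
    (lr lr' : Fin n → ℝ → ℝ) (ll ll' : Fin m → ℝ → ℝ)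
    (hlr' : ∀ i, ∀ x ∈ Icc (0:ℝ) 1, HasDerivWithinAt (lr i) (lr' i x) (Icc 0 1) x)
    (hll' : ∀ j, ∀ x ∈ Icc (0:ℝ) 1, HasDerivWithinAt (ll j) (ll' j x) (Icc 0 1) x)
    (Sr : ℝ → Matrix (Fin n) (Fin n) ℝ) (Sl : ℝ → Matrix (Fin n) (Fin m) ℝ)
    (So : ℝ → Matrix (Fin m) (Fin n) ℝ)
    (x : ℝ) (hx : x ∈ Icc (0:ℝ) 1)
    (G21 G21x G21xi : ℝ → Matrix (Fin m) (Fin n) ℝ)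
    (G22 G22x G22xi : ℝ → Matrix (Fin m) (Fin m) ℝ)
    (hG21c : ContinuousOn G21 (Icc 0 x)) (hG22c : ContinuousOn G22 (Icc 0 x))
    (hG21xc : ContinuousOn G21x (Icc 0 x)) (hG22xc : ContinuousOn G22x (Icc 0 x))
    (hG21d : ∀ ξ ∈ Icc (0:ℝ) x, ∀ (i : Fin m) (j : Fin n),
      HasDerivWithinAt (fun η => G21 η i j) (G21xi ξ i j) (Icc 0 x) ξ)
    (hG22d : ∀ ξ ∈ Icc (0:ℝ) x, ∀ (i : Fin m) (j : Fin m),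
      HasDerivWithinAt (fun η => G22 η i j) (G22xi ξ i j) (Icc 0 x) ξ)
    (hK1 : ∀ ξ ∈ Icc (0:ℝ) x,
      G21xi ξ * Matrix.diagonal (fun i => lr i ξ)
        - Matrix.diagonal (fun j => ll j x) * G21x ξ
      = -(G21 ξ * Matrix.diagonal fun i => lr' i ξ) - G21 ξ * Sr ξ - G22 ξ * So ξ)
    (hK2 : ∀ ξ ∈ Icc (0:ℝ) x,
      G22xi ξ * Matrix.diagonal (fun j => ll j ξ)
        + Matrix.diagonal (fun j => ll j x) * G22x ξ
      = -(G22 ξ * Matrix.diagonal fun j => ll' j ξ) + G21 ξ * Sl ξ)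
    (u ut ux : ℝ → Fin n → ℝ) (v vt vx : ℝ → Fin m → ℝ)
    (hu : ContinuousOn u (Icc 0 1)) (hut : ContinuousOn ut (Icc 0 1))
    (hv : ContinuousOn v (Icc 0 1)) (hvt : ContinuousOn vt (Icc 0 1))
    (du : ∀ ξ ∈ Icc (0:ℝ) 1, ∀ i, HasDerivWithinAt (fun y => u y i) (ux ξ i) (Icc 0 1) ξ)
    (dv : ∀ ξ ∈ Icc (0:ℝ) 1, ∀ i, HasDerivWithinAt (fun y => v y i) (vx ξ i) (Icc 0 1) ξ)
    (eu : ∀ x ∈ Icc (0:ℝ) 1, ut x + (Matrix.diagonal fun i => lr i x) *ᵥ (ux x)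
            = (Sr x) *ᵥ (u x) + (Sl x) *ᵥ (v x))
    (ev : ∀ x ∈ Icc (0:ℝ) 1, vt x - (Matrix.diagonal fun j => ll j x) *ᵥ (vx x)
            = (So x) *ᵥ (u x)) (j : Fin m) :
    (∫ ξ in (0:ℝ)..x, (G21 ξ *ᵥ ut ξ + G22 ξ *ᵥ vt ξ) j)
      - ll j x * (∫ ξ in (0:ℝ)..x, (G21x ξ *ᵥ u ξ + G22x ξ *ᵥ v ξ) j)
    = (G22 x *ᵥ (diagonal (fun k => ll k x) *ᵥ v x) - G21 x *ᵥ (diagonal (fun k => lr k x) *ᵥ u x)) j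
      - (G22 0 *ᵥ (diagonal (fun k => ll k 0) *ᵥ v 0)
          - G21 0 *ᵥ (diagonal (fun k => lr k 0) *ᵥ u 0)) j := by
  have hsub : Icc (0:ℝ) x ⊆ Icc 0 1 := Icc_subset_Icc_right hx.2
  have c1 : ContinuousOn (fun ξ => (G21 ξ *ᵥ ut ξ + G22 ξ *ᵥ vt ξ) j) (Icc 0 x) :=
    (continuous_apply j).comp_continuousOn
      ((aux_mulVec_cont hG21c (hut.mono hsub)).add (aux_mulVec_cont hG22c (hvt.mono hsub)))
  have c2 : ContinuousOn (fun ξ => (G21x ξ *ᵥ u ξ + G22x ξ *ᵥ v ξ) j) (Icc 0 x) :=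
    (continuous_apply j).comp_continuousOn
      ((aux_mulVec_cont hG21xc (hu.mono hsub)).add (aux_mulVec_cont hG22xc (hv.mono hsub)))
  have i1 := c1.intervalIntegrable_of_Icc (μ := volume) hx.1
  have i2 := c2.intervalIntegrable_of_Icc (μ := volume) hx.1
  rw [← intervalIntegral.integral_const_mul, ← intervalIntegral.integral_sub i1 (i2.const_mul _)]
  have key : ∀ ξ ∈ Icc (0:ℝ) x, HasDerivWithinAt
      (fun ξ => (G22 ξ *ᵥ (diagonal (fun k => ll k ξ) *ᵥ v ξ)
          - G21 ξ *ᵥ (diagonal (fun k => lr k ξ) *ᵥ u ξ)) j)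
      ((G21 ξ *ᵥ ut ξ + G22 ξ *ᵥ vt ξ) j - ll j x * (G21x ξ *ᵥ u ξ + G22x ξ *ᵥ v ξ) j)
      (Icc 0 x) ξ := by
    intro ξ hξ
    have hξ1 := hsub hξ
    have d1 : HasDerivWithinAt (fun y => (G22 y *ᵥ (diagonal (fun k => ll k y) *ᵥ v y)) j) _
      (Icc 0 x) ξ :=
      aux_mulVec_comp_deriv (A := G22) (A' := G22xi ξ)
        (w := fun y => diagonal (fun k => ll k y) *ᵥ v y)
        (w' := diagonal (fun k => ll' k ξ) *ᵥ v ξ + diagonal (fun k => ll k ξ) *ᵥ vx ξ) j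
        (hG22d ξ hξ j) (fun k => by
          simp only [mulVec_diagonal, Pi.add_apply]
          exact ((hll' k ξ hξ1).mul (dv ξ hξ1 k)).mono hsub)
    have d2 : HasDerivWithinAt (fun y => (G21 y *ᵥ (diagonal (fun k => lr k y) *ᵥ u y)) j) _
      (Icc 0 x) ξ :=
      aux_mulVec_comp_deriv (A := G21) (A' := G21xi ξ)
        (w := fun y => diagonal (fun k => lr k y) *ᵥ u y)
        (w' := diagonal (fun k => lr' k ξ) *ᵥ u ξ + diagonal (fun k => lr k ξ) *ᵥ ux ξ) j
        (hG21d ξ hξ j) (fun k => by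
          simp only [mulVec_diagonal, Pi.add_apply]
          exact ((hlr' k ξ hξ1).mul (du ξ hξ1 k)).mono hsub)
    refine (d1.sub d2).congr_deriv ?_
    have e1 : diagonal (fun k => lr k ξ) *ᵥ ux ξ = (Sr ξ) *ᵥ (u ξ) + (Sl ξ) *ᵥ (v ξ) - ut ξ := by
      rw [← eu ξ hξ1]; abel
    have e2 : diagonal (fun k => ll k ξ) *ᵥ vx ξ = vt ξ - (So ξ) *ᵥ (u ξ) := by
      rw [← ev ξ hξ1]; abel
    have k1 := congrFun (congrArg (fun A => A *ᵥ u ξ) (hK1 ξ hξ)) j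
    have k2 := congrFun (congrArg (fun A => A *ᵥ v ξ) (hK2 ξ hξ)) j
    rw [e1, e2]
    simp only [sub_mulVec, add_mulVec, neg_mulVec, ← mulVec_mulVec, mulVec_add, mulVec_sub,
      Pi.add_apply, Pi.sub_apply, Pi.neg_apply] at k1 k2 ⊢
    have f1 : (diagonal (fun j => ll j x) *ᵥ (G21x ξ *ᵥ u ξ)) j = ll j x * (G21x ξ *ᵥ u ξ) j :=
      mulVec_diagonal _ _ _
    have f2 : (diagonal (fun j => ll j x) *ᵥ (G22x ξ *ᵥ v ξ)) j = ll j x * (G22x ξ *ᵥ v ξ) j :=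
      mulVec_diagonal _ _ _
    rw [f1] at k1
    rw [f2] at k2
    linear_combination k2 - k1
  refine (intervalIntegral.integral_eq_sub_of_hasDerivAt_of_le hx.1
    (fun ξ hξ => (key ξ hξ).continuousWithinAt)
    (fun ξ hξ => (key ξ (Ioo_subset_Icc_self hξ)).hasDerivAt (Icc_mem_nhds hξ.1 hξ.2)) ?_)
  exact i1.sub (i2.const_mul _)

theorem aux_comp_cont {X : Type*} [TopologicalSpace X] {p : ℕ} {s : Set X} {w : X → Fin p → ℝ}
    (hw : ContinuousOn w s) (i : Fin p) : ContinuousOn (fun x => w x i) s :=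
  (continuous_apply i).comp_continuousOn hw




theorem closed_loop_exponential_stability
    (n m : ℕ)
    (lr lr' : Fin n → ℝ → ℝ) (ll ll' : Fin m → ℝ → ℝ)
    (lamlo lamhi M : ℝ) (hlamlo : 0 < lamlo)
    (hlrC1 : ∀ i, ContDiffOn ℝ 1 (lr i) (Icc 0 1))
    (hllC1 : ∀ j, ContDiffOn ℝ 1 (ll j) (Icc 0 1))
    (hlr' : ∀ i, ∀ x ∈ Icc (0:ℝ) 1, HasDerivWithinAt (lr i) (lr' i x) (Icc 0 1) x)
    (hll' : ∀ j, ∀ x ∈ Icc (0:ℝ) 1, HasDerivWithinAt (ll j) (ll' j x) (Icc 0 1) x)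
    (hlrb : ∀ i, ∀ x ∈ Icc (0:ℝ) 1, lamlo ≤ lr i x ∧ lr i x ≤ lamhi)
    (hllb : ∀ j, ∀ x ∈ Icc (0:ℝ) 1, lamlo ≤ ll j x ∧ ll j x ≤ lamhi)
    (Sr : ℝ → Matrix (Fin n) (Fin n) ℝ) (Sl : ℝ → Matrix (Fin n) (Fin m) ℝ)
    (So : ℝ → Matrix (Fin m) (Fin n) ℝ)
    (hSrc : ContinuousOn Sr (Icc 0 1)) (hSlc : ContinuousOn Sl (Icc 0 1))
    (hSoc : ContinuousOn So (Icc 0 1))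
    (hSrM : ∀ x ∈ Icc (0:ℝ) 1, l2OpNorm (Sr x) ≤ M)
    (hSlM : ∀ x ∈ Icc (0:ℝ) 1, l2OpNorm (Sl x) ≤ M)
    (hSoM : ∀ x ∈ Icc (0:ℝ) 1, l2OpNorm (So x) ≤ M)
    (Q0 : Matrix (Fin n) (Fin m) ℝ) (R1 : Matrix (Fin m) (Fin n) ℝ)
    (G21 G21x G21xi : ℝ → ℝ → Matrix (Fin m) (Fin n) ℝ)
    (G22 G22x G22xi : ℝ → ℝ → Matrix (Fin m) (Fin m) ℝ)
    -- the kernels are C¹ on the triangle 𝕋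
    (hG21c : ContinuousOn (fun p : ℝ × ℝ => G21 p.1 p.2)
      {p : ℝ × ℝ | 0 ≤ p.2 ∧ p.2 ≤ p.1 ∧ p.1 ≤ 1})
    (hG22c : ContinuousOn (fun p : ℝ × ℝ => G22 p.1 p.2)
      {p : ℝ × ℝ | 0 ≤ p.2 ∧ p.2 ≤ p.1 ∧ p.1 ≤ 1})
    (hG21xc : ContinuousOn (fun p : ℝ × ℝ => G21x p.1 p.2)
      {p : ℝ × ℝ | 0 ≤ p.2 ∧ p.2 ≤ p.1 ∧ p.1 ≤ 1})
    (hG21xic : ContinuousOn (fun p : ℝ × ℝ => G21xi p.1 p.2)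
      {p : ℝ × ℝ | 0 ≤ p.2 ∧ p.2 ≤ p.1 ∧ p.1 ≤ 1})
    (hG22xc : ContinuousOn (fun p : ℝ × ℝ => G22x p.1 p.2)
      {p : ℝ × ℝ | 0 ≤ p.2 ∧ p.2 ≤ p.1 ∧ p.1 ≤ 1})
    (hG22xic : ContinuousOn (fun p : ℝ × ℝ => G22xi p.1 p.2)
      {p : ℝ × ℝ | 0 ≤ p.2 ∧ p.2 ≤ p.1 ∧ p.1 ≤ 1})
    (hG21d : ∀ x ξ : ℝ, 0 ≤ ξ → ξ ≤ x → x ≤ 1 → ∀ (i : Fin m) (j : Fin n),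
      HasDerivWithinAt (fun y => G21 y ξ i j) (G21x x ξ i j) (Icc ξ 1) x ∧
      HasDerivWithinAt (fun η => G21 x η i j) (G21xi x ξ i j) (Icc 0 x) ξ)
    (hG22d : ∀ x ξ : ℝ, 0 ≤ ξ → ξ ≤ x → x ≤ 1 → ∀ (i : Fin m) (j : Fin m),
      HasDerivWithinAt (fun y => G22 y ξ i j) (G22x x ξ i j) (Icc ξ 1) x ∧
      HasDerivWithinAt (fun η => G22 x η i j) (G22xi x ξ i j) (Icc 0 x) ξ)
    -- the kernel equations (K1), (K2)
    (hK1 : ∀ x ξ : ℝ, 0 ≤ ξ → ξ ≤ x → x ≤ 1 →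
      G21xi x ξ * Matrix.diagonal (fun i => lr i ξ)
        - Matrix.diagonal (fun j => ll j x) * G21x x ξ
      = -(G21 x ξ * Matrix.diagonal fun i => lr' i ξ)
        - G21 x ξ * Sr ξ - G22 x ξ * So ξ)
    (hK2 : ∀ x ξ : ℝ, 0 ≤ ξ → ξ ≤ x → x ≤ 1 →
      G22xi x ξ * Matrix.diagonal (fun j => ll j ξ)
        + Matrix.diagonal (fun j => ll j x) * G22x x ξ
      = -(G22 x ξ * Matrix.diagonal fun j => ll' j ξ) + G21 x ξ * Sl ξ)
    -- the boundary conditions (B1), (B2)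
    (hB1 : ∀ x ∈ Icc (0:ℝ) 1,
      G21 x x * Matrix.diagonal (fun i => lr i x)
        + Matrix.diagonal (fun j => ll j x) * G21 x x = -(So x))
    (hB2 : ∀ x ∈ Icc (0:ℝ) 1,
      Matrix.diagonal (fun j => ll j x) * G22 x x
        = G22 x x * Matrix.diagonal (fun j => ll j x))
    -- Δ(x) := G₂₂(x,0)Λˡ(0) − G₂₁(x,0)Λʳ(0)Q₀ is strictly lower triangular
    (hΔtri : ∀ x ∈ Icc (0:ℝ) 1, ∀ i j : Fin m, i ≤ j →
      (G22 x 0 * Matrix.diagonal (fun j' => ll j' 0)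
        - G21 x 0 * Matrix.diagonal (fun i' => lr i' 0) * Q0) i j = 0)
    -- the kernels Cʳ, Cˡ and their defining Volterra relations
    (Cr : ℝ → ℝ → Matrix (Fin n) (Fin n) ℝ) (Cl : ℝ → ℝ → Matrix (Fin n) (Fin m) ℝ)
    (hCrc : ContinuousOn (fun p : ℝ × ℝ => Cr p.1 p.2)
      {p : ℝ × ℝ | 0 ≤ p.2 ∧ p.2 ≤ p.1 ∧ p.1 ≤ 1})
    (hClc : ContinuousOn (fun p : ℝ × ℝ => Cl p.1 p.2)
      {p : ℝ × ℝ | 0 ≤ p.2 ∧ p.2 ≤ p.1 ∧ p.1 ≤ 1})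
    (hCrrel : ∀ x ξ : ℝ, 0 ≤ ξ → ξ ≤ x → x ≤ 1 →
      Cr x ξ = Sl x * G21 x ξ
        + Matrix.of (fun i j => ∫ η in ξ..x, (Cl x η * G21 η ξ) i j))
    (hClrel : ∀ x ξ : ℝ, 0 ≤ ξ → ξ ≤ x → x ≤ 1 →
      Cl x ξ = Sl x * G22 x ξ
        + Matrix.of (fun i j => ∫ η in ξ..x, (Cl x η * G22 η ξ) i j)) :
    ∃ K c : ℝ, 1 ≤ K ∧ 0 < c ∧
      ∀ (u ut ux : ℝ → ℝ → Fin n → ℝ) (v vt vx : ℝ → ℝ → Fin m → ℝ)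
        (𝔘 : ℝ → Fin m → ℝ),
        ContinuousOn (fun p : ℝ × ℝ => u p.1 p.2) (Ici 0 ×ˢ Icc 0 1) →
        ContinuousOn (fun p : ℝ × ℝ => v p.1 p.2) (Ici 0 ×ˢ Icc 0 1) →
        ContinuousOn (fun p : ℝ × ℝ => ut p.1 p.2) (Ici 0 ×ˢ Icc 0 1) →
        ContinuousOn (fun p : ℝ × ℝ => ux p.1 p.2) (Ici 0 ×ˢ Icc 0 1) →
        ContinuousOn (fun p : ℝ × ℝ => vt p.1 p.2) (Ici 0 ×ˢ Icc 0 1) →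
        ContinuousOn (fun p : ℝ × ℝ => vx p.1 p.2) (Ici 0 ×ˢ Icc 0 1) →
        (∀ t ∈ Ici (0:ℝ), ∀ x ∈ Icc (0:ℝ) 1,
          HasDerivWithinAt (fun s => u s x) (ut t x) (Ici 0) t ∧
          HasDerivWithinAt (fun y => u t y) (ux t x) (Icc 0 1) x ∧
          HasDerivWithinAt (fun s => v s x) (vt t x) (Ici 0) t ∧
          HasDerivWithinAt (fun y => v t y) (vx t x) (Icc 0 1) x) →
        -- the plant equations
        (∀ t ∈ Ici (0:ℝ), ∀ x ∈ Icc (0:ℝ) 1,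
          ut t x + (Matrix.diagonal fun i => lr i x).mulVec (ux t x)
            = (Sr x).mulVec (u t x) + (Sl x).mulVec (v t x)) →
        (∀ t ∈ Ici (0:ℝ), ∀ x ∈ Icc (0:ℝ) 1,
          vt t x - (Matrix.diagonal fun j => ll j x).mulVec (vx t x)
            = (So x).mulVec (u t x)) →
        -- boundary conditions with the backstepping feedback control
        (∀ t ∈ Ici (0:ℝ), u t 0 = Q0.mulVec (v t 0)) →
        (∀ t ∈ Ici (0:ℝ),
          𝔘 t = -(R1.mulVec (u t 1))
            + ∫ ξ in (0:ℝ)..1, ((G21 1 ξ).mulVec (u t ξ) + (G22 1 ξ).mulVec (v t ξ))) →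
        (∀ t ∈ Ici (0:ℝ), v t 1 = R1.mulVec (u t 1) + 𝔘 t) →
        ∀ t ∈ Ici (0:ℝ),
          Real.sqrt (∫ x in (0:ℝ)..1,
              ((∑ i, (u t x i) ^ 2) + ∑ j, (v t x j) ^ 2))
            ≤ K * Real.exp (-c * t) *
              Real.sqrt (∫ x in (0:ℝ)..1,
                ((∑ i, (u 0 x i) ^ 2) + ∑ j, (v 0 x j) ^ 2)) := by
  obtain ⟨T, hT⟩ : ∃ T : Set (ℝ × ℝ), T = Tri := ⟨_, rfl⟩
  have hTc : IsCompact Tri := by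
    have hcl : IsClosed Tri := by
      refine (isClosed_le continuous_const continuous_snd).inter
        ((isClosed_le continuous_snd continuous_fst).inter
          (isClosed_le continuous_fst continuous_const))
    refine (isCompact_Icc (a := ((0:ℝ),(0:ℝ))) (b := ((1:ℝ),(1:ℝ)))).of_isClosed_subset hcl ?_
    rintro ⟨a, b⟩ ⟨h1, h2, h3⟩
    simp only at h1 h2 h3
    exact ⟨⟨h1.trans h2, h1⟩, ⟨h3, h2.trans h3⟩⟩
  set Δ : ℝ → Matrix (Fin m) (Fin m) ℝ := fun x =>
    G22 x 0 * Matrix.diagonal (fun j' => ll j' 0)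
        - G21 x 0 * Matrix.diagonal (fun i' => lr i' 0) * Q0 with hΔ
  have hz : ∀ {q : ℕ} (G : ℝ → ℝ → Matrix (Fin m) (Fin q) ℝ),
      ContinuousOn (fun p : ℝ × ℝ => G p.1 p.2) Tri → ContinuousOn (fun x => G x 0) (Icc 0 1) :=
    fun G hG => hG.comp (f := fun x => (x, (0:ℝ))) (by fun_prop)
      (fun x hx => ⟨le_rfl, hx.1, hx.2⟩)
  have hslice : ∀ {q : ℕ} (G : ℝ → ℝ → Matrix (Fin m) (Fin q) ℝ),
      ContinuousOn (fun p : ℝ × ℝ => G p.1 p.2) Tri → ∀ x ∈ Icc (0:ℝ) 1,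
        ContinuousOn (fun ξ => G x ξ) (Icc 0 x) :=
    fun G hG x hx => hG.comp (f := fun ξ => (x, ξ)) (by fun_prop)
      (fun ξ hξ => ⟨hξ.1, hξ.2, hx.2⟩)
  have hdiag : ∀ {q : ℕ} (G : ℝ → ℝ → Matrix (Fin m) (Fin q) ℝ),
      ContinuousOn (fun p : ℝ × ℝ => G p.1 p.2) Tri → ContinuousOn (fun x => G x x) (Icc 0 1) :=
    fun G hG => hG.comp (f := fun x => (x, x)) (by fun_prop)
      (fun x hx => ⟨hx.1, le_rfl, hx.2⟩)
  have hΔc : ContinuousOn Δ (Icc 0 1) := by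
    refine ContinuousOn.sub ?_ ?_
    · exact (continuous_id.matrix_mul continuous_const).comp_continuousOn (hz G22 hG22c)
    · exact ((continuous_id.matrix_mul continuous_const).matrix_mul
        continuous_const).comp_continuousOn (hz G21 hG21c)
  obtain ⟨B1, hB10, bSr⟩ := aux_mat_bound isCompact_Icc Sr hSrc
  obtain ⟨B2, hB20, bSl⟩ := aux_mat_bound isCompact_Icc Sl hSlc
  obtain ⟨B3, hB30, bG21⟩ := aux_mat_bound hTc _ hG21c
  obtain ⟨B4, hB40, bG22⟩ := aux_mat_bound hTc _ hG22c
  obtain ⟨B5, hB50, bΔ⟩ := aux_mat_bound isCompact_Icc Δ hΔc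
  obtain ⟨B6, hB60, bQ⟩ := aux_mat_bound (isCompact_Icc (a := (0:ℝ)) (b := 1))
    (fun _ : ℝ => Q0) continuousOn_const
  obtain ⟨B, hBdef⟩ : ∃ B, B = B1 + B2 + B3 + B4 + B5 + B6 := ⟨_, rfl⟩
  obtain ⟨C, hCdef⟩ : ∃ C : ℝ, C = 2 * ((n:ℝ) + m + 1) ^ 2 * B ^ 2 + 1 := ⟨_, rfl⟩
  have hn0 : (0:ℝ) ≤ n := Nat.cast_nonneg _
  have hm0 : (0:ℝ) ≤ m := Nat.cast_nonneg _
  have hC0 : 0 < C := by rw [hCdef]; positivity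
  have hCle : ∀ a : ℝ, a ≤ 2 * ((n:ℝ) + m + 1) ^ 2 → a * B ^ 2 ≤ C := fun a ha => by
    rw [hCdef]
    have := mul_le_mul_of_nonneg_right ha (sq_nonneg B)
    linarith
  obtain ⟨K, c, hK, hc, main⟩ := core_stability n m lamlo (max lamhi 1) C hlamlo
    (lt_max_of_lt_right one_pos) hC0 lr ll (fun i => (hlrC1 i).continuousOn)
    (fun i => (hllC1 i).continuousOn)
    (fun i x hx => ⟨(hlrb i x hx).1, (hlrb i x hx).2.trans (le_max_left _ _)⟩)
    (fun i x hx => ⟨(hllb i x hx).1, (hllb i x hx).2.trans (le_max_left _ _)⟩)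
  refine ⟨K, c, hK, hc, ?_⟩
  intro u ut ux v vt vx 𝔘 cu cv cut cux cvt cvx hd eu ev hbc0 hU hbc1
  have sl : ∀ {q : ℕ} {f : ℝ → ℝ → Fin q → ℝ},
      ContinuousOn (fun p : ℝ × ℝ => f p.1 p.2) (Ici 0 ×ˢ Icc 0 1) →
      ∀ t, 0 ≤ t → ContinuousOn (f t) (Icc 0 1) := fun hf t ht =>
    hf.comp (f := fun x => (t, x)) (by fun_prop) (fun x hx => ⟨ht, hx⟩)
  -- joint continuity of the kernel integrands
  have hj : ∀ {q : ℕ} (G : ℝ → ℝ → Matrix (Fin m) (Fin q) ℝ) (f : ℝ → ℝ → Fin q → ℝ),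
      ContinuousOn (fun p : ℝ × ℝ => G p.1 p.2) Tri →
      ContinuousOn (fun p : ℝ × ℝ => f p.1 p.2) (Ici 0 ×ˢ Icc 0 1) →
      ContinuousOn (fun p : ℝ × (ℝ × ℝ) => G p.2.1 p.2.2 *ᵥ f p.1 p.2.2) (Ici 0 ×ˢ Tri) := by
    intro q G f hG hf
    refine aux_mulVec_cont ?_ ?_
    · exact hG.comp (f := fun p : ℝ × (ℝ × ℝ) => p.2) (by fun_prop) (fun p hp => hp.2)
    · refine hf.comp (f := fun p : ℝ × (ℝ × ℝ) => (p.1, p.2.2)) (by fun_prop) (fun p hp => ?_)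
      exact ⟨hp.1, hp.2.1, hp.2.2.1.trans hp.2.2.2⟩
  have hj2 : ∀ (j : Fin m) (G : ℝ → ℝ → Matrix (Fin m) (Fin n) ℝ)
      (G' : ℝ → ℝ → Matrix (Fin m) (Fin m) ℝ) (f : ℝ → ℝ → Fin n → ℝ) (g : ℝ → ℝ → Fin m → ℝ),
      ContinuousOn (fun p : ℝ × ℝ => G p.1 p.2) Tri →
      ContinuousOn (fun p : ℝ × ℝ => G' p.1 p.2) Tri →
      ContinuousOn (fun p : ℝ × ℝ => f p.1 p.2) (Ici 0 ×ˢ Icc 0 1) →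
      ContinuousOn (fun p : ℝ × ℝ => g p.1 p.2) (Ici 0 ×ˢ Icc 0 1) →
      ContinuousOn (fun p : ℝ × (ℝ × ℝ) =>
        (G p.2.1 p.2.2 *ᵥ f p.1 p.2.2 + G' p.2.1 p.2.2 *ᵥ g p.1 p.2.2) j) (Ici 0 ×ˢ Tri) :=
    fun j G G' f g h1 h2 h3 h4 => aux_comp_cont ((hj G f h1 h3).add (hj G' g h2 h4)) j
  have hjs : ∀ (k : ℝ → ℝ → ℝ → ℝ),
      ContinuousOn (fun p : ℝ × (ℝ × ℝ) => k p.1 p.2.1 p.2.2) (Ici 0 ×ˢ Tri) →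
      ∀ t, 0 ≤ t → ∀ x ∈ Icc (0:ℝ) 1, ContinuousOn (fun ξ => k t x ξ) (Icc 0 x) :=
    fun k hk t ht x hx => hk.comp (f := fun ξ => (t, x, ξ)) (by fun_prop)
      (fun ξ hξ => ⟨ht, hξ.1, hξ.2, hx.2⟩)
  have hjt : ∀ (k : ℝ → ℝ → ℝ → ℝ),
      ContinuousOn (fun p : ℝ × (ℝ × ℝ) => k p.1 p.2.1 p.2.2) (Ici 0 ×ˢ Tri) →
      ∀ t, 0 ≤ t → ContinuousOn (fun p : ℝ × ℝ => k t p.1 p.2) Tri :=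
    fun k hk t ht => hk.comp (f := fun p : ℝ × ℝ => (t, p)) (by fun_prop)
      (fun ξ hξ => ⟨ht, hξ⟩)
  obtain ⟨h, hh⟩ : ∃ h : Fin m → ℝ → ℝ → ℝ → ℝ, h = fun j t x ξ =>
    (G21 x ξ *ᵥ u t ξ + G22 x ξ *ᵥ v t ξ) j := ⟨_, rfl⟩
  obtain ⟨ht', hht⟩ : ∃ h : Fin m → ℝ → ℝ → ℝ → ℝ, h = fun j t x ξ =>
    (G21 x ξ *ᵥ ut t ξ + G22 x ξ *ᵥ vt t ξ) j := ⟨_, rfl⟩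
  obtain ⟨hx', hhx⟩ : ∃ h : Fin m → ℝ → ℝ → ℝ → ℝ, h = fun j t x ξ =>
    (G21x x ξ *ᵥ u t ξ + G22x x ξ *ᵥ v t ξ) j := ⟨_, rfl⟩
  have ch : ∀ j, ContinuousOn (fun p : ℝ × (ℝ × ℝ) => h j p.1 p.2.1 p.2.2) (Ici 0 ×ˢ Tri) := by
    intro j; rw [hh]; exact hj2 j G21 G22 u v hG21c hG22c cu cv
  have cht : ∀ j, ContinuousOn (fun p : ℝ × (ℝ × ℝ) => ht' j p.1 p.2.1 p.2.2) (Ici 0 ×ˢ Tri) := by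
    intro j; rw [hht]; exact hj2 j G21 G22 ut vt hG21c hG22c cut cvt
  have chx : ∀ j, ContinuousOn (fun p : ℝ × (ℝ × ℝ) => hx' j p.1 p.2.1 p.2.2) (Ici 0 ×ˢ Tri) := by
    intro j; rw [hhx]; exact hj2 j G21x G22x u v hG21xc hG22xc cu cv
  have dT : ∀ t, 0 < t → ∀ x ∈ Icc (0:ℝ) 1,
      (∀ i, HasDerivAt (fun s => u s x i) (ut t x i) t) ∧
      (∀ j, HasDerivAt (fun s => v s x j) (vt t x j) t) := by
    intro t ht x hx
    obtain ⟨h1, -, h2, -⟩ := hd t ht.le x hx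
    exact ⟨hasDerivAt_pi.1 (h1.hasDerivAt (Ici_mem_nhds ht)),
      hasDerivAt_pi.1 (h2.hasDerivAt (Ici_mem_nhds ht))⟩
  have dX : ∀ t, 0 ≤ t → ∀ x ∈ Icc (0:ℝ) 1,
      (∀ i, HasDerivWithinAt (fun y => u t y i) (ux t x i) (Icc 0 1) x) ∧
      (∀ j, HasDerivWithinAt (fun y => v t y j) (vx t x j) (Icc 0 1) x) := by
    intro t ht x hx
    obtain ⟨-, h1, -, h2⟩ := hd t ht x hx
    exact ⟨hasDerivWithinAt_pi.1 h1, hasDerivWithinAt_pi.1 h2⟩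
  refine main (fun i t x => u t x i) (fun i t x => ut t x i) (fun i t x => ux t x i)
    (fun i t x => (Sr x *ᵥ u t x + Sl x *ᵥ v t x) i) (fun j t x => v t x j)
    (fun j t x => v t x j - ∫ ξ in (0:ℝ)..x, h j t x ξ)
    (fun j t x => vt t x j - ∫ ξ in (0:ℝ)..x, ht' j t x ξ)
    (fun j t x => vx t x j - (h j t x x + ∫ ξ in (0:ℝ)..x, hx' j t x ξ))
    (fun j t x => (Δ x *ᵥ v t 0) j)
    (fun i => aux_comp_cont cu i) (fun i => aux_comp_cont cut i) (fun i => aux_comp_cont cv i)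
    (fun i => (aux_comp_cont cv i).sub (aux_tri_cont (h i) (ch i)))
    (fun i => (aux_comp_cont cvt i).sub (aux_tri_cont (ht' i) (cht i)))
    (fun t ht i => aux_comp_cont (sl cux t ht.le) i) ?_ ?_ ?_
    (fun t ht i x hx => (dT t ht x hx).1 i) ?_
    (fun t ht i x hx => ((dX t ht.le x (Ioo_subset_Icc_self hx)).1 i).hasDerivAt
      (Icc_mem_nhds hx.1 hx.2)) ?_ ?_ ?_ ?_ ?_ ?_ ?_ ?_ ?_
  · intro t ht i
    exact aux_comp_cont ((aux_mulVec_cont hSrc (sl cu t ht.le)).add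
      (aux_mulVec_cont hSlc (sl cv t ht.le))) i
  · intro t ht i
    refine (aux_comp_cont (sl cvx t ht.le) i).sub (ContinuousOn.add ?_ ?_)
    · exact (ch i).comp (f := fun x => (t, x, x)) (by fun_prop)
        (fun x hx => ⟨ht.le, hx.1, le_rfl, hx.2⟩)
    · exact (aux_tri_cont (hx' i) (chx i)).comp (f := fun x => (t, x)) (by fun_prop)
        (fun x hx => ⟨ht.le, hx⟩)
  · intro t ht i
    exact aux_comp_cont (aux_mulVec_cont hΔc continuousOn_const) i
  · -- time derivative of the backstepping variable
    intro t ht i x hx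
    refine ((dT t ht x hx).2 i).sub ?_
    have hs0 : Icc (t/2) (t+1) ⊆ Ici (0:ℝ) := fun r hr => by
      have := hr.1; simp only [mem_Ici]; linarith
    refine aux_paramDeriv (fun r ξ => h i r x ξ) (fun r ξ => ht' i r x ξ) 0 x t (Icc (t/2) (t+1))
      (Icc_mem_nhds (by linarith) (by linarith)) isCompact_Icc hx.1
      (fun r hr => hjs _ (ch i) r (hs0 hr) x hx) ?_ ?_
    · exact (cht i).comp (f := fun p : ℝ × ℝ => (p.1, x, p.2)) (by fun_prop)
        (fun p hp => ⟨hs0 hp.1, hp.2.1, hp.2.2, hx.2⟩)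
    · intro r hr ξ hξ
      have hr0 : 0 < r := by have := hr.1; linarith
      obtain ⟨a1, a2⟩ := dT r hr0 ξ ⟨hξ.1, hξ.2.trans hx.2⟩
      rw [hh, hht]
      simp only [Pi.add_apply, mulVec, dotProduct]
      exact (HasDerivAt.fun_sum fun k _ => (a1 k).const_mul _).add
        (HasDerivAt.fun_sum fun k _ => (a2 k).const_mul _)
  · -- space derivative of the backstepping variable
    intro t ht i x hx
    refine (((dX t ht.le x (Ioo_subset_Icc_self hx)).2 i).hasDerivAt
      (Icc_mem_nhds hx.1 hx.2)).sub ?_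
    refine aux_leib_tri (h i t) (hx' i t) (hjt _ (ch i) t ht.le) (hjt _ (chx i) t ht.le) ?_ x hx
    intro y ξ h1 h2 h3
    rw [hh, hhx]
    simp only [Pi.add_apply, mulVec, dotProduct]
    exact (HasDerivWithinAt.fun_sum fun k _ => (hG21d y ξ h1 h2 h3 i k).1.mul_const _).add
      (HasDerivWithinAt.fun_sum fun k _ => (hG22d y ξ h1 h2 h3 i k).1.mul_const _)
  · intro t ht i x hx
    have := congrFun (eu t ht.le x hx) i
    simp only [Pi.add_apply, mulVec_diagonal] at this ⊢
    linarith
  · -- the target equation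
    intro t ht j x hx
    have key := aux_kernel_identity lr lr' ll ll' hlr' hll' Sr Sl So x hx (G21 x) (G21x x) (G21xi x)
      (G22 x) (G22x x) (G22xi x) (hslice G21 hG21c x hx) (hslice G22 hG22c x hx)
      (hslice G21x hG21xc x hx) (hslice G22x hG22xc x hx)
      (fun ξ hξ i j => (hG21d x ξ hξ.1 hξ.2 hx.2 i j).2)
      (fun ξ hξ i j => (hG22d x ξ hξ.1 hξ.2 hx.2 i j).2)
      (fun ξ hξ => hK1 x ξ hξ.1 hξ.2 hx.2) (fun ξ hξ => hK2 x ξ hξ.1 hξ.2 hx.2)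
      (u t) (ut t) (ux t) (v t) (vt t) (vx t) (sl cu t ht.le) (sl cut t ht.le) (sl cv t ht.le)
      (sl cvt t ht.le) (fun ξ hξ => (dX t ht.le ξ hξ).1) (fun ξ hξ => (dX t ht.le ξ hξ).2)
      (eu t ht.le) (ev t ht.le) j
    have e1 := congrFun (ev t ht.le x hx) j
    have b1 := congrFun (congrArg (fun A => A *ᵥ u t x) (hB1 x hx)) j
    have b2 := congrFun (congrArg (fun A => A *ᵥ v t x) (hB2 x hx)) j
    rw [hbc0 t ht.le] at key
    rw [hh, hht, hhx, hΔ]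
    simp only [sub_mulVec, add_mulVec, neg_mulVec, ← mulVec_mulVec,
      Pi.add_apply, Pi.sub_apply, Pi.neg_apply] at key e1 b1 b2 ⊢
    have g1 : (diagonal (fun j => ll j x) *ᵥ vx t x) j = ll j x * vx t x j :=
      mulVec_diagonal _ _ _
    have g2 : (diagonal (fun j => ll j x) *ᵥ (G21 x x *ᵥ u t x)) j
      = ll j x * (G21 x x *ᵥ u t x) j := mulVec_diagonal _ _ _
    have g3 : (diagonal (fun j => ll j x) *ᵥ (G22 x x *ᵥ v t x)) j
      = ll j x * (G22 x x *ᵥ v t x) j := mulVec_diagonal _ _ _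
    rw [g1] at e1
    rw [g2] at b1
    rw [g3] at b2
    linear_combination e1 - key + b1 + b2
  · intro t ht x hx
    have hpos : 0 ≤ ∑ i, u t x i ^ 2 + ∑ j, v t x j ^ 2 := by positivity
    calc ∑ i, ((Sr x *ᵥ u t x + Sl x *ᵥ v t x) i) ^ 2
        ≤ ∑ _i : Fin n, 2 * ((n:ℝ) + m) * B ^ 2 * (∑ i, u t x i ^ 2 + ∑ j, v t x j ^ 2) :=
          Finset.sum_le_sum fun i _ => aux_mulVec_sq _ _ _ _ B
            (fun i j => (bSr x hx i j).trans (by linarith))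
            (fun i j => (bSl x hx i j).trans (by linarith)) i
      _ = (n * (2 * ((n:ℝ) + m))) * B ^ 2 * (∑ i, u t x i ^ 2 + ∑ j, v t x j ^ 2) := by
          simp only [Finset.sum_const, Finset.card_univ, Fintype.card_fin, nsmul_eq_mul]; ring
      _ ≤ _ := mul_le_mul_of_nonneg_right (hCle _ (by nlinarith [mul_nonneg hn0 hm0])) hpos
  · intro t ht j x hx
    have e : (Δ x *ᵥ v t 0) j = ∑ k, Δ x j k * (if k < j then v t 0 k else 0) := by
      simp only [mulVec, dotProduct]
      refine Finset.sum_congr rfl fun k _ => ?_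
      split_ifs with hk
      · rfl
      · rw [show Δ x j k = 0 from hΔtri x hx j k (not_lt.1 hk)]; simp
    have h1 := aux_lin_sq (Δ x j) (fun k => if k < j then v t 0 k else 0) B
      (fun k => (bΔ x hx j k).trans (by linarith))
    have e2 : ∑ k, (if k < j then v t 0 k else 0) ^ 2 = ∑ k, if k < j then v t 0 k ^ 2 else 0 :=
      Finset.sum_congr rfl fun k _ => by split_ifs <;> simp
    simp only [e2] at h1
    simp only [e]
    refine h1.trans (mul_le_mul_of_nonneg_right (hCle _ (by nlinarith [mul_nonneg hn0 hm0])) ?_)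
    exact Finset.sum_nonneg fun k _ => by split_ifs <;> positivity
  · intro t ht
    have hpos : 0 ≤ ∑ j, v t 0 j ^ 2 := by positivity
    simp only [hbc0 t ht.le]
    calc ∑ i, ((Q0 *ᵥ v t 0) i) ^ 2 ≤ ∑ _i : Fin n, (m:ℝ) * B ^ 2 * ∑ j, v t 0 j ^ 2 :=
          Finset.sum_le_sum fun i _ => aux_lin_sq (Q0 i) (v t 0) B
            (fun j => (bQ 0 ⟨le_rfl, zero_le_one⟩ i j).trans (by linarith))
      _ = ((n:ℝ) * m) * B ^ 2 * ∑ j, v t 0 j ^ 2 := by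
          simp only [Finset.sum_const, Finset.card_univ, Fintype.card_fin, nsmul_eq_mul]; ring
      _ ≤ _ := mul_le_mul_of_nonneg_right (hCle _ (by nlinarith [mul_nonneg hn0 hm0])) hpos
  · intro t ht j
    simp
  · -- the controlled boundary
    intro t ht j
    have h1 : (1:ℝ) ∈ Icc (0:ℝ) 1 := ⟨zero_le_one, le_rfl⟩
    have hci : ContinuousOn (fun ξ => (G21 1 ξ) *ᵥ (u t ξ) + (G22 1 ξ) *ᵥ (v t ξ)) (Icc 0 1) :=
      (aux_mulVec_cont (hslice G21 hG21c 1 h1) (sl cu t ht.le)).add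
        (aux_mulVec_cont (hslice G22 hG22c 1 h1) (sl cv t ht.le))
    have hint := hci.intervalIntegrable_of_Icc (μ := volume) zero_le_one
    have e := (ContinuousLinearMap.proj (R := ℝ) (φ := fun _ : Fin m => ℝ) j).intervalIntegral_comp_comm
      hint
    simp only [ContinuousLinearMap.proj_apply] at e
    have e2 := congrFun (hbc1 t ht.le) j
    rw [hU t ht.le] at e2
    simp only [Pi.add_apply, Pi.neg_apply] at e2
    rw [hh]
    simp only [Pi.add_apply] at e ⊢
    linarith
  · intro t ht x hx
    have hsub : Icc (0:ℝ) x ⊆ Icc 0 1 := Icc_subset_Icc_right hx.2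
    have hw : ContinuousOn (fun ξ => ∑ i, u t ξ i ^ 2 + ∑ j, v t ξ j ^ 2) (Icc 0 x) := by
      refine ContinuousOn.mono (ContinuousOn.add ?_ ?_) hsub
      · exact continuousOn_finsetSum _ fun i _ => (aux_comp_cont (sl cu t ht) i).pow 2
      · exact continuousOn_finsetSum _ fun i _ => (aux_comp_cont (sl cv t ht) i).pow 2
    have hpos : 0 ≤ ∫ ξ in (0:ℝ)..x, (∑ i, u t ξ i ^ 2 + ∑ j, v t ξ j ^ 2) :=
      intervalIntegral.integral_nonneg hx.1 fun ξ _ => by positivity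
    have one : ∀ j : Fin m, (v t x j - (v t x j - ∫ ξ in (0:ℝ)..x, h j t x ξ)) ^ 2 ≤
        2 * ((n:ℝ) + m) * B ^ 2 * ∫ ξ in (0:ℝ)..x, (∑ i, u t ξ i ^ 2 + ∑ j, v t ξ j ^ 2) := by
      intro j
      rw [sub_sub_cancel, ← intervalIntegral.integral_const_mul]
      have hcj := hjs _ (ch j) t ht x hx
      refine (aux_CS _ x hx hcj).trans ?_
      refine intervalIntegral.integral_mono_on hx.1
        ((hcj.pow 2).intervalIntegrable_of_Icc hx.1)
        ((hw.intervalIntegrable_of_Icc hx.1).const_mul _) ?_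
      intro ξ hξ
      rw [hh]
      exact aux_mulVec_sq _ _ _ _ B
        (fun i j => (bG21 (x, ξ) ⟨hξ.1, hξ.2, hx.2⟩ i j).trans (by linarith))
        (fun i j => (bG22 (x, ξ) ⟨hξ.1, hξ.2, hx.2⟩ i j).trans (by linarith)) j
    refine (Finset.sum_le_sum fun j _ => one j).trans ?_
    simp only [Finset.sum_const, Finset.card_univ, Fintype.card_fin, nsmul_eq_mul]
    have := mul_le_mul_of_nonneg_right
      (hCle (m * (2 * ((n:ℝ) + m))) (by nlinarith [mul_nonneg hn0 hm0])) hpos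
    linarith
end
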